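/- Let α ∈ (0, 2s) and M ≥ 0. There exist δ > 0 and r ∈ (0,1), depending only on s, n, α and M, such that the following holds: if b : [−1,0] × B_1^0 → ℝ^n satisfies sup_{t∈[−1,0]} ‖b(t,·)‖_{C^{1−2s}(B_1^0)} ≤ M and sup |b| ≤ δ, if f : [−1,0] × B_1^0 → ℝ satisfies sup |f| ≤ δ, and if u is a classical solution of the extended drift–diffusion equation with drift b and right-hand side f satisfying sup_{[−1,0]×B_1^+} |u| ≤ 1, then there exist a vector A ∈ ℝ^n and a differentiable function D : [−r^{2s},0] → ℝ, with |A|, sup |D| and sup |D'| bounded by a constant depending only on s, n and M, such that sup over (t,x,y) ∈ [−r^{2s},0] × (B_r^+ ∪ B_r^0) of |u(t,x,y) − A·x − D(t) − (D'(t)/(1−a)) y^{1−a}| is at most r^{1+α}. -/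

import Mathlib

open Set Filter Topology MeasureTheory
open scoped RealInnerProductSpace

noncomputable section

abbrev En (n : ℕ) := EuclideanSpace ℝ (Fin n)

/-- The open upper half ball `B_r^+`. -/
def halfBall (n : ℕ) (r : ℝ) : Set (En n × ℝ) :=
  {p | ‖p.1‖ ^ 2 + p.2 ^ 2 < r ^ 2 ∧ 0 < p.2}

/-- The closure of the upper half ball. -/
def closedHalfBall (n : ℕ) (r : ℝ) : Set (En n × ℝ) :=
  {p | ‖p.1‖ ^ 2 + p.2 ^ 2 ≤ r ^ 2 ∧ 0 ≤ p.2}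

/-- `B_r^+ ∪ B_r^0`. -/
def halfBallWithBase (n : ℕ) (r : ℝ) : Set (En n × ℝ) :=
  {p | ‖p.1‖ ^ 2 + p.2 ^ 2 < r ^ 2 ∧ 0 ≤ p.2}

/-- The flat ball `B_r^0` in `ℝⁿ`. -/
def flatBall (n : ℕ) (r : ℝ) : Set (En n) := {x | ‖x‖ < r}

/-- `(∂B_1)^+`. -/
def spherePlus (n : ℕ) : Set (En n × ℝ) := {p | ‖p.1‖ ^ 2 + p.2 ^ 2 = 1 ∧ 0 < p.2}

/-- closure of `(∂B_1)^+`. -/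
def closedSpherePlus (n : ℕ) : Set (En n × ℝ) := {p | ‖p.1‖ ^ 2 + p.2 ^ 2 = 1 ∧ 0 ≤ p.2}

/-- Second directional derivative of `u` at `p` in direction `v`. -/
def D2 {n : ℕ} (u : En n × ℝ → ℝ) (p v : En n × ℝ) : ℝ :=
  fderiv ℝ (fun q => fderiv ℝ u q v) p v

/-- The Laplacian in the `n+1` variables `(x, y)`. -/
def lap {n : ℕ} (u : En n × ℝ → ℝ) (p : En n × ℝ) : ℝ :=
  (∑ i : Fin n, D2 u p (EuclideanSpace.single i 1, 0)) + D2 u p (0, 1)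

/-- `u` is `a`-harmonic on `Ω`: it is `C²` there and `Δu + (a/y) ∂_y u = 0`. -/
def IsAHarmonicOn {n : ℕ} (a : ℝ) (u : En n × ℝ → ℝ) (Ω : Set (En n × ℝ)) : Prop :=
  ContDiffOn ℝ 2 u Ω ∧ ∀ p ∈ Ω, lap u p + (a / p.2) * fderiv ℝ u p (0, 1) = 0

/-- `lim_{y → 0⁺} y^a ∂_y w(x, y) = L`. -/
def NormalDerivLimit {n : ℕ} (a : ℝ) (w : En n × ℝ → ℝ) (x : En n) (L : ℝ) : Prop :=
  Tendsto (fun y : ℝ => y ^ a * fderiv ℝ w (x, y) (0, 1)) (𝓝[>] (0 : ℝ)) (𝓝 L)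

/-- The boundary-restriction `(t, x) ↦ u(t, x, 0)`. -/
def bdryFun {n : ℕ} (u : ℝ → En n × ℝ → ℝ) : ℝ × En n → ℝ := fun q => u q.1 (q.2, 0)

/-- A classical solution of the extended drift–diffusion equation on
`[-1,0] × closure (B_1^+)` with drift `b` and right-hand side `f`. -/
def IsExtDDSolution {n : ℕ} (a : ℝ) (b : ℝ → En n → En n) (f : ℝ → En n → ℝ)
    (u : ℝ → En n × ℝ → ℝ) : Prop :=
  ContinuousOn (fun q : ℝ × (En n × ℝ) => u q.1 q.2) (Icc (-1 : ℝ) 0 ×ˢ closedHalfBall n 1) ∧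
  (∀ t ∈ Icc (-1 : ℝ) 0, IsAHarmonicOn a (u t) (halfBall n 1)) ∧
  (∀ q ∈ Ioc (-1 : ℝ) 0 ×ˢ flatBall n 1,
      DifferentiableWithinAt ℝ (bdryFun u) (Ioc (-1 : ℝ) 0 ×ˢ flatBall n 1) q) ∧
  (∀ t x, (t, x) ∈ Ioc (-1 : ℝ) 0 ×ˢ flatBall n 1 →
      ∃ L : ℝ, NormalDerivLimit a (u t) x L ∧
        fderivWithin ℝ (bdryFun u) (Ioc (-1 : ℝ) 0 ×ˢ flatBall n 1) (t, x) (1, 0) +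
          fderivWithin ℝ (bdryFun u) (Ioc (-1 : ℝ) 0 ×ˢ flatBall n 1) (t, x) (0, b t x) -
          L = f t x)

/-- A classical solution of the localized fractional heat equation on
`[-1,0] × closure (B_1^+)`. -/
def IsFracHeatSolution {n : ℕ} (a : ℝ) (u : ℝ → En n × ℝ → ℝ) : Prop :=
  ContinuousOn (fun q : ℝ × (En n × ℝ) => u q.1 q.2) (Icc (-1 : ℝ) 0 ×ˢ closedHalfBall n 1) ∧
  (∀ t ∈ Icc (-1 : ℝ) 0, IsAHarmonicOn a (u t) (halfBall n 1)) ∧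
  (∀ t ∈ Ioc (-1 : ℝ) 0, ∀ x ∈ flatBall n 1,
      DifferentiableWithinAt ℝ (fun τ => u τ (x, 0)) (Ioc (-1 : ℝ) 0) t ∧
      NormalDerivLimit a (u t) x (derivWithin (fun τ => u τ (x, 0)) (Ioc (-1 : ℝ) 0) t))

/-!
Doubling the variables turns the regularity of `u` into a maximum principle: a combination
`∑ j, c j * u (t, x j, y)` over several points of equal height lies below any barrier that is a
strict supersolution for the equations of all points together. In the interior the second
derivatives may be taken along frames attached to the points; for two points, mirror frames make the
concavity of a modulus of their distance available. On the boundary the drift and the right-hand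
side only enter through `δ`, times the Lipschitz constant of the barrier, so every estimate holds up
to an error that vanishes with `δ`.

The four-point combination `u(x + h) - u(x) - u(x' + h) + u(x')`, with penalized increments,
transfers a Hölder bound on `u` to its increments. Second differences then gain regularity, step by
step, until `u` is almost Lipschitz in `x` with increments almost Hölder of exponent `γ = 2s`.
Hence at time `-r ^ γ` the trace of `u` on `y = 0` is almost additive up to a constant, so close to
an affine function of slope `A`, as in Hyers' stability theorem; a two-point barrier of growth
`|X| ^ (γ + η)` carries this slope to later times and positive heights, up to `r ^ (1 + γ - η)`.

Finally `D'` is read off the vertical increment `u(t, 0, r) - u(t, 0, 0)` and `D` is its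
antiderivative. The expansion then matches `u` on the axis at heights `0` and `r` well enough for
a comparison on the whole cylinder.
-/

/-! ### Second derivatives on a line -/

/-- The function `g` is differentiable near `x` and has first and second derivatives `g₁` and `g₂`
at `x`. -/
def HasSecondDerivAt (g : ℝ → ℝ) (g₁ g₂ x : ℝ) : Prop :=
  ∃ g' : ℝ → ℝ, (∀ᶠ z in 𝓝 x, HasDerivAt g (g' z) z) ∧ g' x = g₁ ∧ HasDerivAt g' g₂ x

theorem hasSecondDerivAt_const (c x : ℝ) : HasSecondDerivAt (fun _ => c) 0 0 x :=
  ⟨fun _ => 0, .of_forall fun z => hasDerivAt_const z c, rfl, hasDerivAt_const x 0⟩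

theorem hasSecondDerivAt_rpow_const {y : ℝ} (hy : y ≠ 0) (p : ℝ) :
    HasSecondDerivAt (fun z => z ^ p) (p * y ^ (p - 1)) (p * ((p - 1) * y ^ (p - 2))) y := by
  refine ⟨fun z => p * z ^ (p - 1), ?_, rfl, ?_⟩
  · filter_upwards [isOpen_ne.mem_nhds hy] with z hz using Real.hasDerivAt_rpow_const (Or.inl hz)
  · refine ((Real.hasDerivAt_rpow_const (p := p - 1) (Or.inl hy)).const_mul p).congr_deriv ?_
    rw [sub_sub, one_add_one_eq_two]

theorem hasSecondDerivAt_quadratic (A B C x : ℝ) :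
    HasSecondDerivAt (fun z => A + B * z + C * z ^ 2) (B + C * (2 * x)) (2 * C) x := by
  refine ⟨fun z => B + C * (2 * z), .of_forall fun z => ?_, rfl, ?_⟩
  · refine ((((hasDerivAt_id z).const_mul B).const_add A).add
      ((hasDerivAt_pow 2 z).const_mul C)).congr_deriv ?_
    simp
  · refine ((((hasDerivAt_id x).const_mul 2).const_mul C).const_add B).congr_deriv ?_
    ring

theorem hasSecondDerivAt_inv_add_sq {c z : ℝ} (hcz : c + z ^ 2 ≠ 0) :
    HasSecondDerivAt (fun w => (c + w ^ 2)⁻¹) (-(2 * z) / (c + z ^ 2) ^ 2)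
      ((6 * z ^ 2 - 2 * c) / (c + z ^ 2) ^ 3) z := by
  have hderiv (w : ℝ) : HasDerivAt (fun w => c + w ^ 2) (2 * w) w := by
    simpa using (hasDerivAt_pow 2 w).const_add c
  refine ⟨fun w => -(2 * w) / (c + w ^ 2) ^ 2, ?_, rfl, ?_⟩
  · filter_upwards [(hderiv z).continuousAt.eventually_ne hcz] with w hw using (hderiv w).inv hw
  · refine (((hasDerivAt_id z).const_mul 2).neg.div ((hderiv z).pow 2)
      (pow_ne_zero 2 hcz)).congr_deriv ?_
    simp only [id, Pi.pow_apply, Pi.neg_apply]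
    field_simp
    ring

namespace HasSecondDerivAt

variable {g h : ℝ → ℝ} {g₁ g₂ h₁ h₂ x : ℝ}

theorem congr_fun (hg : HasSecondDerivAt g g₁ g₂ x) (hgh : h =ᶠ[𝓝 x] g) :
    HasSecondDerivAt h g₁ g₂ x := by
  obtain ⟨g', hg', hx, hg''⟩ := hg
  refine ⟨g', ?_, hx, hg''⟩
  filter_upwards [hg', hgh.eventuallyEq_nhds] with z hz hgz using hz.congr_of_eventuallyEq hgz

theorem add (hg : HasSecondDerivAt g g₁ g₂ x) (hh : HasSecondDerivAt h h₁ h₂ x) :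
    HasSecondDerivAt (fun z => g z + h z) (g₁ + h₁) (g₂ + h₂) x := by
  obtain ⟨g', hg', rfl, hg''⟩ := hg
  obtain ⟨h', hh', rfl, hh''⟩ := hh
  exact ⟨fun z => g' z + h' z, by filter_upwards [hg', hh'] with z a b using a.add b, rfl,
    hg''.add hh''⟩

theorem mul (hg : HasSecondDerivAt g g₁ g₂ x) (hh : HasSecondDerivAt h h₁ h₂ x) :
    HasSecondDerivAt (fun z => g z * h z) (g₁ * h x + g x * h₁)
      (g₂ * h x + 2 * (g₁ * h₁) + g x * h₂) x := by
  obtain ⟨g', hg', rfl, hg''⟩ := hg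
  obtain ⟨h', hh', rfl, hh''⟩ := hh
  refine ⟨fun z => g' z * h z + g z * h' z, ?_, rfl, ?_⟩
  · filter_upwards [hg', hh'] with z a b using a.mul b
  · refine ((hg''.mul hh'.self_of_nhds).add (hg'.self_of_nhds.mul hh'')).congr_deriv ?_
    ring

theorem const_mul (hg : HasSecondDerivAt g g₁ g₂ x) (c : ℝ) :
    HasSecondDerivAt (fun z => c * g z) (c * g₁) (c * g₂) x := by
  convert (hasSecondDerivAt_const c x).mul hg using 1 <;> ring

theorem sub (hg : HasSecondDerivAt g g₁ g₂ x) (hh : HasSecondDerivAt h h₁ h₂ x) :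
    HasSecondDerivAt (fun z => g z - h z) (g₁ - h₁) (g₂ - h₂) x := by
  convert hg.add (hh.const_mul (-1)) using 1
  · ext z; ring
  all_goals ring

theorem sum {ι : Type*} {s : Finset ι} {g : ι → ℝ → ℝ} {g₁ g₂ : ι → ℝ}
    (hg : ∀ i ∈ s, HasSecondDerivAt (g i) (g₁ i) (g₂ i) x) :
    HasSecondDerivAt (fun z => ∑ i ∈ s, g i z) (∑ i ∈ s, g₁ i) (∑ i ∈ s, g₂ i) x := by
  classical
  induction s using Finset.induction_on with
  | empty => simpa using hasSecondDerivAt_const 0 x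
  | insert i s hi ih =>
    rw [Finset.forall_mem_insert] at hg
    simpa only [Finset.sum_insert hi] using hg.1.add (ih hg.2)

theorem comp_affine {r : ℝ} (hg : HasSecondDerivAt g g₁ g₂ r) (c : ℝ) :
    HasSecondDerivAt (fun z => g (r + c * z)) (c * g₁) (c ^ 2 * g₂) 0 := by
  obtain ⟨g', hg', rfl, hg''⟩ := hg
  have hline (z : ℝ) : HasDerivAt (fun z : ℝ => r + c * z) c z := by
    simpa using ((hasDerivAt_id z).const_mul c).const_add r
  have htendsto : Tendsto (fun z : ℝ => r + c * z) (𝓝 0) (𝓝 r) := by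
    simpa using (hline 0).continuousAt.tendsto
  refine ⟨fun z => c * g' (r + c * z), ?_, by simp, ?_⟩
  · filter_upwards [htendsto.eventually hg'] with z hz
    exact (hz.comp z (hline z)).congr_deriv (mul_comm _ _)
  · have hg'' : HasDerivAt g' g₂ (r + c * 0) := by simpa using hg''
    exact ((hg''.comp 0 (hline 0)).const_mul c).congr_deriv (by ring)

theorem nonpos_of_isLocalMax (hg : HasSecondDerivAt g g₁ g₂ x) (hmax : IsLocalMax g x) :
    g₂ ≤ 0 := by
  obtain ⟨g', hg', -, hg''⟩ := hg
  have hderiv : deriv g =ᶠ[𝓝 x] g' := by filter_upwards [hg'] with z hz using hz.deriv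
  have hderiv₂ : deriv (deriv g) x = g₂ := by rw [hderiv.deriv_eq, hg''.deriv]
  by_contra! hpos
  have hmin := isLocalMin_of_deriv_deriv_pos (hderiv₂ ▸ hpos) hmax.deriv_eq_zero
    hg'.self_of_nhds.continuousAt
  have hconst : g =ᶠ[𝓝 x] fun _ => g x := by
    filter_upwards [hmax, hmin] with z hle hge using le_antisymm hle hge
  have hzero : deriv (deriv g) x = 0 := by rw [hconst.deriv.deriv_eq]; simp
  exact hpos.ne' (hderiv₂ ▸ hzero)

theorem eq_zero_of_isLocalMax (hg : HasSecondDerivAt g g₁ g₂ x) (hmax : IsLocalMax g x) :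
    g₁ = 0 := by
  obtain ⟨g', hg', rfl, -⟩ := hg
  exact hmax.hasDerivAt_eq_zero hg'.self_of_nhds

end HasSecondDerivAt

/-- The Bessel operator `g'' + (a / y) g'`, the vertical part of the operator
`Δ + (a / y) ∂_y`, takes the value `q` on `g` at `y`. -/
def HasBesselAt (a : ℝ) (g : ℝ → ℝ) (q y : ℝ) : Prop :=
  ∃ g₁ g₂ : ℝ, HasSecondDerivAt g g₁ g₂ y ∧ q = g₂ + a / y * g₁

theorem hasBesselAt_const (a c y : ℝ) : HasBesselAt a (fun _ => c) 0 y :=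
  ⟨0, 0, hasSecondDerivAt_const c y, by ring⟩

theorem hasBesselAt_rpow {y : ℝ} (hy : 0 < y) (a p : ℝ) :
    HasBesselAt a (fun z => z ^ p) (p * (p - 1 + a) * y ^ (p - 2)) y := by
  refine ⟨_, _, hasSecondDerivAt_rpow_const hy.ne' p, ?_⟩
  rw [show p - 1 = p - 2 + 1 by ring, Real.rpow_add_one hy.ne']
  field_simp

-- The weight `y ^ (1 - a)` is in the kernel of the operator, and shifts its parameter to `2 - a`.
theorem hasBesselAt_rpow_mul {h : ℝ → ℝ} {h₁ h₂ y : ℝ} (hy : 0 < y) (γ : ℝ)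
    (hh : HasSecondDerivAt h h₁ h₂ y) :
    HasBesselAt (1 - γ) (fun z => z ^ γ * h z) (y ^ γ * (h₂ + (1 + γ) / y * h₁)) y := by
  refine ⟨_, _, (hasSecondDerivAt_rpow_const hy.ne' γ).mul hh, ?_⟩
  rw [Real.rpow_sub hy, Real.rpow_sub hy, Real.rpow_one, Real.rpow_two]
  field_simp
  ring

namespace HasBesselAt

variable {a : ℝ} {g h : ℝ → ℝ} {q r y : ℝ}

theorem add (hg : HasBesselAt a g q y) (hh : HasBesselAt a h r y) :
    HasBesselAt a (fun z => g z + h z) (q + r) y := by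
  obtain ⟨g₁, g₂, hg, rfl⟩ := hg
  obtain ⟨h₁, h₂, hh, rfl⟩ := hh
  exact ⟨_, _, hg.add hh, by ring⟩

theorem const_mul (hg : HasBesselAt a g q y) (c : ℝ) :
    HasBesselAt a (fun z => c * g z) (c * q) y := by
  obtain ⟨g₁, g₂, hg, rfl⟩ := hg
  exact ⟨_, _, hg.const_mul c, by ring⟩

theorem sub (hg : HasBesselAt a g q y) (hh : HasBesselAt a h r y) :
    HasBesselAt a (fun z => g z - h z) (q - r) y := by
  obtain ⟨g₁, g₂, hg, rfl⟩ := hg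
  obtain ⟨h₁, h₂, hh, rfl⟩ := hh
  exact ⟨_, _, hg.sub hh, by ring⟩

theorem sum {ι : Type*} {s : Finset ι} {g : ι → ℝ → ℝ} {q : ι → ℝ}
    (hg : ∀ i ∈ s, HasBesselAt a (g i) (q i) y) :
    HasBesselAt a (fun z => ∑ i ∈ s, g i z) (∑ i ∈ s, q i) y := by
  choose! g₁ g₂ hg hq using hg
  exact ⟨_, _, HasSecondDerivAt.sum hg, by
    rw [Finset.sum_congr rfl hq, Finset.sum_add_distrib, Finset.mul_sum]⟩

theorem nonpos_of_isLocalMax (hg : HasBesselAt a g q y) (hmax : IsLocalMax g y) : q ≤ 0 := by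
  obtain ⟨g₁, g₂, hg, rfl⟩ := hg
  simpa [hg.eq_zero_of_isLocalMax hmax] using hg.nonpos_of_isLocalMax hmax

end HasBesselAt

/-! ### `a`-harmonic functions -/

theorem hasSecondDerivAt_line_of_contDiffAt {E : Type*} [NormedAddCommGroup E] [NormedSpace ℝ E]
    {u : E → ℝ} {q w : E} {τ : ℝ} (hu : ContDiffAt ℝ 2 u (q + τ • w)) :
    HasSecondDerivAt (fun τ => u (q + τ • w)) (fderiv ℝ u (q + τ • w) w)
      (fderiv ℝ (fderiv ℝ u) (q + τ • w) w w) τ := by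
  have hline (σ : ℝ) : HasDerivAt (fun σ : ℝ => q + σ • w) w σ := by
    simpa using ((hasDerivAt_id σ).smul_const w).const_add q
  have hu' : DifferentiableAt ℝ (fderiv ℝ u) (q + τ • w) :=
    (hu.fderiv_right (m := 1) (by norm_num)).differentiableAt one_ne_zero
  refine ⟨fun σ => fderiv ℝ u (q + σ • w) w, ?_, rfl, ?_⟩
  · filter_upwards [(hline τ).continuousAt.eventually (hu.eventually (by simp))] with σ hσ
    exact (hσ.differentiableAt two_ne_zero).hasFDerivAt.comp_hasDerivAt σ (hline σ)
  · have hcomp := hu'.hasFDerivAt.comp_hasDerivAt τ (hline τ)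
    simpa using hcomp.clm_apply (hasDerivAt_const τ w)

theorem sum_apply_apply_orthonormalBasis_eq {E ι ι' : Type*} [NormedAddCommGroup E]
    [InnerProductSpace ℝ E] [Fintype ι] [Fintype ι'] (B : E →L[ℝ] E →L[ℝ] ℝ)
    (e : OrthonormalBasis ι ℝ E) (e' : OrthonormalBasis ι' ℝ E) :
    ∑ k, B (e k) (e k) = ∑ k, B (e' k) (e' k) := by
  have : FiniteDimensional ℝ E := e.toBasis.finiteDimensional_of_finite
  let T : E →ₗ[ℝ] E := (InnerProductSpace.toDual ℝ E).symm.toLinearEquiv.toLinearMap ∘ₗ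
    (B : E →ₗ[ℝ] (E →L[ℝ] ℝ))
  have hT (v : E) : ⟪v, T v⟫ = B v v := by
    rw [real_inner_comm]
    exact InnerProductSpace.toDual_symm_apply
  simpa only [hT] using
    (T.trace_eq_sum_inner e).symm.trans (T.trace_eq_sum_inner e')

theorem isOpen_halfBall (n : ℕ) (r : ℝ) : IsOpen (halfBall n r) :=
  (isOpen_lt (f := fun p : En n × ℝ => ‖p.1‖ ^ 2 + p.2 ^ 2) (by fun_prop) continuous_const).inter
    (isOpen_lt continuous_const continuous_snd)

namespace IsAHarmonicOn

variable {n : ℕ} {a : ℝ} {v : En n × ℝ → ℝ} {Ω : Set (En n × ℝ)} {x : En n} {y : ℝ}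

theorem contDiffAt (hv : IsAHarmonicOn a v Ω) (hΩ : IsOpen Ω) (hp : (x, y) ∈ Ω) :
    ContDiffAt ℝ 2 v (x, y) :=
  hv.1.contDiffAt (hΩ.mem_nhds hp)

theorem exists_sum_add_bessel_eq_zero (hv : IsAHarmonicOn a v Ω) (hΩ : IsOpen Ω)
    (hp : (x, y) ∈ Ω) (e : OrthonormalBasis (Fin n) ℝ (En n)) :
    ∃ (h : Fin n → ℝ) (q : ℝ),
      (∀ k, ∃ d, HasSecondDerivAt (fun τ => v (x + τ • e k, y)) d (h k) 0) ∧
      HasBesselAt a (fun z => v (x, z)) q y ∧ ∑ k, h k + q = 0 := by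
  have hv₂ := hv.contDiffAt hΩ hp
  have hv' : DifferentiableAt ℝ (fderiv ℝ v) (x, y) :=
    (hv₂.fderiv_right (m := 1) (by norm_num)).differentiableAt one_ne_zero
  set B := fderiv ℝ (fderiv ℝ v) (x, y) with hB
  have hD2 (w : En n × ℝ) : D2 v (x, y) w = B w w := by
    simp [D2, (hv'.hasFDerivAt.clm_apply (hasFDerivAt_const w (x, y))).fderiv, hB]
  have hx (w : En n) : (x, y) + (0 : ℝ) • (w, (0 : ℝ)) = (x, y) := by simp
  have hy : ((x, 0) : En n × ℝ) + y • ((0 : En n), (1 : ℝ)) = (x, y) := by simp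
  refine ⟨fun k => B (e k, 0) (e k, 0),
    B (0, 1) (0, 1) + a / y * fderiv ℝ v (x, y) (0, 1), fun k => ?_, ?_, ?_⟩
  · have h := hasSecondDerivAt_line_of_contDiffAt (q := (x, y)) (w := (e k, (0 : ℝ))) (τ := 0)
      ((hx (e k)).symm ▸ hv₂)
    simp only [hx] at h
    exact ⟨_, by simpa using h⟩
  · have h := hasSecondDerivAt_line_of_contDiffAt (q := (x, (0 : ℝ))) (w := ((0 : En n), (1 : ℝ)))
      (τ := y) (hy.symm ▸ hv₂)
    rw [hy] at h
    exact ⟨_, _, by simpa using h, rfl⟩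
  · let Bx : En n →L[ℝ] En n →L[ℝ] ℝ :=
      ((ContinuousLinearMap.compL ℝ (En n) (En n × ℝ) ℝ).flip
        (ContinuousLinearMap.inl ℝ (En n) ℝ)) ∘L B ∘L ContinuousLinearMap.inl ℝ (En n) ℝ
    have htrace : ∑ k, B (e k, 0) (e k, 0) = ∑ k, D2 v (x, y) (EuclideanSpace.single k 1, 0) := by
      simpa [Bx, hD2] using
        sum_apply_apply_orthonormalBasis_eq Bx e (EuclideanSpace.basisFun (Fin n) ℝ)
    rw [htrace, ← hD2, ← add_assoc]
    exact hv.2 (x, y) hp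

end IsAHarmonicOn

theorem eventually_mem_halfBall {n : ℕ} {r : ℝ} {x : En n} (hx : ‖x‖ < r) :
    ∀ᶠ y : ℝ in 𝓝[>] 0, (x, y) ∈ halfBall n r := by
  have hlim : ∀ᶠ y : ℝ in 𝓝 0, ‖x‖ ^ 2 + y ^ 2 < r ^ 2 :=
    ContinuousAt.eventually_lt (by fun_prop) continuousAt_const (by simpa using by gcongr)
  filter_upwards [nhdsWithin_le_nhds hlim, self_mem_nhdsWithin] with y h₁ h₂ using ⟨h₁, h₂⟩

theorem NormalDerivLimit.tendsto_div_rpow {n : ℕ} {γ r L : ℝ} (hγ : 0 < γ) {v : En n × ℝ → ℝ}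
    {x : En n} (hx : ‖x‖ < r) (hv : DifferentiableOn ℝ v (halfBall n r))
    (hc : Tendsto (fun y : ℝ => v (x, y)) (𝓝[>] 0) (𝓝 (v (x, 0))))
    (hL : NormalDerivLimit (1 - γ) v x L) :
    Tendsto (fun y : ℝ => (v (x, y) - v (x, 0)) / y ^ γ) (𝓝[>] 0) (𝓝 (L / γ)) := by
  have hpos : ∀ᶠ y : ℝ in 𝓝[>] 0, 0 < y := self_mem_nhdsWithin
  refine HasDerivAt.lhopital_zero_nhdsGT (f' := fun y => fderiv ℝ v (x, y) (0, 1))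
    (g' := fun y => γ * y ^ (γ - 1)) ?_ ?_ ?_ ?_ ?_ ?_
  · filter_upwards [eventually_mem_halfBall hx] with y hy
    have hvy := (hv.differentiableAt ((isOpen_halfBall n r).mem_nhds hy)).hasFDerivAt
    exact (hvy.comp_hasDerivAt y
      ((hasDerivAt_const y x).prodMk (hasDerivAt_id y))).sub_const _
  · filter_upwards [hpos] with y hy using Real.hasDerivAt_rpow_const (Or.inl hy.ne')
  · filter_upwards [hpos] with y hy
    have := Real.rpow_pos_of_pos hy (γ - 1)
    positivity
  · simpa using hc.sub_const (v (x, 0))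
  · have hcont : ContinuousAt (fun y : ℝ => y ^ γ) 0 :=
      Real.continuousAt_rpow_const _ _ (Or.inr hγ.le)
    simpa [Real.zero_rpow hγ.ne'] using hcont.tendsto.mono_left nhdsWithin_le_nhds
  · refine (hL.div_const γ).congr' ?_
    filter_upwards [hpos] with y hy
    rw [show 1 - γ = -(γ - 1) by ring, Real.rpow_neg hy.le]
    field_simp

/-! ### Normalized solutions -/

section Neg

variable {n : ℕ} {a : ℝ} {Ω : Set (En n × ℝ)} {b : ℝ → En n → En n} {f : ℝ → En n → ℝ}

theorem D2_neg (v : En n × ℝ → ℝ) (p w : En n × ℝ) : D2 (fun q => -v q) p w = -D2 v p w := by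
  simp [D2, fderiv_fun_neg]

theorem IsAHarmonicOn.neg {v : En n × ℝ → ℝ} (hv : IsAHarmonicOn a v Ω) :
    IsAHarmonicOn a (fun p => -v p) Ω := by
  refine ⟨hv.1.neg, fun p hp => ?_⟩
  have hp := hv.2 p hp
  simp only [lap, D2_neg, fderiv_fun_neg, Finset.sum_neg_distrib, neg_apply] at hp ⊢
  linarith

theorem NormalDerivLimit.neg {v : En n × ℝ → ℝ} {x : En n} {L : ℝ}
    (hv : NormalDerivLimit a v x L) : NormalDerivLimit a (fun p => -v p) x (-L) :=
  (Tendsto.neg hv).congr fun y => by simp [fderiv_fun_neg]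

theorem isOpen_flatBall (n : ℕ) (r : ℝ) : IsOpen (flatBall n r) :=
  isOpen_lt continuous_norm continuous_const

theorem IsExtDDSolution.neg {u : ℝ → En n × ℝ → ℝ} (hu : IsExtDDSolution a b f u) :
    IsExtDDSolution a b (fun t x => -f t x) (fun t p => -u t p) := by
  obtain ⟨hcont, hharm, hdiff, heq⟩ := hu
  refine ⟨hcont.neg, fun t ht => (hharm t ht).neg, fun q hq => (hdiff q hq).neg, ?_⟩
  intro t x hq
  obtain ⟨L, hL, hLf⟩ := heq t x hq
  refine ⟨-L, hL.neg, ?_⟩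
  have huniq : UniqueDiffWithinAt ℝ (Ioc (-1 : ℝ) 0 ×ˢ flatBall n 1) (t, x) :=
    (uniqueDiffOn_Ioc _ _ t hq.1).prod ((isOpen_flatBall n 1).uniqueDiffWithinAt hq.2)
  rw [show bdryFun (fun t p => -u t p) = fun q => -bdryFun u q from rfl, fderivWithin_fun_neg huniq]
  simp only [neg_apply]
  linarith

end Neg

/-- The class of functions for which the estimates below are uniform: solutions bounded by `1` of an
extended drift–diffusion equation whose drift and right-hand side are bounded by `δ`. The exponent
`γ = 1 - a = 2s` is used as the parameter. -/
def IsNormalizedSolution {n : ℕ} (γ δ : ℝ) (u : ℝ → En n × ℝ → ℝ) : Prop :=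
  ∃ (b : ℝ → En n → En n) (f : ℝ → En n → ℝ),
    (∀ t ∈ Icc (-1 : ℝ) 0, ∀ x ∈ flatBall n 1, ‖b t x‖ ≤ δ) ∧
    (∀ t ∈ Icc (-1 : ℝ) 0, ∀ x ∈ flatBall n 1, |f t x| ≤ δ) ∧
    IsExtDDSolution (1 - γ) b f u ∧
    ∀ t ∈ Icc (-1 : ℝ) 0, ∀ p ∈ halfBall n 1, |u t p| ≤ 1

namespace IsNormalizedSolution

variable {n : ℕ} {γ δ δ' t y : ℝ} {x : En n} {u : ℝ → En n × ℝ → ℝ}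

theorem mono (hu : IsNormalizedSolution γ δ u) (hδ : δ ≤ δ') : IsNormalizedSolution γ δ' u := by
  obtain ⟨b, f, hb, hf, hsol, hbound⟩ := hu
  exact ⟨b, f, fun t ht x hx => (hb t ht x hx).trans hδ, fun t ht x hx => (hf t ht x hx).trans hδ,
    hsol, hbound⟩

theorem neg (hu : IsNormalizedSolution γ δ u) :
    IsNormalizedSolution γ δ (fun t p => -u t p) := by
  obtain ⟨b, f, hb, hf, hsol, hbound⟩ := hu
  exact ⟨b, fun t x => -f t x, hb, by simpa only [abs_neg] using hf, hsol.neg,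
    by simpa only [abs_neg] using hbound⟩

theorem continuousOn (hu : IsNormalizedSolution γ δ u) :
    ContinuousOn (fun q : ℝ × (En n × ℝ) => u q.1 q.2)
      (Icc (-1 : ℝ) 0 ×ˢ closedHalfBall n 1) := by
  obtain ⟨b, f, -, -, hsol, -⟩ := hu
  exact hsol.1

theorem isAHarmonicOn (hu : IsNormalizedSolution γ δ u) (ht : t ∈ Icc (-1 : ℝ) 0) :
    IsAHarmonicOn (1 - γ) (u t) (halfBall n 1) := by
  obtain ⟨b, f, -, -, hsol, -⟩ := hu
  exact hsol.2.1 t ht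

theorem tendsto_base (hu : IsNormalizedSolution γ δ u) (ht : t ∈ Icc (-1 : ℝ) 0) (hx : ‖x‖ < 1) :
    Tendsto (fun y : ℝ => u t (x, y)) (𝓝[>] 0) (𝓝 (u t (x, 0))) := by
  have hmem : (t, x, (0 : ℝ)) ∈ Icc (-1 : ℝ) 0 ×ˢ closedHalfBall n 1 :=
    ⟨ht, by simpa using hx.le, le_rfl⟩
  have hline : Tendsto (fun y : ℝ => (t, x, y)) (𝓝[>] 0)
      (𝓝[Icc (-1 : ℝ) 0 ×ˢ closedHalfBall n 1] (t, x, 0)) := by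
    refine tendsto_nhdsWithin_of_tendsto_nhds_of_eventually_within _ ?_ ?_
    · exact Tendsto.mono_left (Continuous.tendsto (f := fun y : ℝ => (t, x, y)) (by fun_prop) 0)
        nhdsWithin_le_nhds
    · filter_upwards [eventually_mem_halfBall hx] with y hy using ⟨ht, hy.1.le, hy.2.le⟩
  exact (hu.continuousOn _ hmem).tendsto.comp hline

theorem abs_le_one (hu : IsNormalizedSolution γ δ u) (ht : t ∈ Icc (-1 : ℝ) 0)
    (hxy : (x, y) ∈ halfBallWithBase n 1) : |u t (x, y)| ≤ 1 := by
  have hinterior : ∀ p ∈ halfBall n 1, |u t p| ≤ 1 := by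
    obtain ⟨b, f, -, -, -, hbound⟩ := hu
    exact hbound t ht
  obtain ⟨hball, hy : 0 ≤ y⟩ := hxy
  rcases hy.eq_or_lt with rfl | hy
  · have hx : ‖x‖ < 1 := by simpa using hball
    refine le_of_tendsto (hu.tendsto_base ht hx).abs ?_
    filter_upwards [eventually_mem_halfBall hx] with y hy using hinterior _ hy
  · exact hinterior _ ⟨hball, hy⟩

end IsNormalizedSolution

section BoundaryDerivatives

variable {n : ℕ} {u : ℝ → En n × ℝ → ℝ} {F : ℝ × En n →L[ℝ] ℝ} {t : ℝ} {x : En n}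

theorem hasDerivWithinAt_time_of_bdryFun
    (hF : HasFDerivWithinAt (bdryFun u) F (Ioc (-1 : ℝ) 0 ×ˢ flatBall n 1) (t, x))
    (ht : t ∈ Ioc (-1 : ℝ) 0) (hx : ‖x‖ < 1) :
    HasDerivWithinAt (fun τ => u τ (x, 0)) (F (1, 0)) (Iic t) t := by
  have hline : HasDerivWithinAt (fun τ : ℝ => (τ, x)) ((1 : ℝ), (0 : En n)) (Ioc (-1) t) t :=
    ((hasDerivAt_id t).prodMk (hasDerivAt_const t x)).hasDerivWithinAt
  have hmaps : MapsTo (fun τ : ℝ => (τ, x)) (Ioc (-1) t) (Ioc (-1 : ℝ) 0 ×ˢ flatBall n 1) :=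
    fun τ hτ => ⟨⟨hτ.1, hτ.2.trans ht.2⟩, hx⟩
  refine (hF.comp_hasDerivWithinAt t hline hmaps).mono_of_mem_nhdsWithin ?_
  filter_upwards [self_mem_nhdsWithin, nhdsWithin_le_nhds (Ioi_mem_nhds ht.1)] with τ h₁ h₂
    using ⟨h₂, h₁⟩

theorem hasDerivAt_line_of_bdryFun
    (hF : HasFDerivWithinAt (bdryFun u) F (Ioc (-1 : ℝ) 0 ×ˢ flatBall n 1) (t, x))
    (ht : t ∈ Ioc (-1 : ℝ) 0) (hx : ‖x‖ < 1) (w : En n) :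
    HasDerivAt (fun τ : ℝ => u t (x + τ • w, 0)) (F (0, w)) 0 := by
  have hline : HasDerivAt (fun τ : ℝ => (t, x + τ • w)) ((0 : ℝ), w) 0 :=
    (hasDerivAt_const 0 t).prodMk
      (by simpa using ((hasDerivAt_id (0 : ℝ)).smul_const w).const_add x)
  have hmem : ∀ᶠ τ : ℝ in 𝓝 0, x + τ • w ∈ flatBall n 1 :=
    ContinuousAt.eventually_mem (f := fun τ : ℝ => x + τ • w) (by fun_prop)
      ((isOpen_flatBall n 1).mem_nhds (by simpa [flatBall] using hx))
  have hF' : HasFDerivWithinAt (bdryFun u) F (Ioc (-1 : ℝ) 0 ×ˢ flatBall n 1)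
      (t, x + (0 : ℝ) • w) := by simpa using hF
  have hmaps : MapsTo (fun τ : ℝ => (t, x + τ • w)) {τ | x + τ • w ∈ flatBall n 1}
      (Ioc (-1 : ℝ) 0 ×ˢ flatBall n 1) := fun τ hτ => ⟨ht, hτ⟩
  exact (hF'.comp_hasDerivWithinAt 0 hline.hasDerivWithinAt hmaps).hasDerivAt hmem

end BoundaryDerivatives

theorem IsNormalizedSolution.exists_boundary_derivatives {n : ℕ} {γ δ t : ℝ} {x : En n}
    {u : ℝ → En n × ℝ → ℝ} (hu : IsNormalizedSolution γ δ u) (hγ : 0 < γ)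
    (ht : t ∈ Ioc (-1 : ℝ) 0) (hx : ‖x‖ < 1) :
    ∃ (w : En n) (ut d L : ℝ), ‖w‖ ≤ δ ∧ HasDerivWithinAt (fun τ => u τ (x, 0)) ut (Iic t) t ∧
      HasDerivAt (fun τ : ℝ => u t (x + τ • w, 0)) d 0 ∧
      Tendsto (fun y : ℝ => (u t (x, y) - u t (x, 0)) / y ^ γ) (𝓝[>] 0) (𝓝 (L / γ)) ∧
      |ut + d - L| ≤ δ := by
  have ht' : t ∈ Icc (-1 : ℝ) 0 := Ioc_subset_Icc_self ht
  have hlim := hu.tendsto_base ht' hx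
  obtain ⟨b, f, hb, hf, ⟨-, hharm, hdiff, heq⟩, -⟩ := hu
  obtain ⟨L, hL, hLf⟩ := heq t x ⟨ht, hx⟩
  have hF := (hdiff (t, x) ⟨ht, hx⟩).hasFDerivWithinAt
  exact ⟨b t x, _, _, L, hb t ht' x hx, hasDerivWithinAt_time_of_bdryFun hF ht hx,
    hasDerivAt_line_of_bdryFun hF ht hx _,
    hL.tendsto_div_rpow hγ hx ((hharm t ht').1.differentiableOn two_ne_zero) hlim,
    hLf ▸ hf t ht' x hx⟩

/-! ### A maximum principle for sums over several points -/

/-- The linear combination `∑ j, c j * v (x j, y)` of the values of `v` at several points of equal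
height, which is what the barriers of the doubling-of-variables arguments dominate. -/
def multipointSum {ι : Type*} [Fintype ι] {n : ℕ} (c : ι → ℝ) (v : En n × ℝ → ℝ) (x : ι → En n)
    (y : ℝ) : ℝ :=
  ∑ j, c j * v (x j, y)

/-- At `(x, y)` the function `Φ` is touched from above by a function on which the operator
`∑ k, ∂²/∂τ_k² + ∂²/∂y² + (a / y) ∂/∂y` is at most `q`. Along `τ_k` every point `x j` moves at once,
in the direction `e j k` of its own frame: choosing different frames couples the points. -/
def HasCoupledLaplacianLE {ι : Type*} {n : ℕ} (a : ℝ) (e : ι → OrthonormalBasis (Fin n) ℝ (En n))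
    (Φ : (ι → En n) → ℝ → ℝ) (x : ι → En n) (y q : ℝ) : Prop :=
  ∃ Ψ : (ι → En n) → ℝ → ℝ, Ψ x y = Φ x y ∧ (∀ x' y', Φ x' y' ≤ Ψ x' y') ∧
    ∃ (h : Fin n → ℝ) (v : ℝ),
      (∀ k, ∃ d, HasSecondDerivAt (fun τ => Ψ (fun j => x j + τ • e j k) y) d (h k) 0) ∧
      HasBesselAt a (Ψ x) v y ∧ ∑ k, h k + v ≤ q

section InteriorTest

variable {ι : Type*} {n : ℕ} {a y q r : ℝ} {e : ι → OrthonormalBasis (Fin n) ℝ (En n)}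
  {Φ Φ' : (ι → En n) → ℝ → ℝ} {x : ι → En n}

theorem HasCoupledLaplacianLE.add (hΦ : HasCoupledLaplacianLE a e Φ x y q)
    (hΦ' : HasCoupledLaplacianLE a e Φ' x y r) :
    HasCoupledLaplacianLE a e (fun x y => Φ x y + Φ' x y) x y (q + r) := by
  obtain ⟨Ψ, heq, hle, h, v, hh, hv, hq⟩ := hΦ
  obtain ⟨Ψ', heq', hle', h', v', hh', hv', hr⟩ := hΦ'
  choose d hd using hh
  choose d' hd' using hh'
  refine ⟨fun x y => Ψ x y + Ψ' x y, congrArg₂ _ heq heq',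
    fun x' y' => add_le_add (hle x' y') (hle' x' y'),
    fun k => h k + h' k, v + v', fun k => ⟨_, (hd k).add (hd' k)⟩, hv.add hv', ?_⟩
  rw [Finset.sum_add_distrib]
  linarith

theorem HasCoupledLaplacianLE.const_mul {c : ℝ} (hc : 0 ≤ c)
    (hΦ : HasCoupledLaplacianLE a e Φ x y q) :
    HasCoupledLaplacianLE a e (fun x y => c * Φ x y) x y (c * q) := by
  obtain ⟨Ψ, heq, hle, h, v, hh, hv, hq⟩ := hΦ
  choose d hd using hh
  refine ⟨fun x y => c * Ψ x y, congrArg _ heq,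
    fun x' y' => mul_le_mul_of_nonneg_left (hle x' y') hc,
    fun k => c * h k, c * v, fun k => ⟨_, (hd k).const_mul c⟩, hv.const_mul c, ?_⟩
  rw [← Finset.mul_sum, ← mul_add]
  gcongr

theorem HasCoupledLaplacianLE.mono (hΦ : HasCoupledLaplacianLE a e Φ x y q) (hqr : q ≤ r) :
    HasCoupledLaplacianLE a e Φ x y r := by
  obtain ⟨Ψ, heq, hle, h, v, hh, hv, hq⟩ := hΦ
  exact ⟨Ψ, heq, hle, h, v, hh, hv, hq.trans hqr⟩

theorem hasCoupledLaplacianLE_of_le (h : Fin n → ℝ) (v : ℝ)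
    (hh : ∀ k, ∃ d, HasSecondDerivAt (fun τ => Φ (fun j => x j + τ • e j k) y) d (h k) 0)
    (hv : HasBesselAt a (Φ x) v y) (hq : ∑ k, h k + v ≤ q) : HasCoupledLaplacianLE a e Φ x y q :=
  ⟨Φ, rfl, fun _ _ => le_rfl, h, v, hh, hv, hq⟩

theorem IsAHarmonicOn.exists_multipointSum_derivatives [Fintype ι] {v : En n × ℝ → ℝ}
    {Ω : Set (En n × ℝ)} (hv : IsAHarmonicOn a v Ω) (hΩ : IsOpen Ω) (hx : ∀ j, (x j, y) ∈ Ω)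
    (c : ι → ℝ) (e : ι → OrthonormalBasis (Fin n) ℝ (En n)) :
    ∃ (h : Fin n → ℝ) (w : ℝ),
      (∀ k, ∃ d, HasSecondDerivAt (fun τ => multipointSum c v (fun j => x j + τ • e j k) y) d
        (h k) 0) ∧
      HasBesselAt a (multipointSum c v x) w y ∧ ∑ k, h k + w = 0 := by
  choose h w hh hw hsum using fun j => hv.exists_sum_add_bessel_eq_zero hΩ (hx j) (e j)
  choose d hd using hh
  refine ⟨fun k => ∑ j, c j * h j k, ∑ j, c j * w j,
    fun k => ⟨_, HasSecondDerivAt.sum fun j _ => (hd j k).const_mul (c j)⟩,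
    HasBesselAt.sum fun j _ => (hw j).const_mul (c j), ?_⟩
  rw [Finset.sum_comm, ← Finset.sum_add_distrib]
  refine Finset.sum_eq_zero fun j _ => ?_
  rw [← Finset.mul_sum, ← mul_add, hsum, mul_zero]

theorem HasCoupledLaplacianLE.nonneg_of_isLocalMax [Fintype ι] {v : En n × ℝ → ℝ}
    {Ω : Set (En n × ℝ)} {c : ι → ℝ} (hΦ : HasCoupledLaplacianLE a e Φ x y q)
    (hv : IsAHarmonicOn a v Ω) (hΩ : IsOpen Ω) (hx : ∀ j, (x j, y) ∈ Ω)
    (hmax : IsLocalMax (fun z : (ι → En n) × ℝ => multipointSum c v z.1 z.2 - Φ z.1 z.2) (x, y)) :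
    0 ≤ q := by
  obtain ⟨Ψ, heq, hle, h', w', hh', hw', hq⟩ := hΦ
  obtain ⟨h, w, hh, hw, hsum⟩ := hv.exists_multipointSum_derivatives hΩ hx c e
  have hmax' : ∀ᶠ z in 𝓝 (x, y),
      multipointSum c v z.1 z.2 - Ψ z.1 z.2 ≤ multipointSum c v x y - Ψ x y := by
    filter_upwards [hmax] with z hz
    linarith [hle z.1 z.2]
  have hhorizontal (k : Fin n) : h k - h' k ≤ 0 := by
    obtain ⟨d, hd⟩ := hh k
    obtain ⟨d', hd'⟩ := hh' k
    have hline : Tendsto (fun τ : ℝ => ((fun j => x j + τ • e j k), y)) (𝓝 0) (𝓝 (x, y)) := by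
      simpa using Continuous.tendsto
        (f := fun τ : ℝ => ((fun j => x j + τ • e j k), y)) (by fun_prop) 0
    exact (hd.sub hd').nonpos_of_isLocalMax
      (by simpa [IsLocalMax, IsMaxFilter] using hline.eventually hmax')
  have hvertical : w - w' ≤ 0 :=
    (hw.sub hw').nonpos_of_isLocalMax
      ((Continuous.tendsto (f := fun η : ℝ => (x, η)) (by fun_prop) y).eventually hmax')
  have hle := Finset.sum_le_sum fun k (_ : k ∈ Finset.univ) => hhorizontal k
  rw [Finset.sum_sub_distrib, Finset.sum_const_zero] at hle
  linarith

end InteriorTest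

/-- First-order data of `Φ` at a boundary point `(t, x, 0)`: left time derivative `φt`, one-sided
Lipschitz constant `G` in each point `x j`, and normal derivative `l = lim y ^ (1 - γ) ∂_y Φ`,
recorded through the quotients `(Φ t x y - Φ t x 0) / y ^ γ → l / γ`. -/
structure HasBoundaryJet {ι : Type*} [DecidableEq ι] {n : ℕ} (γ : ℝ) (Φ : ℝ → (ι → En n) → ℝ → ℝ)
    (φt l G t : ℝ) (x : ι → En n) : Prop where
  hasDerivWithinAt_time : HasDerivWithinAt (fun τ => Φ τ x 0) φt (Iic t) t
  nonneg : 0 ≤ G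
  sub_le : ∀ j, ∀ᶠ z in 𝓝 (x j), Φ t (Function.update x j z) 0 - Φ t x 0 ≤ G * ‖z - x j‖
  tendsto_normal : Tendsto (fun y : ℝ => (Φ t x y - Φ t x 0) / y ^ γ) (𝓝[>] 0) (𝓝 (l / γ))

theorem nonneg_of_hasDerivWithinAt_Iic {g : ℝ → ℝ} {g' t : ℝ} (hg : HasDerivWithinAt g g' (Iic t) t)
    (hmax : ∀ᶠ τ in 𝓝[<] t, g τ ≤ g t) : 0 ≤ g' := by
  have hslope := (hasDerivWithinAt_iff_tendsto_slope' (by simp : t ∉ Iio t)).1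
    (hg.mono Iio_subset_Iic_self)
  refine ge_of_tendsto hslope ?_
  filter_upwards [hmax, self_mem_nhdsWithin] with τ hτ hlt
  rw [slope_def_field]
  exact div_nonneg_of_nonpos (sub_nonpos.2 hτ) (sub_nonpos.2 (le_of_lt hlt))

section BoundaryTest

variable {ι : Type*} [DecidableEq ι] {n : ℕ} {γ φt l G φt' l' G' t : ℝ}
  {Φ Φ' : ℝ → (ι → En n) → ℝ → ℝ} {x : ι → En n}

theorem HasBoundaryJet.add (hΦ : HasBoundaryJet γ Φ φt l G t x)
    (hΦ' : HasBoundaryJet γ Φ' φt' l' G' t x) :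
    HasBoundaryJet γ (fun t x y => Φ t x y + Φ' t x y) (φt + φt') (l + l') (G + G') t x where
  hasDerivWithinAt_time := hΦ.hasDerivWithinAt_time.add hΦ'.hasDerivWithinAt_time
  nonneg := add_nonneg hΦ.nonneg hΦ'.nonneg
  sub_le j := by
    filter_upwards [hΦ.sub_le j, hΦ'.sub_le j] with z hz hz'
    linarith
  tendsto_normal := by
    rw [add_div]
    exact (hΦ.tendsto_normal.add hΦ'.tendsto_normal).congr fun y => by ring

theorem HasBoundaryJet.const_mul {c : ℝ} (hc : 0 ≤ c) (hΦ : HasBoundaryJet γ Φ φt l G t x) :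
    HasBoundaryJet γ (fun t x y => c * Φ t x y) (c * φt) (c * l) (c * G) t x where
  hasDerivWithinAt_time := hΦ.hasDerivWithinAt_time.const_mul c
  nonneg := mul_nonneg hc hΦ.nonneg
  sub_le j := by
    filter_upwards [hΦ.sub_le j] with z hz
    rw [← mul_sub, mul_assoc]
    gcongr
  tendsto_normal := by
    rw [mul_div_assoc]
    exact (hΦ.tendsto_normal.const_mul c).congr fun y => by ring

variable [Fintype ι] {c : ι → ℝ}

theorem multipointSum_update_sub (c : ι → ℝ) (v : En n × ℝ → ℝ) (x : ι → En n) (j : ι) (z : En n)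
    (y : ℝ) : multipointSum c v (Function.update x j z) y - multipointSum c v x y =
      c j * v (z, y) - c j * v (x j, y) := by
  unfold multipointSum
  rw [← Finset.sum_sub_distrib, Finset.sum_eq_single j]
  · simp
  · intro i _ hi
    simp [Function.update_of_ne hi]
  · simp

theorem HasBoundaryJet.sum_normal_le (hΦ : HasBoundaryJet γ Φ φt l G t x) (hγ : 0 < γ)
    {v : En n × ℝ → ℝ} {L : ι → ℝ}
    (hL : ∀ j, Tendsto (fun y : ℝ => (v (x j, y) - v (x j, 0)) / y ^ γ) (𝓝[>] 0) (𝓝 (L j / γ)))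
    (hmax : ∀ᶠ y in 𝓝[>] (0 : ℝ),
      multipointSum c v x y - Φ t x y ≤ multipointSum c v x 0 - Φ t x 0) :
    ∑ j, c j * L j ≤ l := by
  have hsum : Tendsto (fun y : ℝ => (multipointSum c v x y - multipointSum c v x 0) / y ^ γ)
      (𝓝[>] 0) (𝓝 (∑ j, c j * (L j / γ))) := by
    refine (tendsto_finsetSum _ fun j _ => (hL j).const_mul (c j)).congr fun y => ?_
    simp only [multipointSum, ← Finset.sum_sub_distrib, Finset.sum_div, ← mul_sub, mul_div_assoc]
  simp only [← mul_div_assoc, ← Finset.sum_div] at hsum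
  refine (div_le_div_iff_of_pos_right hγ).1 (le_of_tendsto_of_tendsto hsum hΦ.tendsto_normal ?_)
  filter_upwards [hmax, self_mem_nhdsWithin] with y hy hy₀
  exact div_le_div_of_nonneg_right (by linarith) (Real.rpow_nonneg (le_of_lt hy₀) γ)

theorem HasBoundaryJet.nonneg_line (hΦ : HasBoundaryJet γ Φ φt l G t x) {v : En n × ℝ → ℝ} {j : ι}
    {w : En n} {d : ℝ} (hd : HasDerivAt (fun τ : ℝ => v (x j + τ • w, 0)) d 0)
    (hmax : ∀ᶠ z in 𝓝 x, multipointSum c v z 0 - Φ t z 0 ≤ multipointSum c v x 0 - Φ t x 0) :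
    0 ≤ c j * d + G * ‖w‖ := by
  have hderiv : HasDerivAt (fun τ : ℝ => c j * v (x j + τ • w, 0) + G * ‖w‖ * τ)
      (c j * d + G * ‖w‖) 0 :=
    ((hd.const_mul (c j)).add ((hasDerivAt_id (0 : ℝ)).const_mul (G * ‖w‖))).congr_deriv (by simp)
  refine nonneg_of_hasDerivWithinAt_Iic hderiv.hasDerivWithinAt ?_
  have hline : Tendsto (fun τ : ℝ => x j + τ • w) (𝓝[<] 0) (𝓝 (x j)) := by
    refine Tendsto.mono_left ?_ nhdsWithin_le_nhds
    simpa using Continuous.tendsto (f := fun τ : ℝ => x j + τ • w) (by fun_prop) 0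
  have hupdate : Tendsto (fun τ : ℝ => Function.update x j (x j + τ • w)) (𝓝[<] 0) (𝓝 x) := by
    simpa using (tendsto_const_nhds (x := x)).update j hline
  filter_upwards [hline.eventually (hΦ.sub_le j), hupdate.eventually hmax, self_mem_nhdsWithin]
    with τ hlip hle hτ
  have hnorm : ‖x j + τ • w - x j‖ = -τ * ‖w‖ := by
    rw [add_sub_cancel_left, norm_smul, Real.norm_eq_abs, abs_of_neg hτ]
  have hsub := multipointSum_update_sub c v x j (x j + τ • w) 0
  rw [hnorm] at hlip
  simp only [zero_smul, add_zero, mul_zero]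
  nlinarith

theorem HasBoundaryJet.time_le_of_isMax (hΦ : HasBoundaryJet γ Φ φt l G t x) (hγ : 0 < γ) {δ : ℝ}
    {u : ℝ → En n × ℝ → ℝ} (hu : IsNormalizedSolution γ δ u) (ht : t ∈ Ioc (-1 : ℝ) 0)
    (hx : ∀ j, ‖x j‖ < 1)
    (hmax_t : ∀ᶠ τ in 𝓝[<] t,
      multipointSum c (u τ) x 0 - Φ τ x 0 ≤ multipointSum c (u t) x 0 - Φ t x 0)
    (hmax_x : ∀ᶠ z in 𝓝 x,
      multipointSum c (u t) z 0 - Φ t z 0 ≤ multipointSum c (u t) x 0 - Φ t x 0)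
    (hmax_y : ∀ᶠ y in 𝓝[>] (0 : ℝ),
      multipointSum c (u t) x y - Φ t x y ≤ multipointSum c (u t) x 0 - Φ t x 0) :
    φt ≤ l + δ * (∑ j, |c j| + Fintype.card ι * G) := by
  choose w ut d L hw hut hd hL heq using fun j => hu.exists_boundary_derivatives hγ ht (hx j)
  have htime : 0 ≤ ∑ j, c j * ut j - φt :=
    nonneg_of_hasDerivWithinAt_Iic (g := fun τ => multipointSum c (u τ) x 0 - Φ τ x 0)
      ((HasDerivWithinAt.fun_sum fun j _ => (hut j).const_mul (c j)).sub
        hΦ.hasDerivWithinAt_time) hmax_t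
  have hnormal := hΦ.sum_normal_le hγ hL hmax_y
  have hpoint (j : ι) : c j * ut j ≤ c j * L j + δ * |c j| + δ * G := by
    have hdrift := hΦ.nonneg_line (hd j) hmax_x
    have hGw : G * ‖w j‖ ≤ G * δ := mul_le_mul_of_nonneg_left (hw j) hΦ.nonneg
    have hrhs : c j * (ut j + d j - L j) ≤ |c j| * δ :=
      (le_abs_self _).trans ((abs_mul _ _).trans_le (by gcongr; exact heq j))
    linarith
  have hsum := Finset.sum_le_sum fun j (_ : j ∈ Finset.univ) => hpoint j
  simp only [Finset.sum_add_distrib, ← Finset.mul_sum, Finset.sum_const, nsmul_eq_mul,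
    Finset.card_univ] at hsum
  linarith

end BoundaryTest

/-- The closed cylinder of times in `[ta, tb]`, tuples of points of the ball of radius `ρ`, and
heights in `[0, ρ]`, on which the comparison principle is applied. -/
def multipointCylinder (ι : Type*) (n : ℕ) (ta tb ρ : ℝ) : Set (ℝ × (ι → En n) × ℝ) :=
  Icc ta tb ×ˢ ((univ.pi fun _ => Metric.closedBall 0 ρ) ×ˢ Icc 0 ρ)

/-- `Φ` is a strict supersolution at `(t, x, y)` for the inequalities satisfied by the sums
`multipointSum c (u t)` over normalized solutions `u`. -/
def IsStrictBarrierAt {ι : Type*} [Fintype ι] [DecidableEq ι] {n : ℕ} (γ δ : ℝ) (c : ι → ℝ)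
    (Φ : ℝ → (ι → En n) → ℝ → ℝ) (t : ℝ) (x : ι → En n) (y : ℝ) : Prop :=
  (0 < y ∧ ∃ e, ∃ q < 0, HasCoupledLaplacianLE (1 - γ) e (Φ t) x y q) ∨
    (y = 0 ∧ ∃ φt l G, HasBoundaryJet γ Φ φt l G t x ∧
      l + δ * (∑ j, |c j| + Fintype.card ι * G) < φt)

section Comparison

variable {ι : Type*} {n : ℕ} {γ δ ta tb ρ t y : ℝ} {u : ℝ → En n × ℝ → ℝ} {x : ι → En n}

theorem mem_multipointCylinder : (t, x, y) ∈ multipointCylinder ι n ta tb ρ ↔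
    t ∈ Icc ta tb ∧ (∀ j, ‖x j‖ ≤ ρ) ∧ y ∈ Icc 0 ρ := by
  simp [multipointCylinder, Set.mem_pi]

theorem isCompact_multipointCylinder : IsCompact (multipointCylinder ι n ta tb ρ) :=
  isCompact_Icc.prod ((isCompact_univ_pi fun _ => isCompact_closedBall 0 ρ).prod isCompact_Icc)

theorem norm_sq_add_sq_lt_one {x : En n} (hρ : ρ ≤ 1 / 2) (hx : ‖x‖ ≤ ρ) (hy : y ∈ Icc 0 ρ) :
    ‖x‖ ^ 2 + y ^ 2 < 1 := by
  nlinarith [norm_nonneg x, hy.1, hy.2]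

theorem eventually_forall_norm_le [Finite ι] (hx : ∀ j, ‖x j‖ < ρ) :
    ∀ᶠ z in 𝓝 x, ∀ j, ‖z j‖ ≤ ρ := by
  refine eventually_all.2 fun j => ?_
  filter_upwards [((continuous_apply j).norm.continuousAt (x := x)).eventually_lt
    continuousAt_const (hx j)] with z hz using hz.le

variable [Fintype ι]

theorem IsNormalizedSolution.continuousOn_multipointSum (hu : IsNormalizedSolution γ δ u)
    (c : ι → ℝ) (hta : -1 ≤ ta) (htb : tb ≤ 0) (hρ : ρ ≤ 1 / 2) :
    ContinuousOn (fun P : ℝ × (ι → En n) × ℝ => multipointSum c (u P.1) P.2.1 P.2.2)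
      (multipointCylinder ι n ta tb ρ) := by
  refine continuousOn_finsetSum _ fun j _ => continuousOn_const.mul ?_
  refine hu.continuousOn.comp (f := fun P : ℝ × (ι → En n) × ℝ => (P.1, (P.2.1 j, P.2.2)))
    (by fun_prop) ?_
  rintro ⟨t, x, y⟩ hP
  obtain ⟨ht, hx, hy⟩ := mem_multipointCylinder.1 hP
  exact ⟨⟨hta.trans ht.1, ht.2.trans htb⟩,
    by simpa using (norm_sq_add_sq_lt_one hρ (hx j) hy).le, hy.1⟩

variable [DecidableEq ι] {c : ι → ℝ} {Φ : ℝ → (ι → En n) → ℝ → ℝ}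

theorem IsStrictBarrierAt.not_isMaxOn (hΦ : IsStrictBarrierAt γ δ c Φ t x y) (hγ : 0 < γ)
    (hu : IsNormalizedSolution γ δ u) (hta : -1 ≤ ta) (htb : tb ≤ 0) (hρ : ρ ≤ 1 / 2)
    (hmem : (t, x, y) ∈ multipointCylinder ι n ta tb ρ) (hx : ∀ j, ‖x j‖ < ρ) (hy : y < ρ)
    (ht : y = 0 → ta < t) :
    ¬ IsMaxOn
      (fun P : ℝ × (ι → En n) × ℝ => multipointSum c (u P.1) P.2.1 P.2.2 - Φ P.1 P.2.1 P.2.2)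
      (multipointCylinder ι n ta tb ρ) (t, x, y) := by
  intro hmax
  have hle {t' x' y'} (ht' : t' ∈ Icc ta tb) (hx' : ∀ j, ‖x' j‖ ≤ ρ) (hy' : y' ∈ Icc 0 ρ) :
      multipointSum c (u t') x' y' - Φ t' x' y' ≤ multipointSum c (u t) x y - Φ t x y :=
    isMaxOn_iff.1 hmax (t', x', y') (mem_multipointCylinder.2 ⟨ht', hx', hy'⟩)
  obtain ⟨htt, hxx, hyy⟩ := mem_multipointCylinder.1 hmem
  rcases hΦ with ⟨hy₀, e, q, hq, hlap⟩ | ⟨rfl, φt, l, G, hjet, hlt⟩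
  · refine hq.not_ge (hlap.nonneg_of_isLocalMax (c := c)
      (hu.isAHarmonicOn ⟨hta.trans htt.1, htt.2.trans htb⟩) (isOpen_halfBall n 1)
      (fun j => ⟨by simpa using norm_sq_add_sq_lt_one hρ (hxx j) hyy, hy₀⟩) ?_)
    filter_upwards [(continuous_fst.tendsto (x, y)).eventually (eventually_forall_norm_le hx),
      (continuous_snd.tendsto (x, y)).eventually (Ioo_mem_nhds hy₀ hy)] with z hz hz'
    exact hle htt hz ⟨hz'.1.le, hz'.2.le⟩
  · refine hlt.not_ge (hjet.time_le_of_isMax hγ hu ⟨hta.trans_lt (ht rfl), htt.2.trans htb⟩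
      (fun j => (hx j).trans_le (by linarith)) ?_ ?_ ?_)
    · filter_upwards [self_mem_nhdsWithin, nhdsWithin_le_nhds (Ioi_mem_nhds (ht rfl))] with τ h₁ h₂
      exact hle ⟨le_of_lt h₂, (le_of_lt h₁).trans htt.2⟩ hxx hyy
    · filter_upwards [eventually_forall_norm_le hx] with z hz using hle htt hz hyy
    · filter_upwards [Ioo_mem_nhdsGT hy] with η hη using hle htt hxx ⟨hη.1.le, hη.2.le⟩

theorem multipointSum_le_of_isStrictBarrierAt (hγ : 0 < γ) (hu : IsNormalizedSolution γ δ u)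
    (hta : -1 ≤ ta) (htb : tb ≤ 0) (hρ : ρ ≤ 1 / 2)
    (hcont : ContinuousOn (fun P : ℝ × (ι → En n) × ℝ => Φ P.1 P.2.1 P.2.2)
      (multipointCylinder ι n ta tb ρ))
    (hbarrier : ∀ t x y, (t, x, y) ∈ multipointCylinder ι n ta tb ρ →
      Φ t x y < multipointSum c (u t) x y →
      (∃ t' x' y', (t', x', y') ∈ multipointCylinder ι n ta tb ρ ∧
        multipointSum c (u t) x y - Φ t x y < multipointSum c (u t') x' y' - Φ t' x' y') ∨
      ((∀ j, ‖x j‖ < ρ) ∧ y < ρ ∧ (y = 0 → ta < t) ∧ IsStrictBarrierAt γ δ c Φ t x y))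
    (hmem : (t, x, y) ∈ multipointCylinder ι n ta tb ρ) : multipointSum c (u t) x y ≤ Φ t x y := by
  obtain ⟨⟨t', x', y'⟩, hmem', hmax⟩ := isCompact_multipointCylinder.exists_isMaxOn ⟨_, hmem⟩
    ((hu.continuousOn_multipointSum c hta htb hρ).sub hcont)
  by_contra! hlt
  have hle : multipointSum c (u t) x y - Φ t x y ≤ multipointSum c (u t') x' y' - Φ t' x' y' :=
    hmax hmem
  rcases hbarrier t' x' y' hmem' (by linarith) with
    ⟨t'', x'', y'', hmem'', hlt''⟩ | ⟨hx, hy, ht, hΦ⟩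
  · exact hlt''.not_ge (hmax hmem'')
  · exact hΦ.not_isMaxOn hγ hu hta htb hρ hmem' hx hy ht hmax

end Comparison

/-! ### Building blocks of barriers -/

section LaplacianBlocks

variable {ι : Type*} {n : ℕ} {a y q : ℝ} {e : ι → OrthonormalBasis (Fin n) ℝ (En n)}
  {x : ι → En n} {i k : ι}

theorem HasCoupledLaplacianLE.of_touching {Φ Ψ : (ι → En n) → ℝ → ℝ}
    (hΨ : HasCoupledLaplacianLE a e Ψ x y q) (heq : Ψ x y = Φ x y)
    (hle : ∀ x' y', Φ x' y' ≤ Ψ x' y') : HasCoupledLaplacianLE a e Φ x y q := by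
  obtain ⟨Ψ', heq', hle', hrest⟩ := hΨ
  exact ⟨Ψ', heq'.trans heq, fun x' y' => (hle x' y').trans (hle' x' y'), hrest⟩

theorem hasCoupledLaplacianLE_of_height {g : ℝ → ℝ} (hg : HasBesselAt a g q y) :
    HasCoupledLaplacianLE a e (fun _ y => g y) x y q :=
  hasCoupledLaplacianLE_of_le (fun _ => 0) q (fun _ => ⟨0, hasSecondDerivAt_const _ 0⟩) hg (by simp)

theorem hasCoupledLaplacianLE_of_points {φ : (ι → En n) → ℝ} {h : Fin n → ℝ}
    (hφ : ∀ k, ∃ d, HasSecondDerivAt (fun τ => φ fun j => x j + τ • e j k) d (h k) 0)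
    (hq : ∑ k, h k ≤ q) : HasCoupledLaplacianLE a e (fun x _ => φ x) x y q :=
  hasCoupledLaplacianLE_of_le h 0 hφ (hasBesselAt_const a _ y) (by simpa using hq)

theorem hasSecondDerivAt_norm_add_smul_sq (v w : En n) :
    HasSecondDerivAt (fun τ : ℝ => ‖v + τ • w‖ ^ 2) (2 * ⟪v, w⟫) (2 * ‖w‖ ^ 2) 0 := by
  have hquad := hasSecondDerivAt_quadratic (‖v‖ ^ 2) (2 * ⟪v, w⟫) (‖w‖ ^ 2) 0
  simp only [mul_zero, add_zero] at hquad
  refine hquad.congr_fun (.of_forall fun τ => ?_)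
  simp only [norm_add_sq_real, inner_smul_right, norm_smul, mul_pow, Real.norm_eq_abs, sq_abs]
  ring

theorem hasCoupledLaplacianLE_norm_sub_sub_sq (hik : e i = e k) (h : En n) :
    HasCoupledLaplacianLE a e (fun x _ => ‖x i - x k - h‖ ^ 2) x y 0 := by
  refine hasCoupledLaplacianLE_of_points (φ := fun x => ‖x i - x k - h‖ ^ 2) (h := fun _ => 0)
    (fun m => ⟨0, ?_⟩) (by simp)
  simpa only [hik, add_sub_add_right_eq_sub] using hasSecondDerivAt_const _ 0

theorem hasCoupledLaplacianLE_norm_sub_sq (x₀ : En n) :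
    HasCoupledLaplacianLE a e (fun x _ => ‖x i - x₀‖ ^ 2) x y (2 * n) := by
  refine hasCoupledLaplacianLE_of_points (φ := fun x => ‖x i - x₀‖ ^ 2) (h := fun _ => 2)
    (fun m => ⟨2 * ⟪x i - x₀, e i m⟫, ?_⟩) (by simp [mul_comm])
  simpa [add_sub_right_comm] using hasSecondDerivAt_norm_add_smul_sq (x i - x₀) (e i m)

theorem hasBesselAt_sub_sq (a y₀ y : ℝ) :
    HasBesselAt a (fun z => (z - y₀) ^ 2) (2 + a / y * (2 * (y - y₀))) y := by
  have hquad := hasSecondDerivAt_quadratic (y₀ ^ 2) (-2 * y₀) 1 y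
  exact ⟨_, _, hquad.congr_fun (.of_forall fun z => by ring), by ring⟩

theorem hasCoupledLaplacianLE_localization (ha₀ : 0 ≤ a) (ha₁ : a ≤ 1) (hy : 0 < y) (x₀ : En n)
    {y₀ : ℝ} (hy₀ : 0 ≤ y₀) :
    HasCoupledLaplacianLE a e (fun x y => ‖x i - x₀‖ ^ 2 + (y - y₀) ^ 2) x y (2 * n + 4) := by
  refine ((hasCoupledLaplacianLE_norm_sub_sq x₀).add
    (hasCoupledLaplacianLE_of_height (hasBesselAt_sub_sq a y₀ y))).mono ?_
  have : a / y * (2 * (y - y₀)) ≤ 2 := by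
    rw [div_mul_eq_mul_div, div_le_iff₀ hy]
    nlinarith
  linarith

end LaplacianBlocks

theorem tendsto_rpow_div_rpow {γ p : ℝ} (h : γ < p) :
    Tendsto (fun y : ℝ => y ^ p / y ^ γ) (𝓝[>] 0) (𝓝 0) := by
  have hlim : Tendsto (fun y : ℝ => y ^ (p - γ)) (𝓝[>] 0) (𝓝 0) := by
    have hcont := Real.continuousAt_rpow_const 0 (p - γ) (Or.inr (by linarith))
    rw [ContinuousAt, Real.zero_rpow (by linarith)] at hcont
    exact hcont.mono_left nhdsWithin_le_nhds
  refine hlim.congr' ?_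
  filter_upwards [self_mem_nhdsWithin] with y hy using Real.rpow_sub hy p γ

section JetBlocks

variable {ι : Type*} [DecidableEq ι] {n : ℕ} {γ t l G : ℝ} {x : ι → En n} {i j k : ι}

theorem hasBoundaryJet_of_time {g : ℝ → ℝ} {g' : ℝ} (hg : HasDerivWithinAt g g' (Iic t) t) :
    HasBoundaryJet γ (fun t (_ : ι → En n) _ => g t) g' 0 0 t x where
  hasDerivWithinAt_time := hg
  nonneg := le_rfl
  sub_le j := by simp
  tendsto_normal := by simp

theorem hasBoundaryJet_of_height {g : ℝ → ℝ}
    (hg : Tendsto (fun y : ℝ => (g y - g 0) / y ^ γ) (𝓝[>] 0) (𝓝 (l / γ))) :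
    HasBoundaryJet γ (fun _ (_ : ι → En n) y => g y) 0 l 0 t x where
  hasDerivWithinAt_time := hasDerivWithinAt_const ..
  nonneg := le_rfl
  sub_le j := by simp
  tendsto_normal := hg

theorem hasBoundaryJet_of_points {φ : (ι → En n) → ℝ} (hG : 0 ≤ G)
    (hφ : ∀ j, ∀ᶠ z in 𝓝 (x j), φ (Function.update x j z) - φ x ≤ G * ‖z - x j‖) :
    HasBoundaryJet γ (fun _ x _ => φ x) 0 0 G t x where
  hasDerivWithinAt_time := hasDerivWithinAt_const ..
  nonneg := hG
  sub_le := hφ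
  tendsto_normal := by simp

theorem norm_sq_sub_norm_sq_le {v w : En n} {L : ℝ} (hv : ‖v‖ ≤ L) (hw : ‖w‖ ≤ L) :
    ‖w‖ ^ 2 - ‖v‖ ^ 2 ≤ 2 * L * ‖w - v‖ := by
  nlinarith [norm_sub_norm_le w v, norm_nonneg v, norm_nonneg w, norm_nonneg (w - v)]

theorem norm_update_sub_apply_le (x : ι → En n) (j i : ι) (z : En n) :
    ‖Function.update x j z i - x i‖ ≤ ‖z - x j‖ := by
  rcases eq_or_ne i j with rfl | hij
  · simp
  · simp [Function.update_of_ne hij]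

theorem norm_update_sub_sub_apply_le (x : ι → En n) (j i k : ι) (z : En n) :
    ‖Function.update x j z i - Function.update x j z k - (x i - x k)‖ ≤ 2 * ‖z - x j‖ := by
  rw [sub_sub_sub_comm]
  linarith [norm_sub_le (Function.update x j z i - x i) (Function.update x j z k - x k),
    norm_update_sub_apply_le x j i z, norm_update_sub_apply_le x j k z]

theorem eventually_norm_sq_update_sub_le {ℓ : (ι → En n) → En n} {K L : ℝ} (hL₀ : ‖ℓ x‖ < L)
    (hK : ∀ z, ‖ℓ (Function.update x j z) - ℓ x‖ ≤ K * ‖z - x j‖) :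
    ∀ᶠ z in 𝓝 (x j), ‖ℓ (Function.update x j z)‖ ^ 2 - ‖ℓ x‖ ^ 2 ≤ 2 * L * K * ‖z - x j‖ := by
  have hnear : ∀ᶠ z in 𝓝 (x j), ‖ℓ x‖ + K * ‖z - x j‖ < L :=
    ContinuousAt.eventually_lt (by fun_prop) continuousAt_const (by simpa using hL₀)
  filter_upwards [hnear] with z hz
  have hz' : ‖ℓ (Function.update x j z)‖ ≤ L := by
    linarith [norm_sub_norm_le (ℓ (Function.update x j z)) (ℓ x), hK z]
  refine (norm_sq_sub_norm_sq_le hL₀.le hz').trans ?_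
  rw [mul_assoc _ K]
  exact mul_le_mul_of_nonneg_left (hK z) (by linarith [norm_nonneg (ℓ x)])

theorem hasBoundaryJet_norm_sub_sub_sq {h : En n} (hh : ‖h‖ ≤ 1) (hx : ∀ j, ‖x j‖ < 1) :
    HasBoundaryJet γ (fun _ x _ => ‖x i - x k - h‖ ^ 2) 0 0 12 t x := by
  refine hasBoundaryJet_of_points (φ := fun x => ‖x i - x k - h‖ ^ 2) (by norm_num) fun j => ?_
  have hlt : ‖x i - x k - h‖ < 3 := by
    linarith [norm_sub_le (x i - x k) h, norm_sub_le (x i) (x k), hx i, hx k]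
  convert eventually_norm_sq_update_sub_le (ℓ := fun x => x i - x k - h) (K := 2) hlt fun z => ?_
    using 4
  · norm_num
  · simpa only [sub_sub_sub_cancel_right] using norm_update_sub_sub_apply_le x j i k z

theorem hasBoundaryJet_norm_sub_sq {x₀ : En n} (hx₀ : ‖x₀‖ ≤ 1) (hx : ‖x i‖ < 1) :
    HasBoundaryJet γ (fun _ x _ => ‖x i - x₀‖ ^ 2) 0 0 4 t x := by
  refine hasBoundaryJet_of_points (φ := fun x => ‖x i - x₀‖ ^ 2) (by norm_num) fun j => ?_
  have hlt : ‖x i - x₀‖ < 2 := by linarith [norm_sub_le (x i) x₀]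
  convert eventually_norm_sq_update_sub_le (ℓ := fun x => x i - x₀) (K := 1) hlt fun z => ?_
    using 4
  · norm_num
  · simpa using norm_update_sub_apply_le x j i z

theorem hasBoundaryJet_localization (hγ : γ < 1) {x₀ : En n} (hx₀ : ‖x₀‖ ≤ 1) (hx : ‖x i‖ < 1)
    (y₀ : ℝ) : HasBoundaryJet γ (fun _ x y => ‖x i - x₀‖ ^ 2 + (y - y₀) ^ 2) 0 0 4 t x := by
  have hlim : Tendsto (fun y : ℝ => ((y - y₀) ^ 2 - (0 - y₀) ^ 2) / y ^ γ) (𝓝[>] 0)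
      (𝓝 (0 / γ)) := by
    have hlim := (tendsto_rpow_div_rpow (hγ.trans one_lt_two)).sub
      ((tendsto_rpow_div_rpow hγ).const_mul (2 * y₀))
    simp only [mul_zero, sub_zero] at hlim
    rw [zero_div]
    refine hlim.congr fun y => ?_
    simp only [Real.rpow_two, Real.rpow_one]
    ring
  simpa using (hasBoundaryJet_norm_sub_sq hx₀ hx).add
    (hasBoundaryJet_of_height (g := fun y => (y - y₀) ^ 2) hlim)

end JetBlocks

/-! ### The reflection profile -/

/-- The profile of the reflection coupling, as a function of half the distance `r` between two
points and of their height `y`. The correction `-y ^ γ r² / (r² + y²)` has normal derivative `-γ`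
on the boundary at positive distance, and the concavity of `N r ^ γ` compensates it inside. -/
def reflectionProfile (γ N r y : ℝ) : ℝ := N * r ^ γ - y ^ γ * (r ^ 2 / (r ^ 2 + y ^ 2))

section ReflectionProfile

variable {γ N r y : ℝ}

theorem rpow_mul_sq_le (hγ₀ : 0 ≤ γ) (hγ₂ : γ ≤ 2) (hr : 0 < r) (hy : 0 ≤ y) :
    y ^ γ * r ^ 2 ≤ r ^ γ * (r ^ 2 + y ^ 2) := by
  rcases le_total y r with hyr | hry
  · have hpow : y ^ γ ≤ r ^ γ := Real.rpow_le_rpow hy hyr hγ₀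
    calc y ^ γ * r ^ 2 ≤ r ^ γ * r ^ 2 := by gcongr
      _ ≤ r ^ γ * (r ^ 2 + y ^ 2) := by gcongr; linarith [sq_nonneg y]
  · have hy : 0 < y := hr.trans_le hry
    have split {z : ℝ} (hz : 0 < z) : z ^ 2 = z ^ γ * z ^ (2 - γ) := by
      rw [← Real.rpow_add hz, add_sub_cancel, Real.rpow_two]
    calc y ^ γ * r ^ 2 = r ^ γ * (y ^ γ * r ^ (2 - γ)) := by rw [split hr]; ring
      _ ≤ r ^ γ * (y ^ γ * y ^ (2 - γ)) := by gcongr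
      _ = r ^ γ * y ^ 2 := by rw [split hy]
      _ ≤ r ^ γ * (r ^ 2 + y ^ 2) := by gcongr; linarith [sq_nonneg r]

theorem le_reflectionProfile (hγ₀ : 0 ≤ γ) (hγ₂ : γ ≤ 2) (hr : 0 < r) (hy : 0 ≤ y) :
    (N - 1) * r ^ γ ≤ reflectionProfile γ N r y := by
  have hcorr : y ^ γ * (r ^ 2 / (r ^ 2 + y ^ 2)) ≤ r ^ γ := by
    rw [← mul_div_assoc, div_le_iff₀ (by positivity)]
    exact rpow_mul_sq_le hγ₀ hγ₂ hr hy
  unfold reflectionProfile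
  linarith

theorem reflectionProfile_le (hy : 0 ≤ y) : reflectionProfile γ N r y ≤ N * r ^ γ :=
  sub_le_self _ (by positivity)

theorem reflectionProfile_zero (hγ : γ ≠ 0) : reflectionProfile γ N r 0 = N * r ^ γ := by
  simp [reflectionProfile, Real.zero_rpow hγ]

theorem hasSecondDerivAt_reflectionProfile (hr : 0 < r) :
    ∃ d, HasSecondDerivAt (fun z => reflectionProfile γ N z y) d
      (N * (γ * ((γ - 1) * r ^ (γ - 2))) +
        y ^ γ * (y ^ 2 * ((6 * r ^ 2 - 2 * y ^ 2) / (y ^ 2 + r ^ 2) ^ 3))) r := by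
  have hq : y ^ 2 + r ^ 2 ≠ 0 := by positivity
  have hsum := ((hasSecondDerivAt_rpow_const hr.ne' γ).const_mul N).add
    (((hasSecondDerivAt_const (-1) r).add
      ((hasSecondDerivAt_inv_add_sq hq).const_mul (y ^ 2))).const_mul (y ^ γ))
  rw [zero_add, zero_add] at hsum
  refine ⟨_, hsum.congr_fun ?_⟩
  filter_upwards [Ioi_mem_nhds hr] with z hz
  have hz : 0 < z := hz
  have hq : y ^ 2 + z ^ 2 ≠ 0 := by positivity
  rw [reflectionProfile, add_comm (z ^ 2)]
  field_simp
  ring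

theorem hasBesselAt_reflectionProfile (hr : 0 < r) (hy : 0 < y) :
    HasBesselAt (1 - γ) (reflectionProfile γ N r)
      (-r ^ 2 * (y ^ γ * ((6 * y ^ 2 - 2 * r ^ 2) / (r ^ 2 + y ^ 2) ^ 3 +
        (1 + γ) / y * (-(2 * y) / (r ^ 2 + y ^ 2) ^ 2)))) y := by
  have hq : r ^ 2 + y ^ 2 ≠ 0 := by positivity
  have hsum := (hasBesselAt_const (1 - γ) (N * r ^ γ) y).add
    ((hasBesselAt_rpow_mul hy γ (hasSecondDerivAt_inv_add_sq hq)).const_mul (-r ^ 2))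
  rw [zero_add] at hsum
  convert hsum using 2 with z
  rw [reflectionProfile]
  ring

theorem reflectionProfile_laplacian_le (hγ₀ : 0 ≤ γ) (hγ₁ : γ ≤ 1) (hr : 0 < r) (hy : 0 < y) :
    N * (γ * ((γ - 1) * r ^ (γ - 2))) +
        y ^ γ * (y ^ 2 * ((6 * r ^ 2 - 2 * y ^ 2) / (y ^ 2 + r ^ 2) ^ 3)) +
      -r ^ 2 * (y ^ γ * ((6 * y ^ 2 - 2 * r ^ 2) / (r ^ 2 + y ^ 2) ^ 3 +
        (1 + γ) / y * (-(2 * y) / (r ^ 2 + y ^ 2) ^ 2))) ≤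
    -(N * γ * (1 - γ) - 6) * r ^ (γ - 2) := by
  have hcorr : y ^ γ * (2 * (r ^ 2 - y ^ 2) + 2 * (1 + γ) * r ^ 2) / (r ^ 2 + y ^ 2) ^ 2 ≤
      6 * r ^ (γ - 2) := by
    calc _ ≤ y ^ γ * (6 * r ^ 2) / (r ^ 2 + y ^ 2) ^ 2 := by
          gcongr
          nlinarith [sq_nonneg y, sq_nonneg r]
      _ = 6 * (y ^ γ * r ^ 2) / (r ^ 2 + y ^ 2) ^ 2 := by ring
      _ ≤ 6 * (r ^ γ * (r ^ 2 + y ^ 2)) / (r ^ 2 + y ^ 2) ^ 2 := by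
          exact div_le_div_of_nonneg_right (mul_le_mul_of_nonneg_left
            (rpow_mul_sq_le hγ₀ (by linarith) hr hy.le) (by norm_num)) (by positivity)
      _ = 6 * (r ^ γ / (r ^ 2 + y ^ 2)) := by field_simp
      _ ≤ 6 * (r ^ γ / r ^ 2) := by gcongr; linarith [sq_nonneg y]
      _ = 6 * r ^ (γ - 2) := by rw [Real.rpow_sub hr, Real.rpow_two]
  calc _ = -(N * γ * (1 - γ)) * r ^ (γ - 2) +
        y ^ γ * (2 * (r ^ 2 - y ^ 2) + 2 * (1 + γ) * r ^ 2) / (r ^ 2 + y ^ 2) ^ 2 := by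
        rw [add_comm (y ^ 2)]
        field_simp
        ring
    _ ≤ _ := by linarith

theorem tendsto_reflectionProfile_sub_div_rpow (hγ : γ ≠ 0) (hr : 0 < r) :
    Tendsto (fun y : ℝ => (reflectionProfile γ N r y - reflectionProfile γ N r 0) / y ^ γ)
      (𝓝[>] 0) (𝓝 (-1)) := by
  have hcont : ContinuousAt (fun y : ℝ => -(r ^ 2 / (r ^ 2 + y ^ 2))) 0 :=
    (ContinuousAt.div (by fun_prop) (by fun_prop) (by positivity)).neg
  have hlim : Tendsto (fun y : ℝ => -(r ^ 2 / (r ^ 2 + y ^ 2))) (𝓝[>] 0) (𝓝 (-1)) := by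
    convert hcont.tendsto.mono_left nhdsWithin_le_nhds using 2
    field_simp
    simp
  refine hlim.congr' ?_
  filter_upwards [self_mem_nhdsWithin] with y hy
  have := Real.rpow_pos_of_pos (show 0 < y from hy) γ
  rw [reflectionProfile_zero hγ, reflectionProfile]
  field_simp
  ring

end ReflectionProfile

theorem rpow_sub_rpow_le {γ κ a b : ℝ} (hγ₀ : 0 ≤ γ) (hγ₁ : γ ≤ 1) (hκ : 0 < κ) (ha : κ ≤ a)
    (hb : 0 ≤ b) : b ^ γ - a ^ γ ≤ κ ^ (γ - 1) * |b - a| := by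
  have ha₀ : 0 < a := hκ.trans_le ha
  rcases le_total b a with hba | hab
  · exact (sub_nonpos.2 (Real.rpow_le_rpow hb hba hγ₀)).trans (by positivity)
  have hbern : (b / a) ^ γ ≤ 1 + γ * (b / a - 1) := by
    simpa using rpow_one_add_le_one_add_mul_self (s := b / a - 1)
      (by linarith [div_nonneg hb ha₀.le]) hγ₀ hγ₁
  rw [Real.div_rpow hb ha₀.le, div_le_iff₀ (by positivity)] at hbern
  have hslope : 0 ≤ a ^ (γ - 1) * (b - a) := mul_nonneg (by positivity) (sub_nonneg.2 hab)
  calc b ^ γ - a ^ γ ≤ γ * (a ^ γ / a * (b - a)) := by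
        have : γ * (a ^ γ / a * (b - a)) = γ * (b / a - 1) * a ^ γ := by field_simp
        linarith
    _ = γ * (a ^ (γ - 1) * (b - a)) := by rw [Real.rpow_sub_one ha₀.ne']
    _ ≤ a ^ (γ - 1) * (b - a) := mul_le_of_le_one_left hslope hγ₁
    _ ≤ κ ^ (γ - 1) * |b - a| := by
        rw [abs_of_nonneg (sub_nonneg.2 hab)]
        exact mul_le_mul_of_nonneg_right (Real.rpow_le_rpow_of_nonpos hκ ha (by linarith))
          (sub_nonneg.2 hab)

theorem reflection_orthogonal_singleton {n : ℕ} (d v : En n) :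
    (ℝ ∙ d)ᗮ.reflection v = v - (2 * (⟪d, v⟫ / ‖d‖ ^ 2)) • d := by
  rw [Submodule.reflection_orthogonal_apply, Submodule.reflection_singleton_apply, two_smul,
    two_mul, add_smul, neg_sub]
  rfl

theorem norm_add_smul_sub_reflection {n : ℕ} {d : En n} (hd : d ≠ 0) (v : En n) :
    ∀ᶠ τ : ℝ in 𝓝 0,
      ‖d + τ • (v - (ℝ ∙ d)ᗮ.reflection v)‖ = ‖d‖ + 2 * (⟪d, v⟫ / ‖d‖) * τ := by
  have hpos : ∀ᶠ τ : ℝ in 𝓝 0, 0 < 1 + τ * (2 * (⟪d, v⟫ / ‖d‖ ^ 2)) :=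
    continuousAt_const.eventually_lt (by fun_prop) (by simp)
  filter_upwards [hpos] with τ hτ
  have hdir : d + τ • (v - (ℝ ∙ d)ᗮ.reflection v) = (1 + τ * (2 * (⟪d, v⟫ / ‖d‖ ^ 2))) • d := by
    rw [reflection_orthogonal_singleton, sub_sub_cancel, smul_smul, add_smul, one_smul]
  have hd' : ‖d‖ ≠ 0 := norm_ne_zero_iff.2 hd
  rw [hdir, norm_smul, Real.norm_eq_abs, abs_of_pos hτ]
  field_simp

section ReflectionCoupling

variable {ι : Type*} {n : ℕ} {γ κ N t y : ℝ} {x : ι → En n} {i k : ι}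

/- The frames are mirror images of each other in the hyperplane between `x i` and `x k`, so only the
component along `x i - x k` changes the distance, and it does so at twice the speed. -/
theorem hasCoupledLaplacianLE_reflectionProfile {e : ι → OrthonormalBasis (Fin n) ℝ (En n)}
    (hγ₀ : 0 ≤ γ) (hγ₁ : γ ≤ 1) (hκ : 0 ≤ κ) (hy : 0 < y) (hne : x i ≠ x k)
    (hek : ∀ m, e k m = (ℝ ∙ (x i - x k))ᗮ.reflection (e i m)) :
    HasCoupledLaplacianLE (1 - γ) e (fun x y => reflectionProfile γ N (‖x i - x k‖ / 2 + κ) y) x y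
      (-(N * γ * (1 - γ) - 6) * (‖x i - x k‖ / 2 + κ) ^ (γ - 2)) := by
  have hd : x i - x k ≠ 0 := sub_ne_zero.2 hne
  have hd₀ : 0 < ‖x i - x k‖ := norm_pos_iff.2 hd
  have hr : 0 < ‖x i - x k‖ / 2 + κ := by positivity
  obtain ⟨g', hg⟩ := hasSecondDerivAt_reflectionProfile (γ := γ) (N := N) (y := y) hr
  refine hasCoupledLaplacianLE_of_le (fun m => (⟪x i - x k, e i m⟫ / ‖x i - x k‖) ^ 2 * _) _
    (fun m => ⟨_, (hg.comp_affine (c := ⟪x i - x k, e i m⟫ / ‖x i - x k‖)).congr_fun ?_⟩)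
    (hasBesselAt_reflectionProfile hr hy) ?_
  · filter_upwards [norm_add_smul_sub_reflection hd (e i m)] with τ hτ
    have hdiff : x i + τ • e i m - (x k + τ • e k m) =
        x i - x k + τ • (e i m - (ℝ ∙ (x i - x k))ᗮ.reflection (e i m)) := by
      rw [hek, smul_sub]
      abel
    rw [hdiff, hτ]
    ring_nf
  · have hparseval : ∑ m, (⟪x i - x k, e i m⟫ / ‖x i - x k‖) ^ 2 = 1 := by
      have := (e i).sum_sq_norm_inner_left (x i - x k)
      simp only [Real.norm_eq_abs, sq_abs] at this
      simp only [div_pow]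
      rw [← Finset.sum_div, this, div_self (by positivity)]
    rw [← Finset.sum_mul, hparseval, one_mul]
    exact reflectionProfile_laplacian_le hγ₀ hγ₁ hr hy

theorem hasBoundaryJet_reflectionProfile [DecidableEq ι] (hγ₀ : 0 < γ) (hγ₁ : γ ≤ 1) (hκ : 0 < κ)
    (hN : 0 ≤ N) :
    HasBoundaryJet γ (fun _ x y => reflectionProfile γ N (‖x i - x k‖ / 2 + κ) y) 0 (-γ)
      (N * κ ^ (γ - 1)) t x where
  hasDerivWithinAt_time := hasDerivWithinAt_const ..
  nonneg := by positivity
  sub_le j := .of_forall fun z => by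
    simp only [reflectionProfile_zero hγ₀.ne']
    set x' := Function.update x j z
    have hnorm : |‖x' i - x' k‖ / 2 + κ - (‖x i - x k‖ / 2 + κ)| ≤ ‖z - x j‖ := by
      have hdist := (abs_norm_sub_norm_le (x' i - x' k) (x i - x k)).trans
        (norm_update_sub_sub_apply_le x j i k z)
      rw [abs_le] at hdist ⊢
      constructor <;> linarith
    rw [← mul_sub, mul_assoc]
    gcongr
    exact (rpow_sub_rpow_le hγ₀.le hγ₁ hκ (by linarith [norm_nonneg (x i - x k)])
      (by positivity)).trans (by gcongr)
  tendsto_normal := by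
    simpa only [neg_div, div_self hγ₀.ne'] using
      tendsto_reflectionProfile_sub_div_rpow hγ₀.ne' (by positivity)

theorem continuous_reflectionProfile {X : Type*} [TopologicalSpace X] {r h : X → ℝ} (hγ : 0 ≤ γ)
    (hr : Continuous r) (hh : Continuous h) (hr₀ : ∀ p, 0 < r p) :
    Continuous fun p => reflectionProfile γ N (r p) (h p) :=
  ((hr.rpow_const fun _ => Or.inr hγ).const_mul N).sub ((hh.rpow_const fun _ => Or.inr hγ).mul
    ((hr.pow 2).div ((hr.pow 2).add (hh.pow 2)) fun p => by have := hr₀ p; positivity))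

end ReflectionCoupling

/-! ### The four-point estimate -/

/-- The barrier for `c (u x₀ - u x₂) + (u x₁ - u x₃)`: a reflection profile in the pair `x₁, x₃`, a
localization at time `t₁` near `(xₐ, y₀)`, and a penalization of the increments `x₀ - x₁` and
`x₂ - x₃` away from `h`. -/
def fourPointBarrier {n : ℕ} (γ N κ K₁ K₂ m N' ε : ℝ) (h xₐ : En n) (y₀ t₁ t : ℝ)
    (x : Fin 4 → En n) (y : ℝ) : ℝ :=
  m * (K₁ * reflectionProfile γ N (‖x 1 - x 3‖ / 2 + κ) y +
      K₂ * ((‖x 1 - xₐ‖ ^ 2 + (y - y₀) ^ 2) + (t₁ - t))) +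
    N' * (‖x 0 - x 1 - h‖ ^ 2 + ‖x 2 - x 3 - h‖ ^ 2) + ε

section FourPointBarrier

variable {n : ℕ} {γ δ c N κ K₁ K₂ m N' ε y₀ t₁ t y : ℝ} {h xₐ : En n} {x : Fin 4 → En n}

theorem isStrictBarrierAt_fourPointBarrier_of_pos (hγ₀ : 0 ≤ γ) (hγ₁ : γ ≤ 1) (hm : 0 < m)
    (hκ : 0 ≤ κ) (hK₁ : 0 ≤ K₁) (hK₂ : 0 ≤ K₂) (hN' : 0 ≤ N') (hy₀ : 0 ≤ y₀)
    (hN : 7 ≤ N * γ * (1 - γ)) (hK : K₂ * (2 * n + 4) < K₁) (hy : 0 < y) (hne : x 1 ≠ x 3)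
    (hr : ‖x 1 - x 3‖ / 2 + κ ≤ 1) :
    IsStrictBarrierAt γ δ ![c, 1, -c, -1]
      (fourPointBarrier γ N κ K₁ K₂ m N' ε h xₐ y₀ t₁) t x y := by
  let b := EuclideanSpace.basisFun (Fin n) ℝ
  let ρ := b.map (ℝ ∙ (x 1 - x 3))ᗮ.reflection
  let e : Fin 4 → OrthonormalBasis (Fin n) ℝ (En n) := ![b, b, ρ, ρ]
  have hprofile := hasCoupledLaplacianLE_reflectionProfile (e := e) (i := 1) (k := 3) (N := N)
    hγ₀ hγ₁ hκ hy hne fun m => b.map_apply _ m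
  have hloc := (hasCoupledLaplacianLE_localization (a := 1 - γ) (e := e) (i := 1) (x := x)
    (by linarith) (by linarith) hy xₐ hy₀).add
    (hasCoupledLaplacianLE_of_height (hasBesselAt_const (1 - γ) (t₁ - t) y))
  have hpen := (hasCoupledLaplacianLE_norm_sub_sub_sq (a := 1 - γ) (x := x) (y := y)
    (i := 0) (k := 1) (e := e) rfl h).add
    (hasCoupledLaplacianLE_norm_sub_sub_sq (i := 2) (k := 3) rfl h)
  refine Or.inl ⟨hy, e, _, ?_, ((((hprofile.const_mul hK₁).add (hloc.const_mul hK₂)).const_mul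
    hm.le).add (hpen.const_mul hN')).add
    (hasCoupledLaplacianLE_of_height (hasBesselAt_const (1 - γ) ε y))⟩
  have hpow : 1 ≤ (‖x 1 - x 3‖ / 2 + κ) ^ (γ - 2) :=
    Real.one_le_rpow_of_pos_of_le_one_of_nonpos
      (by have := norm_pos_iff.2 (sub_ne_zero.2 hne); positivity) hr (by linarith)
  have hdecay : K₁ * (-(N * γ * (1 - γ) - 6) * (‖x 1 - x 3‖ / 2 + κ) ^ (γ - 2)) ≤ -K₁ := by
    nlinarith [one_le_mul_of_one_le_of_one_le (show 1 ≤ N * γ * (1 - γ) - 6 by linarith) hpow]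
  nlinarith

theorem isStrictBarrierAt_fourPointBarrier_of_eq_zero (hγ₀ : 0 < γ) (hγ₁ : γ < 1) (hm : 0 ≤ m)
    (hκ : 0 < κ) (hK₁ : 0 ≤ K₁) (hK₂ : 0 ≤ K₂) (hN : 0 ≤ N) (hN' : 0 ≤ N') (hδ₀ : 0 ≤ δ)
    (hxₐ : ‖xₐ‖ ≤ 1) (hh : ‖h‖ ≤ 1) (hc : |c| ≤ 1) (hK : K₂ + 1 ≤ γ * K₁)
    (hδ : δ * (4 + 4 * (m * (K₁ * (N * κ ^ (γ - 1)) + K₂ * 4) + N' * 24)) < m)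
    (hx : ∀ j, ‖x j‖ < 1) :
    IsStrictBarrierAt γ δ ![c, 1, -c, -1]
      (fourPointBarrier γ N κ K₁ K₂ m N' ε h xₐ y₀ t₁) t x 0 := by
  have hprofile := hasBoundaryJet_reflectionProfile (t := t) (x := x) (i := 1) (k := 3) hγ₀ hγ₁.le
    hκ hN
  have htime : HasDerivWithinAt (fun τ => t₁ - τ) (-1) (Iic t) t :=
    ((hasDerivAt_id t).const_sub t₁).hasDerivWithinAt
  have hloc := (hasBoundaryJet_localization (t := t) hγ₁ hxₐ (hx 1) y₀).add
    (hasBoundaryJet_of_time (γ := γ) (x := x) htime)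
  have hpen := (hasBoundaryJet_norm_sub_sub_sq (γ := γ) (t := t) (i := 0) (k := 1) hh hx).add
    (hasBoundaryJet_norm_sub_sub_sq (i := 2) (k := 3) hh hx)
  refine Or.inr ⟨rfl, _, _, _, ((((hprofile.const_mul hK₁).add (hloc.const_mul hK₂)).const_mul
    hm).add (hpen.const_mul hN')).add
    (hasBoundaryJet_of_time (hasDerivWithinAt_const t (Iic t) ε)), ?_⟩
  have hsum : ∑ j, |(![c, 1, -c, -1] : Fin 4 → ℝ) j| = 2 * |c| + 2 := by
    simp [Fin.sum_univ_four]
    ring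
  rw [hsum, Fintype.card_fin]
  push_cast
  nlinarith [mul_nonneg hδ₀ (sub_nonneg.2 hc), mul_le_mul_of_nonneg_left hK hm]

theorem continuous_fourPointBarrier (hγ : 0 ≤ γ) (hκ : 0 < κ) :
    Continuous fun P : ℝ × (Fin 4 → En n) × ℝ =>
      fourPointBarrier γ N κ K₁ K₂ m N' ε h xₐ y₀ t₁ P.1 P.2.1 P.2.2 := by
  have hprofile : Continuous fun P : ℝ × (Fin 4 → En n) × ℝ =>
      reflectionProfile γ N (‖P.2.1 1 - P.2.1 3‖ / 2 + κ) P.2.2 :=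
    continuous_reflectionProfile hγ (by fun_prop) (by fun_prop) fun P => by positivity
  unfold fourPointBarrier
  fun_prop

end FourPointBarrier

/-- Interior bounds on the combination `c * u (x₁, y) + u (x₂, y)` with the two base points
decoupled: `m` bounds the combination and `ε` the oscillation of its first term, both up to `N`
times the squared distance of `x₁` from `x₂ + h`. -/
structure HasPenalizedBounds {n : ℕ} (c N ε m R : ℝ) (h : En n) (u : ℝ → En n × ℝ → ℝ) : Prop where
  abs_add_le : ∀ t ∈ Icc (-R) 0, ∀ y ∈ Icc 0 R, ∀ x₁ x₂ : En n, ‖x₁‖ ≤ R → ‖x₂‖ ≤ R →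
    |c * u t (x₁, y) + u t (x₂, y)| ≤ m + N * ‖x₁ - x₂ - h‖ ^ 2
  mul_sub_le : ∀ t ∈ Icc (-R) 0, ∀ y ∈ Icc 0 R, ∀ x₁ x₂ x₃ : En n, ‖x₁‖ ≤ R → ‖x₂‖ ≤ R →
    ‖x₃‖ ≤ R → c * (u t (x₁, y) - u t (x₃, y)) ≤
      ε + N * (‖x₁ - x₂ - h‖ ^ 2 + ‖x₃ - x₂ - h‖ ^ 2)

/-- The constraints on the parameters of `fourPointBarrier` that make it a strict barrier and
localize its contact points to the half ball of radius `R`. -/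
structure FourPointConstants (n : ℕ) (γ R N K₁ K₂ : ℝ) : Prop where
  two_le_profile : 2 ≤ N
  seven_le_profile : 7 ≤ N * γ * (1 - γ)
  localization_eq : K₂ = 128 / R ^ 2
  boundary_le : K₂ + 1 ≤ γ * K₁
  interior_lt : K₂ * (2 * n + 4) < K₁
  two_le_mul_rpow : 2 ≤ K₁ * (R / 16) ^ γ

theorem exists_fourPointConstants (n : ℕ) {γ R : ℝ} (hγ₀ : 0 < γ) (hγ₁ : γ < 1) (hR : 0 < R) :
    ∃ N K₁ K₂, FourPointConstants n γ R N K₁ K₂ := by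
  have hγ' : 0 < 1 - γ := sub_pos.2 hγ₁
  set K₂ := 128 / R ^ 2 with hK₂
  have hK₂pos : 0 < K₂ := by positivity
  have hpow : 0 < (R / 16) ^ γ := by positivity
  set K₁ := 1 + (K₂ + 1) / γ + K₂ * (2 * n + 4) + 2 / (R / 16) ^ γ
  have hboundary : 0 ≤ (K₂ + 1) / γ := by positivity
  have hinterior : 0 ≤ K₂ * (2 * n + 4) := by positivity
  have hscale : 0 ≤ 2 / (R / 16) ^ γ := by positivity
  refine ⟨7 / (γ * (1 - γ)), K₁, K₂, ?_, le_of_eq (by field_simp), hK₂, ?_, by linarith, ?_⟩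
  · rw [le_div_iff₀ (by positivity)]
    nlinarith
  · rw [mul_comm, ← div_le_iff₀ hγ₀]
    linarith
  · rw [← div_le_iff₀ hpow]
    linarith

theorem abs_lt_of_mul_sq_lt {R z : ℝ} (hR : 0 < R) (hz : 128 / R ^ 2 * z ^ 2 < 2) :
    |z| < R / 8 := by
  refine abs_lt_of_sq_lt_sq ?_ (by positivity)
  rw [div_mul_eq_mul_div, div_lt_iff₀ (by positivity)] at hz
  linarith [show (R / 8) ^ 2 = R ^ 2 / 64 by ring]

theorem multipointSum_four {n : ℕ} (c : ℝ) (v : En n × ℝ → ℝ) (x : Fin 4 → En n) (y : ℝ) :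
    multipointSum ![c, 1, -c, -1] v x y =
      (c * v (x 0, y) + v (x 1, y)) - (c * v (x 2, y) + v (x 3, y)) := by
  simp only [multipointSum, Fin.sum_univ_four, Matrix.cons_val]
  ring

section FourPointEstimate

variable {n : ℕ} {γ δ c N₀ K₁ K₂ N κ ε m R y₀ t₁ t y : ℝ} {h xₐ : En n} {x : Fin 4 → En n}
  {u : ℝ → En n × ℝ → ℝ}

theorem FourPointConstants.weight_nonneg (hK : FourPointConstants n γ R N₀ K₁ K₂) : 0 ≤ K₂ := by
  rw [hK.localization_eq]
  positivity

theorem FourPointConstants.profile_weight_pos (hK : FourPointConstants n γ R N₀ K₁ K₂) :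
    0 < K₁ := by
  have := hK.weight_nonneg
  exact lt_of_le_of_lt (by positivity) hK.interior_lt

theorem norm_lt_of_localized (hxₐ : ‖xₐ‖ ≤ R / 4) (hh : ‖h‖ ≤ R / 4)
    (hx₁ : ‖x 1 - xₐ‖ < R / 8) (hx₁₃ : ‖x 1 - x 3‖ < R / 8) (hx₀₁ : ‖x 0 - x 1 - h‖ < R / 8)
    (hx₂₃ : ‖x 2 - x 3 - h‖ < R / 8) (j : Fin 4) : ‖x j‖ < R := by
  have h₁ : ‖x 1‖ ≤ ‖x 1 - xₐ‖ + ‖xₐ‖ := by simpa using norm_add_le (x 1 - xₐ) xₐ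
  have h₃ : ‖x 3‖ ≤ ‖x 1‖ + ‖x 1 - x 3‖ := by simpa using norm_sub_le (x 1) (x 1 - x 3)
  have h₀ : ‖x 0‖ ≤ ‖x 0 - x 1 - h‖ + ‖x 1‖ + ‖h‖ := by
    simpa [add_assoc] using norm_add₃_le (a := x 0 - x 1 - h) (b := x 1) (c := h)
  have h₂ : ‖x 2‖ ≤ ‖x 2 - x 3 - h‖ + ‖x 3‖ + ‖h‖ := by
    simpa [add_assoc] using norm_add₃_le (a := x 2 - x 3 - h) (b := x 3) (c := h)
  have := norm_nonneg (x 1 - xₐ)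
  fin_cases j <;> simp only [Fin.zero_eta, Fin.mk_one, Fin.reduceFinMk] <;> linarith

/-- At a point where the barrier is exceeded, the bound `m` on the two halves of the four-point sum
leaves at most `2 * m` for the barrier. -/
theorem fourPointBarrier_localization (hγ₀ : 0 ≤ γ) (hγ₁ : γ ≤ 1) (hκ : 0 < κ) (hm : 0 < m)
    (hε : 0 ≤ ε) (hK : FourPointConstants n γ R N₀ K₁ K₂) (hu : HasPenalizedBounds c N ε m R h u)
    (ht : t ∈ Icc (-R) 0) (hy : y ∈ Icc 0 R) (hx : ∀ j, ‖x j‖ ≤ R)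
    (hlt : fourPointBarrier γ N₀ κ K₁ K₂ m (N + K₂ * m) ε h xₐ y₀ t₁ t x y <
      multipointSum ![c, 1, -c, -1] (u t) x y) :
    K₁ * (‖x 1 - x 3‖ / 2 + κ) ^ γ + K₂ * (‖x 1 - xₐ‖ ^ 2 + (y - y₀) ^ 2 + (t₁ - t)) +
      K₂ * (‖x 0 - x 1 - h‖ ^ 2 + ‖x 2 - x 3 - h‖ ^ 2) < 2 := by
  have hr : 0 < ‖x 1 - x 3‖ / 2 + κ := by positivity
  have hpow := Real.rpow_pos_of_pos hr γ
  have hprofile : (‖x 1 - x 3‖ / 2 + κ) ^ γ ≤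
      reflectionProfile γ N₀ (‖x 1 - x 3‖ / 2 + κ) y :=
    le_trans (by nlinarith [hK.two_le_profile])
      (le_reflectionProfile (N := N₀) hγ₀ (by linarith) hr hy.1)
  have hweighted := mul_le_mul_of_nonneg_left hprofile (mul_pos hm hK.profile_weight_pos).le
  have hfst := (abs_le.1 (hu.abs_add_le t ht y hy _ _ (hx 0) (hx 1))).2
  have hsnd := (abs_le.1 (hu.abs_add_le t ht y hy _ _ (hx 2) (hx 3))).1
  rw [multipointSum_four, fourPointBarrier] at hlt
  refine lt_of_mul_lt_mul_left ?_ hm.le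
  linarith

theorem ne_of_fourPointBarrier_lt (hγ₀ : 0 ≤ γ) (hγ₁ : γ ≤ 1) (hκ : 0 < κ) (hm : 0 < m)
    (hK : FourPointConstants n γ R N₀ K₁ K₂) (hu : HasPenalizedBounds c N ε m R h u)
    (ht : t ∈ Icc (-R) 0) (ht₁ : t ≤ t₁) (hy : y ∈ Icc 0 R) (hx : ∀ j, ‖x j‖ ≤ R)
    (hlt : fourPointBarrier γ N₀ κ K₁ K₂ m (N + K₂ * m) ε h xₐ y₀ t₁ t x y <
      multipointSum ![c, 1, -c, -1] (u t) x y) : x 1 ≠ x 3 := by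
  intro heq
  have hosc := hu.mul_sub_le t ht y hy _ _ _ (hx 0) (hx 1) (hx 2)
  have hr : 0 < ‖x 1 - x 3‖ / 2 + κ := by positivity
  have hpow := Real.rpow_nonneg hr.le γ
  have hprofile : 0 ≤ reflectionProfile γ N₀ (‖x 1 - x 3‖ / 2 + κ) y :=
    le_trans (mul_nonneg (by linarith [hK.two_le_profile]) hpow)
      (le_reflectionProfile hγ₀ (by linarith) hr hy.1)
  have hK₁ := hK.profile_weight_pos
  have hK₂ := hK.weight_nonneg
  have ht' : 0 ≤ t₁ - t := sub_nonneg.2 ht₁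
  have hcentre : 0 ≤ m * (K₁ * reflectionProfile γ N₀ (‖x 1 - x 3‖ / 2 + κ) y +
      K₂ * ((‖x 1 - xₐ‖ ^ 2 + (y - y₀) ^ 2) + (t₁ - t))) := by positivity
  have hpen : 0 ≤ K₂ * m * (‖x 0 - x 1 - h‖ ^ 2 + ‖x 2 - x 3 - h‖ ^ 2) := by positivity
  rw [multipointSum_four, fourPointBarrier] at hlt
  have hv : u t (x 1, y) = u t (x 3, y) := by rw [heq]
  have hz : ‖x 2 - x 1 - h‖ = ‖x 2 - x 3 - h‖ := by rw [heq]
  rw [hz] at hosc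
  linarith

theorem fourPointBarrier_localized (hγ₀ : 0 < γ) (hR₀ : 0 < R) (hR : R ≤ 1 / 2) (hκ : 0 < κ)
    (hK : FourPointConstants n γ R N₀ K₁ K₂) (ht : t ≤ t₁)
    (hlt : K₁ * (‖x 1 - x 3‖ / 2 + κ) ^ γ + K₂ * (‖x 1 - xₐ‖ ^ 2 + (y - y₀) ^ 2 + (t₁ - t)) +
      K₂ * (‖x 0 - x 1 - h‖ ^ 2 + ‖x 2 - x 3 - h‖ ^ 2) < 2) :
    ‖x 1 - x 3‖ / 2 + κ < R / 16 ∧ ‖x 1 - xₐ‖ < R / 8 ∧ |y - y₀| < R / 8 ∧ t₁ - t < R / 4 ∧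
      ‖x 0 - x 1 - h‖ < R / 8 ∧ ‖x 2 - x 3 - h‖ < R / 8 := by
  have hK₁ := hK.profile_weight_pos
  have hK₂ := hK.weight_nonneg
  have hr : 0 ≤ K₁ * (‖x 1 - x 3‖ / 2 + κ) ^ γ := by positivity
  have hA : 0 ≤ K₂ * ‖x 1 - xₐ‖ ^ 2 := by positivity
  have hY : 0 ≤ K₂ * (y - y₀) ^ 2 := by positivity
  have hT : 0 ≤ K₂ * (t₁ - t) := mul_nonneg hK₂ (sub_nonneg.2 ht)
  have hX : 0 ≤ K₂ * ‖x 0 - x 1 - h‖ ^ 2 := by positivity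
  have hX' : 0 ≤ K₂ * ‖x 2 - x 3 - h‖ ^ 2 := by positivity
  have hsq : ∀ {z : ℝ}, K₂ * z ^ 2 < 2 → |z| < R / 8 := fun hz =>
    abs_lt_of_mul_sq_lt hR₀ (hK.localization_eq ▸ hz)
  have hnorm : ∀ {z : En n}, K₂ * ‖z‖ ^ 2 < 2 → ‖z‖ < R / 8 := fun hz => by
    simpa using hsq hz
  refine ⟨?_, hnorm (by linarith), hsq (by linarith), ?_, hnorm (by linarith),
    hnorm (by linarith)⟩
  · by_contra! hle
    have := mul_le_mul_of_nonneg_left (Real.rpow_le_rpow (by positivity) hle hγ₀.le) hK₁.le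
    linarith [hK.two_le_mul_rpow]
  · by_contra! hle
    have hscale : 8 ≤ K₂ * R := by
      rw [hK.localization_eq, show 128 / R ^ 2 * R = 128 / R by field_simp, le_div_iff₀ hR₀]
      linarith
    linarith [mul_le_mul_of_nonneg_left hle hK₂]

theorem isStrictBarrierAt_fourPointBarrier_of_lt (hγ₀ : 0 < γ) (hγ₁ : γ < 1) (hR₀ : 0 < R)
    (hR : R ≤ 1 / 2) (hκ : 0 < κ) (hm : 0 < m) (hN : 0 ≤ N) (hε : 0 ≤ ε) (hδ₀ : 0 ≤ δ)
    (hc : |c| ≤ 1) (hh : ‖h‖ ≤ R / 4) (hxₐ : ‖xₐ‖ ≤ R / 4) (hy₀ : y₀ ∈ Icc 0 (R / 4))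
    (ht₁ : t₁ ∈ Icc (-(R / 4)) 0) (hK : FourPointConstants n γ R N₀ K₁ K₂)
    (hδ : δ * (4 + 4 * (m * (K₁ * (N₀ * κ ^ (γ - 1)) + K₂ * 4) + (N + K₂ * m) * 24)) < m)
    (hu : HasPenalizedBounds c N ε m R h u)
    (hmem : (t, x, y) ∈ multipointCylinder (Fin 4) n (-R) t₁ R)
    (hlt : fourPointBarrier γ N₀ κ K₁ K₂ m (N + K₂ * m) ε h xₐ y₀ t₁ t x y <
      multipointSum ![c, 1, -c, -1] (u t) x y) :
    (∀ j, ‖x j‖ < R) ∧ y < R ∧ -R < t ∧ IsStrictBarrierAt γ δ ![c, 1, -c, -1]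
      (fourPointBarrier γ N₀ κ K₁ K₂ m (N + K₂ * m) ε h xₐ y₀ t₁) t x y := by
  obtain ⟨htR, hxR, hyR⟩ := mem_multipointCylinder.1 hmem
  have ht : t ∈ Icc (-R) 0 := ⟨htR.1, htR.2.trans ht₁.2⟩
  have hK₁ := hK.profile_weight_pos
  have hK₂ := hK.weight_nonneg
  obtain ⟨hr, hA, hY, hT, hX, hX'⟩ := fourPointBarrier_localized hγ₀ hR₀ hR hκ hK htR.2
    (fourPointBarrier_localization hγ₀.le hγ₁.le hκ hm hε hK hu ht hyR hxR hlt)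
  have hx : ∀ j, ‖x j‖ < R :=
    norm_lt_of_localized hxₐ hh hA (by linarith) hX hX'
  refine ⟨hx, by linarith [(abs_lt.1 hY).2, hy₀.2], by linarith [ht₁.1], ?_⟩
  rcases hyR.1.eq_or_lt with rfl | hy
  · exact isStrictBarrierAt_fourPointBarrier_of_eq_zero hγ₀ hγ₁ hm.le hκ hK₁.le hK₂
      (by linarith [hK.two_le_profile]) (by positivity) hδ₀ (by linarith) (by linarith) hc
      hK.boundary_le hδ fun j => (hx j).trans_le (by linarith)
  · exact isStrictBarrierAt_fourPointBarrier_of_pos hγ₀.le hγ₁.le hm hκ.le hK₁.le hK₂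
      (by positivity) hy₀.1 hK.seven_le_profile hK.interior_lt hy
      (ne_of_fourPointBarrier_lt hγ₀.le hγ₁.le hκ hm hK hu ht htR.2 hyR hxR hlt)
      (by linarith)

theorem multipointSum_four_le (hγ₀ : 0 < γ) (hγ₁ : γ < 1) (hR₀ : 0 < R) (hR : R ≤ 1 / 2)
    (hκ : 0 < κ) (hm : 0 < m) (hN : 0 ≤ N) (hε : 0 ≤ ε) (hδ₀ : 0 ≤ δ) (hc : |c| ≤ 1)
    (hh : ‖h‖ ≤ R / 4) (hK : FourPointConstants n γ R N₀ K₁ K₂)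
    (hδ : δ * (4 + 4 * (m * (K₁ * (N₀ * κ ^ (γ - 1)) + K₂ * 4) + (N + K₂ * m) * 24)) < m)
    (hu : IsNormalizedSolution γ δ u) (hbd : HasPenalizedBounds c N ε m R h u)
    (ht : t ∈ Icc (-(R / 4)) 0) (hy : y ∈ Icc 0 (R / 4)) {x x' : En n} (hx : ‖x‖ ≤ R / 4)
    (hx' : ‖x'‖ ≤ R / 4) :
    multipointSum ![c, 1, -c, -1] (u t) ![x + h, x, x' + h, x'] y ≤
      ε + m * (K₁ * N₀) * (‖x - x'‖ ^ γ + κ ^ γ) := by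
  have hmem : (t, ![x + h, x, x' + h, x'], y) ∈ multipointCylinder (Fin 4) n (-R) t R := by
    refine mem_multipointCylinder.2 ⟨⟨by linarith [ht.1], le_rfl⟩, fun j => ?_, hy.1,
      by linarith [hy.2]⟩
    have hxh := norm_add_le x h
    have hxh' := norm_add_le x' h
    fin_cases j <;>
      simp only [Fin.zero_eta, Fin.mk_one, Fin.reduceFinMk, Matrix.cons_val] <;> linarith
  have hcomp := multipointSum_le_of_isStrictBarrierAt (c := ![c, 1, -c, -1]) hγ₀ hu
    (by linarith) ht.2 hR
    (continuous_fourPointBarrier (N := N₀) (K₁ := K₁) (K₂ := K₂) (m := m) (N' := N + K₂ * m)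
      (ε := ε) (h := h) (xₐ := x) (y₀ := y) (t₁ := t) hγ₀.le hκ).continuousOn
    (fun τ z w hz hlt => by
      obtain ⟨hj, hw, hτ, hstrict⟩ := isStrictBarrierAt_fourPointBarrier_of_lt hγ₀ hγ₁ hR₀ hR hκ
        hm hN hε hδ₀ hc hh hx hy ht hK hδ hbd hz hlt
      exact Or.inr ⟨hj, hw, fun _ => hτ, hstrict⟩) hmem
  have hprofile : reflectionProfile γ N₀ (‖x - x'‖ / 2 + κ) y ≤
      N₀ * (‖x - x'‖ ^ γ + κ ^ γ) := by
    have := hK.two_le_profile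
    calc reflectionProfile γ N₀ (‖x - x'‖ / 2 + κ) y
        ≤ N₀ * (‖x - x'‖ / 2 + κ) ^ γ := reflectionProfile_le hy.1
      _ ≤ N₀ * ((‖x - x'‖ / 2) ^ γ + κ ^ γ) := by
        gcongr
        exact Real.rpow_add_le_add_rpow (by positivity) hκ.le hγ₀.le hγ₁.le
      _ ≤ N₀ * (‖x - x'‖ ^ γ + κ ^ γ) := by
        gcongr
        linarith [norm_nonneg (x - x')]
  have hscaled := mul_le_mul_of_nonneg_left hprofile (mul_pos hm hK.profile_weight_pos).le
  refine hcomp.trans ?_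
  simp only [fourPointBarrier, Matrix.cons_val, add_sub_cancel_left, sub_self, norm_zero]
  linarith

end FourPointEstimate

/-- The constant `K` does not depend on the size `m` of the combination: a bound `m` on it yields a
Hölder bound of size `m`. -/
theorem exists_fourPoint_estimate (n : ℕ) {γ R : ℝ} (hγ₀ : 0 < γ) (hγ₁ : γ < 1) (hR₀ : 0 < R)
    (hR : R ≤ 1 / 2) : ∃ K, 0 ≤ K ∧ ∀ m₀ m₁ N κ : ℝ, 0 < m₀ → m₀ ≤ m₁ → 0 ≤ N → 0 < κ → ∃ δ > 0,
      ∀ u : ℝ → En n × ℝ → ℝ, IsNormalizedSolution γ δ u → ∀ (c ε m : ℝ) (h : En n), |c| ≤ 1 →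
      ‖h‖ ≤ R / 4 → 0 ≤ ε → m₀ ≤ m → m ≤ m₁ → HasPenalizedBounds c N ε m R h u →
      ∀ t ∈ Icc (-(R / 4)) 0, ∀ y ∈ Icc 0 (R / 4), ∀ x x' : En n, ‖x‖ ≤ R / 4 → ‖x'‖ ≤ R / 4 →
      |(c * u t (x + h, y) + u t (x, y)) - (c * u t (x' + h, y) + u t (x', y))| ≤
        ε + m * K * (‖x - x'‖ ^ γ + κ ^ γ) := by
  obtain ⟨N₀, K₁, K₂, hK⟩ := exists_fourPointConstants n hγ₀ hγ₁ hR₀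
  have hN₀ := hK.two_le_profile
  have hK₁ := hK.profile_weight_pos
  have hK₂ := hK.weight_nonneg
  refine ⟨K₁ * N₀, by positivity, fun m₀ m₁ N κ hm₀ hm₀₁ hN hκ => ?_⟩
  set G := m₁ * (K₁ * (N₀ * κ ^ (γ - 1)) + K₂ * 4) + (N + K₂ * m₁) * 24 with hG
  have hm₁ : 0 < m₁ := hm₀.trans_le hm₀₁
  have hGnonneg : 0 ≤ G := by positivity
  set δ := m₀ / (2 * (4 + 4 * G)) with hδ
  have hδpos : 0 < δ := by positivity
  refine ⟨δ, hδpos, fun u hu c ε m h hc hh hε hm hm' hbd t ht y hy x x' hx hx' => ?_⟩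
  have hmpos : 0 < m := hm₀.trans_le hm
  have hδm : δ * (4 + 4 * (m * (K₁ * (N₀ * κ ^ (γ - 1)) + K₂ * 4) + (N + K₂ * m) * 24)) < m :=
    calc _ ≤ δ * (4 + 4 * G) := by
          rw [hG]
          gcongr
      _ = m₀ / 2 := by
          rw [hδ]
          field_simp
      _ < m := by linarith
  have hle : ∀ {z z' : En n}, ‖z‖ ≤ R / 4 → ‖z'‖ ≤ R / 4 →
      (c * u t (z + h, y) + u t (z, y)) - (c * u t (z' + h, y) + u t (z', y)) ≤
        ε + m * (K₁ * N₀) * (‖z - z'‖ ^ γ + κ ^ γ) := fun hz hz' => by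
    simpa only [multipointSum_four, Matrix.cons_val] using multipointSum_four_le hγ₀ hγ₁ hR₀ hR hκ
      hmpos hN hε hδpos.le hc hh hK hδm hu hbd ht hy hz hz'
  refine abs_sub_le_iff.2 ⟨hle hx hx', ?_⟩
  rw [norm_sub_rev]
  exact hle hx' hx

/-! ### Almost Lipschitz regularity in the horizontal directions -/

theorem exists_mul_rpow_le {γ K ε : ℝ} (hγ : 0 < γ) (hε : 0 < ε) :
    ∃ κ : ℝ, 0 < κ ∧ κ ≤ 1 / 2 ∧ K * κ ^ γ ≤ ε := by
  have hcont : Continuous fun y : ℝ => K * y ^ γ :=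
    continuous_const.mul (Real.continuous_rpow_const hγ.le)
  have hlim : Tendsto (fun y : ℝ => K * y ^ γ) (𝓝[>] 0) (𝓝 0) := by
    simpa [Real.zero_rpow hγ.ne'] using (hcont.tendsto 0).mono_left nhdsWithin_le_nhds
  obtain ⟨κ, hκε, hκ⟩ := ((hlim.eventually (Iio_mem_nhds hε)).and
    (Ioo_mem_nhdsGT (show (0 : ℝ) < 1 / 2 by norm_num))).exists
  exact ⟨κ, hκ.1, hκ.2.le, le_of_lt hκε⟩

theorem exists_mul_rpow_le_add_mul_sq {C σ ε : ℝ} (hC : 0 ≤ C) (hσ₀ : 0 < σ) (hσ₂ : σ ≤ 2)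
    (hε : 0 < ε) : ∃ N : ℝ, 0 ≤ N ∧ ∀ z : ℝ, 0 ≤ z → C * z ^ σ ≤ ε + N * z ^ 2 := by
  obtain ⟨κ, hκ, -, hκε⟩ := exists_mul_rpow_le (K := C) hσ₀ hε
  refine ⟨C * κ ^ (σ - 2), by positivity, fun z hz => ?_⟩
  rcases le_total z κ with hzκ | hκz
  · calc C * z ^ σ ≤ C * κ ^ σ := by gcongr
      _ ≤ ε := hκε
      _ ≤ ε + C * κ ^ (σ - 2) * z ^ 2 := le_add_of_nonneg_right (by positivity)
  · calc C * z ^ σ = C * z ^ (σ - 2) * z ^ 2 := by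
          rw [mul_assoc, ← Real.rpow_add_natCast (hκ.trans_le hκz).ne']
          norm_num
      _ ≤ C * κ ^ (σ - 2) * z ^ 2 := by
          gcongr ?_ * _
          gcongr ?_ * ?_
          exact Real.rpow_le_rpow_of_nonpos hκ hκz (by linarith)
      _ ≤ ε + C * κ ^ (σ - 2) * z ^ 2 := le_add_of_nonneg_left hε.le

theorem IsNormalizedSolution.abs_le_one_of_norm_le {n : ℕ} {γ δ : ℝ} {u : ℝ → En n × ℝ → ℝ}
    (hu : IsNormalizedSolution γ δ u) {t y : ℝ} {x : En n} (ht : t ∈ Icc (-(1 / 2) : ℝ) 0)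
    (hx : ‖x‖ ≤ 1 / 2) (hy : y ∈ Icc (0 : ℝ) (1 / 2)) : |u t (x, y)| ≤ 1 :=
  hu.abs_le_one ⟨by linarith [ht.1], ht.2⟩ ⟨by nlinarith [norm_nonneg x, hy.1, hy.2], hy.1⟩

/-- Hölder continuity of exponent `σ` in `x` at scale `R`, up to the additive error `ε`. -/
def HasHolderBound {n : ℕ} (C σ ε R : ℝ) (u : ℝ → En n × ℝ → ℝ) : Prop :=
  ∀ t ∈ Icc (-R) 0, ∀ y ∈ Icc 0 R, ∀ x x' : En n, ‖x‖ ≤ R → ‖x'‖ ≤ R →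
    |u t (x, y) - u t (x', y)| ≤ C * ‖x - x'‖ ^ σ + ε

/-- Hölder continuity of exponent `γ` in `x` of the increments of `u`, with a constant proportional
to the power `σ` of the length of the increment, up to the additive error `ε`. -/
def HasHolderIncrements {n : ℕ} (γ C σ ε R : ℝ) (u : ℝ → En n × ℝ → ℝ) : Prop :=
  ∀ t ∈ Icc (-R) 0, ∀ y ∈ Icc 0 R, ∀ x x' h : En n, ‖x‖ ≤ R → ‖x'‖ ≤ R → ‖h‖ ≤ R →
    |(u t (x, y) - u t (x + h, y)) - (u t (x', y) - u t (x' + h, y))| ≤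
      C * ‖h‖ ^ σ * ‖x - x'‖ ^ γ + ε

/-- Normalized solutions are Hölder of exponent `σ` in `x` at scale `R`, with an error that tends
to zero with the size of the drift and of the right-hand side. -/
def AlmostHolder (n : ℕ) (γ R σ : ℝ) : Prop :=
  ∃ C : ℝ, 0 ≤ C ∧ ∀ ε > 0, ∃ δ > 0, ∀ u : ℝ → En n × ℝ → ℝ, IsNormalizedSolution γ δ u →
    HasHolderBound C σ ε R u

/-- The analogue of `AlmostHolder` for the increments of normalized solutions. -/
def AlmostHolderIncrements (n : ℕ) (γ R σ : ℝ) : Prop :=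
  ∃ C : ℝ, 0 ≤ C ∧ ∀ ε > 0, ∃ δ > 0, ∀ u : ℝ → En n × ℝ → ℝ, IsNormalizedSolution γ δ u →
    HasHolderIncrements γ C σ ε R u

theorem HasHolderBound.mono_radius {n : ℕ} {C σ ε R R' : ℝ} {u : ℝ → En n × ℝ → ℝ}
    (hu : HasHolderBound C σ ε R u) (hR : R' ≤ R) : HasHolderBound C σ ε R' u :=
  fun t ht y hy x x' hx hx' => hu t ⟨by linarith [ht.1], ht.2⟩ y ⟨hy.1, hy.2.trans hR⟩ x x'
    (hx.trans hR) (hx'.trans hR)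

section AlmostHolder

variable {n : ℕ} {γ R σ : ℝ}

theorem AlmostHolder.mono_radius {R' : ℝ} (hH : AlmostHolder n γ R σ) (hR : R' ≤ R) :
    AlmostHolder n γ R' σ := by
  obtain ⟨C, hC, hmain⟩ := hH
  refine ⟨C, hC, fun ε hε => ?_⟩
  obtain ⟨δ, hδ, hd⟩ := hmain ε hε
  exact ⟨δ, hδ, fun u hu => (hd u hu).mono_radius hR⟩

theorem AlmostHolder.mono_exponent {σ' : ℝ} (hH : AlmostHolder n γ R σ) (hR : R ≤ 1 / 2)
    (hσ' : 0 ≤ σ') (hσ : σ' ≤ σ) : AlmostHolder n γ R σ' := by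
  obtain ⟨C, hC, hmain⟩ := hH
  refine ⟨C, hC, fun ε hε => ?_⟩
  obtain ⟨δ, hδ, hd⟩ := hmain ε hε
  refine ⟨δ, hδ, fun u hu t ht y hy x x' hx hx' => (hd u hu t ht y hy x x' hx hx').trans ?_⟩
  have hdist : ‖x - x'‖ ≤ 1 := (norm_sub_le _ _).trans (by linarith)
  gcongr ?_ * ?_ + _
  exact Real.rpow_le_rpow_of_exponent_ge' (norm_nonneg _) hdist hσ' hσ

theorem almostHolder_initial (n : ℕ) {γ : ℝ} (hγ₀ : 0 < γ) (hγ₁ : γ < 1) :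
    AlmostHolder n γ (1 / 8) γ := by
  obtain ⟨K, hK, hmain⟩ := exists_fourPoint_estimate n hγ₀ hγ₁ (R := 1 / 2) (by norm_num) le_rfl
  refine ⟨K, hK, fun ε hε => ?_⟩
  obtain ⟨κ, hκ, -, hκε⟩ := exists_mul_rpow_le (K := K) hγ₀ hε
  obtain ⟨δ, hδ, hd⟩ := hmain 1 1 0 κ one_pos le_rfl le_rfl hκ
  refine ⟨δ, hδ, fun u hu t ht y hy x x' hx hx' => ?_⟩
  have hbd : HasPenalizedBounds 0 0 0 1 (1 / 2) (0 : En n) u :=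
    ⟨fun t ht y hy _ _ _ hx => by simpa using hu.abs_le_one_of_norm_le ht hx hy,
      fun _ _ _ _ _ _ _ _ _ _ => by simp⟩
  have := hd u hu 0 0 1 0 (by simp) (by norm_num) le_rfl le_rfl le_rfl hbd t
    ⟨by linarith [ht.1], ht.2⟩ y ⟨hy.1, by linarith [hy.2]⟩ x x' (by linarith) (by linarith)
  simp only [zero_mul, zero_add, one_mul] at this
  linarith

theorem HasHolderBound.hasPenalizedBounds {C N ε : ℝ} {u : ℝ → En n × ℝ → ℝ} (hσ₀ : 0 ≤ σ)
    (hσ₁ : σ ≤ 1) (hC : 0 ≤ C) (hN : 0 ≤ N) (hCN : ∀ z : ℝ, 0 ≤ z → C * z ^ σ ≤ ε + N * z ^ 2)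
    (hu : HasHolderBound C σ ε R u) (h : En n) :
    HasPenalizedBounds (-1) (2 * N) (2 * ε) (C * ‖h‖ ^ σ + 2 * ε) R h u where
  abs_add_le t ht y hy x₁ x₂ hx₁ hx₂ := by
    have hpow : ‖x₂ - x₁‖ ^ σ ≤ ‖h‖ ^ σ + ‖x₁ - x₂ - h‖ ^ σ :=
      calc ‖x₂ - x₁‖ ^ σ ≤ (‖h‖ + ‖x₁ - x₂ - h‖) ^ σ := by
            rw [norm_sub_rev]
            gcongr
            simpa using norm_add_le h (x₁ - x₂ - h)
        _ ≤ ‖h‖ ^ σ + ‖x₁ - x₂ - h‖ ^ σ :=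
            Real.rpow_add_le_add_rpow (norm_nonneg _) (norm_nonneg _) hσ₀ hσ₁
    rw [neg_one_mul, neg_add_eq_sub]
    have hdiff := hu t ht y hy x₂ x₁ hx₂ hx₁
    have hpen : 0 ≤ N * ‖x₁ - x₂ - h‖ ^ 2 := by positivity
    linarith [hCN _ (norm_nonneg (x₁ - x₂ - h)), mul_le_mul_of_nonneg_left hpow hC]
  mul_sub_le t ht y hy x₁ x₂ x₃ hx₁ _ hx₃ := by
    have hsq : ‖x₁ - x₃‖ ^ 2 ≤ 2 * (‖x₁ - x₂ - h‖ ^ 2 + ‖x₃ - x₂ - h‖ ^ 2) :=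
      calc ‖x₁ - x₃‖ ^ 2 ≤ (‖x₁ - x₂ - h‖ + ‖x₃ - x₂ - h‖) ^ 2 := by
            gcongr
            simpa using norm_sub_le (x₁ - x₂ - h) (x₃ - x₂ - h)
        _ ≤ _ := add_sq_le
    have hdiff := (abs_le.1 (hu t ht y hy x₁ x₃ hx₁ hx₃)).1
    linarith [hCN _ (norm_nonneg (x₁ - x₃)), mul_le_mul_of_nonneg_left hsq hN]

theorem AlmostHolder.almostHolderIncrements (hγ₀ : 0 < γ) (hγ₁ : γ < 1) (hR₀ : 0 < R)
    (hR : R ≤ 1 / 2) (hσ₀ : 0 < σ) (hσ₁ : σ ≤ 1) (hH : AlmostHolder n γ R σ) :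
    AlmostHolderIncrements n γ (R / 4) σ := by
  obtain ⟨C, hC, hP⟩ := hH
  obtain ⟨K, hK, hmain⟩ := exists_fourPoint_estimate n hγ₀ hγ₁ hR₀ hR
  refine ⟨C * K, by positivity, fun ε hε => ?_⟩
  set η := ε / (8 * (1 + K)) with hη
  have hηpos : 0 < η := by positivity
  have hηε : 2 * η + 4 * (η * K) ≤ ε / 2 := by
    have : η * (1 + K) = ε / 8 := by
      rw [hη]
      field_simp
    linarith
  obtain ⟨κ, hκ, hκ₁, hκε⟩ := exists_mul_rpow_le (K := C * K) hγ₀ (half_pos hε)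
  obtain ⟨N, hN, hCN⟩ := exists_mul_rpow_le_add_mul_sq hC hσ₀ (by linarith) hηpos
  obtain ⟨δ₁, hδ₁, hd₁⟩ := hP η hηpos
  obtain ⟨δ₂, hδ₂, hd₂⟩ := hmain (2 * η) (C + 2 * η) (2 * N) κ (by positivity) (by linarith)
    (by positivity) hκ
  refine ⟨min δ₁ δ₂, lt_min hδ₁ hδ₂, fun u hu t ht y hy x x' h hx hx' hh => ?_⟩
  have hhσ : ‖h‖ ^ σ ≤ 1 := Real.rpow_le_one (norm_nonneg _) (by linarith) hσ₀.le
  have hbd := (hd₁ u (hu.mono (min_le_left _ _))).hasPenalizedBounds hσ₀.le hσ₁ hC hN hCN h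
  have hfour := hd₂ u (hu.mono (min_le_right _ _)) (-1) (2 * η) (C * ‖h‖ ^ σ + 2 * η) h (by simp)
    hh (by positivity) (le_add_of_nonneg_left (by positivity))
    (by linarith [mul_le_mul_of_nonneg_left hhσ hC]) hbd t ht y hy x x' hx hx'
  have hxγ : ‖x - x'‖ ^ γ ≤ 1 := Real.rpow_le_one (norm_nonneg _)
    ((norm_sub_le _ _).trans (by linarith)) hγ₀.le
  have hκγ : κ ^ γ ≤ 1 := Real.rpow_le_one hκ.le (by linarith) hγ₀.le
  have herror₁ : η * K * (‖x - x'‖ ^ γ + κ ^ γ) ≤ η * K * 2 := by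
    gcongr
    linarith
  have herror₂ : ‖h‖ ^ σ * (C * K * κ ^ γ) ≤ 1 * (C * K * κ ^ γ) := by gcongr
  simp only [neg_one_mul, neg_add_eq_sub] at hfour
  linarith

end AlmostHolder

/-! ### Hölder improvement by dyadic second differences -/

/-- Moduli that bound a function `p` with `|p| ≤ 1` at scales between `R / 4` and `R / 2`, and
propagate from scale `2 * z` to scale `z` if the second differences of `p` are at most
`C * z ^ τ`. -/
structure IsDyadicMajorant (C τ R : ℝ) (F : ℝ → ℝ) : Prop where
  half_add_le : ∀ z, 0 < z → z ≤ R / 4 → F (2 * z) / 2 + C * z ^ τ / 2 ≤ F z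
  two_le : ∀ z, R / 4 ≤ z → z ≤ R / 2 → 2 ≤ F z

theorem exists_isDyadicMajorant_of_lt_one {C τ R : ℝ} (hC : 0 ≤ C) (hR : 0 < R) (hτ₀ : 0 ≤ τ)
    (hτ₁ : τ < 1) :
    ∃ F C', 0 ≤ C' ∧ IsDyadicMajorant C τ R F ∧ ∀ z, 0 < z → F z ≤ C' * z ^ τ := by
  have htwo : (2 : ℝ) ^ τ < 2 := by
    simpa using Real.rpow_lt_rpow_of_exponent_lt one_lt_two hτ₁
  have hscale : 0 < (R / 4) ^ τ := by positivity
  set C' := C / (2 - 2 ^ τ) + 2 / (R / 4) ^ τ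
  have hfst : 0 ≤ C / (2 - 2 ^ τ) := div_nonneg hC (by linarith)
  have hsnd : 0 ≤ 2 / (R / 4) ^ τ := by positivity
  refine ⟨fun z => C' * z ^ τ, C', by positivity, ⟨fun z hz _ => ?_, fun z hz _ => ?_⟩,
    fun z _ => le_rfl⟩
  · have hCC' : C ≤ C' * (2 - 2 ^ τ) := by
      rw [← div_le_iff₀ (by linarith)]
      linarith
    rw [Real.mul_rpow zero_le_two hz.le]
    nlinarith [Real.rpow_nonneg hz.le τ]
  · calc 2 ≤ C' * (R / 4) ^ τ := by
          rw [← div_le_iff₀ hscale]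
          linarith
      _ ≤ C' * z ^ τ := by gcongr

theorem exists_isDyadicMajorant_of_one_lt {C τ R : ℝ} (hC : 0 ≤ C) (hR₀ : 0 < R) (hR : R ≤ 2)
    (hτ : 1 < τ) :
    ∃ F C', 0 ≤ C' ∧ IsDyadicMajorant C τ R F ∧ ∀ z, 0 < z → F z ≤ C' * z ^ (1 : ℝ) := by
  have htwo : 2 < (2 : ℝ) ^ τ := by
    simpa using Real.rpow_lt_rpow_of_exponent_lt one_lt_two hτ
  set C₂ := C / (2 ^ τ - 2)
  have hC₂nonneg : 0 ≤ C₂ := div_nonneg hC (by linarith)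
  have hC₂eq : C₂ * (2 ^ τ - 2) = C := div_mul_cancel₀ _ (by linarith)
  refine ⟨fun z => (2 + C₂) / (R / 4) * z - C₂ * z ^ τ, (2 + C₂) / (R / 4), by positivity,
    ⟨fun z hz _ => ?_, fun z hz hz' => ?_⟩, fun z hz => ?_⟩
  · rw [Real.mul_rpow zero_le_two hz.le, ← hC₂eq]
    exact le_of_eq (by ring)
  · have hz₀ : 0 < z := by linarith
    have hpow := mul_le_mul_of_nonneg_left
      (Real.rpow_le_one hz₀.le (by linarith) (by linarith) : z ^ τ ≤ 1) hC₂nonneg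
    have hlin : 2 + C₂ ≤ (2 + C₂) / (R / 4) * z := by
      rw [div_mul_eq_mul_div, le_div_iff₀ (by positivity)]
      gcongr
    linarith
  · rw [Real.rpow_one, sub_le_self_iff]
    positivity

/-- Halving: `2 * (p x - p (x + h))` differs from `p x - p (x + 2 * h)` by a second difference. -/
theorem IsDyadicMajorant.abs_sub_le {E : Type*} [NormedAddCommGroup E] [NormedSpace ℝ E]
    {p : E → ℝ} {R C τ ε : ℝ} {F : ℝ → ℝ} (hF : IsDyadicMajorant C τ R F) (hR : 0 < R)
    (hε : 0 ≤ ε) (hp : ∀ x, ‖x‖ ≤ R → |p x| ≤ 1)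
    (hdiff : ∀ x h : E, ‖x‖ ≤ R / 2 → ‖h‖ ≤ R / 4 →
      |(p x - p (x + h)) - (p (x + h) - p (x + h + h))| ≤ C * ‖h‖ ^ τ + ε)
    {x h : E} (hx : ‖x‖ ≤ R / 2) (hh : ‖h‖ ≤ R / 2) (hne : h ≠ 0) :
    |p x - p (x + h)| ≤ F ‖h‖ + ε := by
  have hlarge : ∀ {h : E}, ‖h‖ ≤ R / 2 → R / 4 ≤ ‖h‖ → |p x - p (x + h)| ≤ F ‖h‖ + ε := by
    intro h hh hh'
    have hx₁ := hp x (by linarith)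
    have hx₂ := hp (x + h) ((norm_add_le _ _).trans (by linarith))
    linarith [hF.two_le _ hh' hh, abs_sub (p x) (p (x + h))]
  have hscales : ∀ k : ℕ, ∀ h : E, 0 < ‖h‖ → ‖h‖ ≤ R / 2 → R / 4 ≤ 2 ^ k * ‖h‖ →
      |p x - p (x + h)| ≤ F ‖h‖ + ε := by
    intro k
    induction k with
    | zero => exact fun h _ hh hk => hlarge hh (by simpa using hk)
    | succ k ih =>
      intro h hpos hh hk
      rcases le_total (R / 4) ‖h‖ with hh' | hh'
      · exact hlarge hh hh'
      have hnorm : ‖(2 : ℝ) • h‖ = 2 * ‖h‖ := by simp [norm_smul]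
      have hdouble := ih ((2 : ℝ) • h) (by rw [hnorm]; linarith) (by rw [hnorm]; linarith)
        (by rw [hnorm]; rw [pow_succ] at hk; linarith)
      have hsecond := hdiff x h hx hh'
      have hhalf := hF.half_add_le ‖h‖ hpos hh'
      rw [hnorm, two_smul, ← add_assoc] at hdouble
      rw [abs_le] at hdouble hsecond ⊢
      constructor <;> linarith [hdouble.1, hdouble.2, hsecond.1, hsecond.2]
  have hpos : 0 < ‖h‖ := norm_pos_iff.2 hne
  obtain ⟨k, hk⟩ := pow_unbounded_of_one_lt (R / 4 / ‖h‖) one_lt_two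
  exact hscales k h hpos hh ((div_lt_iff₀ hpos).1 hk).le

section AlmostLipschitz

variable {n : ℕ} {γ γ₀ R σ τ : ℝ}

theorem HasHolderIncrements.abs_second_difference_le {C ε : ℝ} {u : ℝ → En n × ℝ → ℝ}
    (hu : HasHolderIncrements γ C σ ε R u) (hγ₀ : 0 < γ₀) (hγ : γ₀ ≤ γ) (hR : R ≤ 1)
    (hσ : 0 < σ) (hC : 0 ≤ C) {t y : ℝ} {x h : En n} (ht : t ∈ Icc (-R) 0) (hy : y ∈ Icc 0 R)
    (hx : ‖x‖ ≤ R / 2) (hh : ‖h‖ ≤ R / 4) :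
    |(u t (x, y) - u t (x + h, y)) - (u t (x + h, y) - u t (x + h + h, y))| ≤
      C * ‖h‖ ^ (σ + γ₀) + ε := by
  have hR₀ : 0 ≤ R := hy.1.trans hy.2
  have hxh : ‖x + h‖ ≤ R := (norm_add_le x h).trans (by linarith)
  refine (hu t ht y hy x (x + h) h (by linarith) hxh (by linarith)).trans ?_
  rw [sub_add_cancel_left, norm_neg]
  rcases eq_or_ne h 0 with rfl | hne
  · simp [Real.zero_rpow hσ.ne', Real.zero_rpow (show σ + γ₀ ≠ 0 by linarith)]
  · have hpos : 0 < ‖h‖ := norm_pos_iff.2 hne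
    rw [Real.rpow_add hpos, mul_assoc]
    gcongr ?_ * (_ * ?_) + _
    exact Real.rpow_le_rpow_of_exponent_ge hpos (by linarith) hγ

theorem AlmostHolderIncrements.almostHolder (hH : AlmostHolderIncrements n γ R σ) (hγ₀ : 0 < γ₀)
    (hγ : γ₀ ≤ γ) (hR₀ : 0 < R) (hR : R ≤ 1 / 2) (hσ : 0 < σ)
    (hF : ∀ C, 0 ≤ C → ∃ F C', 0 ≤ C' ∧ IsDyadicMajorant C (σ + γ₀) R F ∧
      ∀ z, 0 < z → F z ≤ C' * z ^ τ) : AlmostHolder n γ (R / 4) τ := by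
  obtain ⟨C, hC, hmain⟩ := hH
  obtain ⟨F, C', hC', hmaj, hFle⟩ := hF C hC
  refine ⟨C', hC', fun ε hε => ?_⟩
  obtain ⟨δ, hδ, hd⟩ := hmain ε hε
  refine ⟨δ, hδ, fun u hu t ht y hy x x' hx hx' => ?_⟩
  rcases eq_or_ne x x' with rfl | hne
  · rw [sub_self, abs_zero]
    positivity
  have ht' : t ∈ Icc (-R) 0 := ⟨by linarith [ht.1], ht.2⟩
  have hy' : y ∈ Icc 0 R := ⟨hy.1, by linarith [hy.2]⟩
  have hdist : ‖x' - x‖ ≤ R / 2 := (norm_sub_le _ _).trans (by linarith)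
  have hbound := hmaj.abs_sub_le (p := fun x => u t (x, y)) hR₀ hε.le
    (fun x hx => hu.abs_le_one_of_norm_le ⟨by linarith [ht'.1], ht.2⟩ (by linarith)
      ⟨hy.1, by linarith [hy'.2]⟩)
    (fun x h hx hh => (hd u hu).abs_second_difference_le hγ₀ hγ (by linarith) hσ hC ht' hy' hx hh)
    (x := x) (h := x' - x) (by linarith) hdist (sub_ne_zero.2 hne.symm)
  rw [add_sub_cancel] at hbound
  rw [norm_sub_rev x x']
  linarith [hFle _ (norm_pos_iff.2 (sub_ne_zero.2 hne.symm))]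

theorem AlmostHolder.improve_of_lt_one (hH : AlmostHolder n γ R σ) (hγ₀ : 0 < γ₀) (hγ : γ₀ ≤ γ)
    (hγ₁ : γ < 1) (hR₀ : 0 < R) (hR : R ≤ 1 / 2) (hσ : 0 < σ) (hσ₁ : σ + γ₀ < 1) :
    AlmostHolder n γ (R / 16) (σ + γ₀) := by
  have hI := hH.almostHolderIncrements (by linarith) hγ₁ hR₀ hR hσ (by linarith)
  rw [show R / 16 = R / 4 / 4 by ring]
  exact hI.almostHolder hγ₀ hγ (by positivity) (by linarith) hσ fun C hC =>
    exists_isDyadicMajorant_of_lt_one hC (by positivity) (by positivity) hσ₁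

theorem AlmostHolder.improve_of_one_lt (hH : AlmostHolder n γ R σ) (hγ₀ : 0 < γ₀) (hγ : γ₀ ≤ γ)
    (hγ₁ : γ < 1) (hR₀ : 0 < R) (hR : R ≤ 1 / 2) (hσ : 0 < σ) (hσ₁ : σ ≤ 1) (hσγ : 1 < σ + γ₀) :
    AlmostHolder n γ (R / 16) 1 := by
  have hI := hH.almostHolderIncrements (by linarith) hγ₁ hR₀ hR hσ hσ₁
  rw [show R / 16 = R / 4 / 4 by ring]
  exact hI.almostHolder hγ₀ hγ (by positivity) (by linarith) hσ fun C hC =>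
    exists_isDyadicMajorant_of_one_lt hC (by positivity) (by linarith) hσγ

/-- The step `γ₀ = 1 / (M + 1 / 2)` is chosen so that no multiple of it equals the critical
exponent `1`. -/
theorem exists_almostHolder_one (n : ℕ) {γ : ℝ} (hγ₀ : 0 < γ) (hγ₁ : γ < 1) :
    ∃ R, 0 < R ∧ R ≤ 1 / 2 ∧ AlmostHolder n γ R 1 := by
  obtain ⟨M, hM⟩ := exists_nat_gt (1 / γ)
  have hMpos : (0 : ℝ) < M := lt_trans (by positivity) hM
  set η : ℝ := 1 / (M + 1 / 2) with hη
  have hηpos : 0 < η := by positivity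
  have hηM : η * (M + 1 / 2) = 1 := by
    rw [hη]
    field_simp
  have hηγ : η ≤ γ := by
    rw [hη, div_le_iff₀ (by positivity)]
    rw [div_lt_iff₀ hγ₀] at hM
    linarith
  have hmultiples : ∀ k : ℕ, k + 1 ≤ M →
      ∃ R, 0 < R ∧ R ≤ 1 / 2 ∧ AlmostHolder n γ R ((k + 1 : ℕ) * η) := by
    intro k
    induction k with
    | zero =>
      refine fun _ => ⟨1 / 8, by norm_num, by norm_num, ?_⟩
      simpa using (almostHolder_initial n hγ₀ hγ₁).mono_exponent (by norm_num) hηpos.le hηγ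
    | succ k ih =>
      intro hk
      obtain ⟨R, hR₀, hR, hH⟩ := ih (by omega)
      have hk' : (k : ℝ) + 1 + 1 ≤ M := by exact_mod_cast hk
      refine ⟨R / 16, by positivity, by linarith, ?_⟩
      rw [show ((k + 1 + 1 : ℕ) : ℝ) * η = (k + 1 : ℕ) * η + η by push_cast; ring]
      refine hH.improve_of_lt_one hηpos hηγ hγ₁ hR₀ hR (by positivity) ?_
      push_cast
      nlinarith
  obtain ⟨k, rfl⟩ : ∃ k, M = k + 1 := Nat.exists_eq_succ_of_ne_zero (by rintro rfl; simp at hMpos)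
  obtain ⟨R, hR₀, hR, hH⟩ := hmultiples k le_rfl
  exact ⟨R / 16, by positivity, by linarith, hH.improve_of_one_lt hηpos hηγ hγ₁ hR₀ hR
    (by positivity) (by linarith) (by linarith)⟩

theorem exists_almostHolder_one_and_increments (n : ℕ) {γ : ℝ} (hγ₀ : 0 < γ) (hγ₁ : γ < 1) :
    ∃ R, 0 < R ∧ R ≤ 1 / 2 ∧ AlmostHolder n γ R 1 ∧ AlmostHolderIncrements n γ R 1 := by
  obtain ⟨R, hR₀, hR, hH⟩ := exists_almostHolder_one n hγ₀ hγ₁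
  exact ⟨R / 4, by positivity, by linarith, hH.mono_radius (by linarith),
    hH.almostHolderIncrements hγ₀ hγ₁ hR₀ hR one_pos le_rfl⟩

end AlmostLipschitz

/-! ### The two-point estimate -/

section RegularizedPower

variable {p r A B : ℝ}

theorem rpow_half_le_tangent (hp₀ : 0 < p) (hp₂ : p ≤ 2) (hA : 0 < A) (hB : 0 ≤ B) :
    B ^ (p / 2) ≤ A ^ (p / 2) + p / 2 * A ^ (p / 2 - 1) * (B - A) := by
  have hratio : 0 ≤ B / A := by positivity
  have htangent : (1 + (B / A - 1)) ^ (p / 2) ≤ 1 + p / 2 * (B / A - 1) :=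
    rpow_one_add_le_one_add_mul_self (by linarith) (by positivity) (by linarith)
  rw [add_sub_cancel, Real.div_rpow hB hA.le, div_le_iff₀ (by positivity)] at htangent
  refine htangent.trans (le_of_eq ?_)
  rw [Real.rpow_sub_one hA.ne']
  field_simp

theorem sq_rpow_half (hr : 0 ≤ r) (p : ℝ) : (r ^ 2) ^ (p / 2) = r ^ p := by
  rw [← Real.rpow_two, ← Real.rpow_mul hr, mul_div_cancel₀ p two_ne_zero]

theorem rpow_half_sub_one_le (hp₂ : p ≤ 2) (hr : 0 < r) (hA : r ^ 2 ≤ A) :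
    A ^ (p / 2 - 1) ≤ r ^ (p - 2) := by
  rw [← sq_rpow_half hr.le, sub_div, div_self two_ne_zero]
  exact Real.rpow_le_rpow_of_nonpos (by positivity) hA (by linarith)

variable {ι : Type*} {n : ℕ} {x : ι → En n} {i : ι}

theorem hasCoupledLaplacianLE_regularized_rpow {a y : ℝ} {e : ι → OrthonormalBasis (Fin n) ℝ (En n)}
    (ha₀ : 0 ≤ a) (ha₁ : a ≤ 1) (hp₀ : 0 < p) (hp₂ : p ≤ 2) (hy : 0 < y) :
    HasCoupledLaplacianLE a e (fun x y => (‖x i‖ ^ 2 + y ^ 2 + r ^ 2) ^ (p / 2)) x y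
      (p * (n + 2) * y ^ (p - 2)) := by
  set A := ‖x i‖ ^ 2 + y ^ 2 + r ^ 2 with hA
  have hApos : 0 < A := by positivity
  have hslope : 0 ≤ p / 2 * A ^ (p / 2 - 1) := by positivity
  have hloc := hasCoupledLaplacianLE_localization (e := e) (i := i) (x := x) ha₀ ha₁ hy 0 le_rfl
  refine HasCoupledLaplacianLE.of_touching (((hasCoupledLaplacianLE_of_height (hasBesselAt_const a
    (A ^ (p / 2) + p / 2 * A ^ (p / 2 - 1) * (r ^ 2 - A)) y)).add (hloc.const_mul hslope)).mono ?_)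
    ?_ fun x' y' => ?_
  · have hpow : A ^ (p / 2 - 1) ≤ y ^ (p - 2) :=
      rpow_half_sub_one_le hp₂ hy (by rw [hA]; nlinarith [sq_nonneg ‖x i‖, sq_nonneg r])
    calc 0 + p / 2 * A ^ (p / 2 - 1) * (2 * n + 4) = p * (n + 2) * A ^ (p / 2 - 1) := by ring
      _ ≤ p * (n + 2) * y ^ (p - 2) := by gcongr
  · simp only [sub_zero, ← hA]
    ring
  · simp only [sub_zero]
    linarith [rpow_half_le_tangent (B := ‖x' i‖ ^ 2 + y' ^ 2 + r ^ 2) hp₀ hp₂ hApos (by positivity)]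

theorem tendsto_regularized_rpow {γ : ℝ} (hγ : γ < 2) (hp₀ : 0 < p) (hp₂ : p ≤ 2) (hA : 0 < A) :
    Tendsto (fun y : ℝ => ((A + y ^ 2) ^ (p / 2) - A ^ (p / 2)) / y ^ γ) (𝓝[>] 0) (𝓝 0) := by
  have hlim := (tendsto_rpow_div_rpow hγ).const_mul (p / 2 * A ^ (p / 2 - 1))
  rw [mul_zero] at hlim
  refine tendsto_of_tendsto_of_tendsto_of_le_of_le' tendsto_const_nhds hlim ?_ ?_ <;>
    filter_upwards [self_mem_nhdsWithin] with y hy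
  · exact div_nonneg (sub_nonneg.2 (Real.rpow_le_rpow hA.le (by nlinarith) (by positivity)))
      (Real.rpow_nonneg (le_of_lt hy) _)
  · rw [← mul_div_assoc, Real.rpow_two]
    refine div_le_div_of_nonneg_right ?_ (Real.rpow_nonneg (le_of_lt hy) _)
    linarith [rpow_half_le_tangent (B := A + y ^ 2) hp₀ hp₂ hA (by positivity)]

theorem hasBoundaryJet_regularized_rpow [DecidableEq ι] {γ t : ℝ} (hγ : γ < 2) (hp₀ : 0 < p)
    (hp₂ : p ≤ 2) (hr : 0 < r) (hx : ‖x i‖ < 1) :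
    HasBoundaryJet γ (fun _ x y => (‖x i‖ ^ 2 + y ^ 2 + r ^ 2) ^ (p / 2)) 0 0 (2 * r ^ (p - 2)) t
      x where
  hasDerivWithinAt_time := hasDerivWithinAt_const ..
  nonneg := by positivity
  sub_le j := by
    filter_upwards [eventually_norm_sq_update_sub_le (ℓ := fun x => x i) (j := j) (K := 1) hx
      fun z => by simpa using norm_update_sub_apply_le x j i z] with z hz
    set x' := Function.update x j z
    set A := ‖x i‖ ^ 2 + 0 ^ 2 + r ^ 2 with hA
    have hApos : 0 < A := by positivity
    have hslope : p / 2 * A ^ (p / 2 - 1) ≤ r ^ (p - 2) :=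
      (mul_le_of_le_one_left (by positivity) (by linarith)).trans
        (rpow_half_sub_one_le hp₂ hr (by rw [hA]; nlinarith [sq_nonneg ‖x i‖]))
    have htangent := rpow_half_le_tangent (B := ‖x' i‖ ^ 2 + 0 ^ 2 + r ^ 2) hp₀ hp₂ hApos
      (by positivity)
    calc _ ≤ p / 2 * A ^ (p / 2 - 1) * (‖x' i‖ ^ 2 - ‖x i‖ ^ 2) := by linarith
      _ ≤ p / 2 * A ^ (p / 2 - 1) * (2 * ‖z - x j‖) := by gcongr; linarith
      _ ≤ r ^ (p - 2) * (2 * ‖z - x j‖) := by gcongr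
      _ = 2 * r ^ (p - 2) * ‖z - x j‖ := by ring
  tendsto_normal := by
    have hlim := tendsto_regularized_rpow (A := ‖x i‖ ^ 2 + r ^ 2) hγ hp₀ hp₂ (by positivity)
    rw [zero_div]
    refine hlim.congr fun y => ?_
    rw [add_right_comm, zero_pow two_ne_zero, add_zero]

end RegularizedPower

/-- The barrier for `c u x₀ + u x₁`: a regularized power `|(x₁, y)| ^ p` with a correction in the
height that makes it a supersolution and a drift in time that absorbs the normal derivative of that
correction, and a penalization of the increment `x₀ - x₁` away from `h`. -/
def twoPointBarrier {n : ℕ} (γ p K L N' E₀ r : ℝ) (h : En n) (t₀ t : ℝ) (x : Fin 2 → En n)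
    (y : ℝ) : ℝ :=
  E₀ + L * ((‖x 1‖ ^ 2 + y ^ 2 + r ^ 2) ^ (p / 2) + K * (y ^ γ - y ^ p) + 2 * K * γ * (t - t₀)) +
    N' * ‖x 0 - x 1 - h‖ ^ 2

section TwoPointBarrier

variable {n : ℕ} {γ δ p c K L N' E₀ r t₀ t y : ℝ} {h : En n} {x : Fin 2 → En n}

theorem continuous_twoPointBarrier (hγ : 0 ≤ γ) (hp : 0 ≤ p) :
    Continuous fun P : ℝ × (Fin 2 → En n) × ℝ =>
      twoPointBarrier γ p K L N' E₀ r h t₀ P.1 P.2.1 P.2.2 := by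
  have hpow : Continuous fun P : ℝ × (Fin 2 → En n) × ℝ =>
      (‖P.2.1 1‖ ^ 2 + P.2.2 ^ 2 + r ^ 2) ^ (p / 2) :=
    Continuous.rpow_const (by fun_prop) fun _ => Or.inr (by positivity)
  have hheight {q : ℝ} (hq : 0 ≤ q) : Continuous fun P : ℝ × (Fin 2 → En n) × ℝ => P.2.2 ^ q :=
    Continuous.rpow_const (by fun_prop) fun _ => Or.inr hq
  have hγ' := hheight hγ
  have hp' := hheight hp
  unfold twoPointBarrier
  fun_prop

theorem isStrictBarrierAt_twoPointBarrier_of_pos (hγ₀ : 0 ≤ γ) (hγ₁ : γ ≤ 1) (hp₀ : 0 < p)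
    (hp₂ : p ≤ 2) (hL : 0 < L) (hN' : 0 ≤ N') (hK₀ : 0 ≤ K) (hK : n + 2 < K * (p - γ))
    (hy : 0 < y) :
    IsStrictBarrierAt γ δ ![c, 1] (twoPointBarrier γ p K L N' E₀ r h t₀) t x y := by
  let e : Fin 2 → OrthonormalBasis (Fin n) ℝ (En n) := fun _ => EuclideanSpace.basisFun (Fin n) ℝ
  have hconst (C : ℝ) := hasCoupledLaplacianLE_of_height (e := e) (x := x)
    (hasBesselAt_const (1 - γ) C y)
  have hpow := hasCoupledLaplacianLE_regularized_rpow (a := 1 - γ) (e := e) (x := x) (i := 1)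
    (r := r) (by linarith) (by linarith) hp₀ hp₂ hy
  have hheight := hasCoupledLaplacianLE_of_height (e := e) (x := x)
    ((hasBesselAt_rpow hy (1 - γ) γ).sub (hasBesselAt_rpow hy (1 - γ) p))
  have hpen := hasCoupledLaplacianLE_norm_sub_sub_sq (a := 1 - γ) (e := e) (x := x) (y := y)
    (i := 0) (k := 1) rfl h
  refine Or.inl ⟨hy, e, _, ?_, ((hconst E₀).add (((hpow.add (hheight.const_mul hK₀)).add
    (hconst (2 * K * γ * (t - t₀)))).const_mul hL.le)).add (hpen.const_mul hN')⟩
  have hpos : 0 < L * (p * y ^ (p - 2)) := by positivity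
  linarith [mul_pos hpos (sub_pos.2 hK)]

theorem isStrictBarrierAt_twoPointBarrier_of_eq_zero (hγ₀ : 0 < γ) (hγ₁ : γ < 2) (hp : γ < p)
    (hp₂ : p ≤ 2) (hL : 0 ≤ L) (hr : 0 < r) (hK : 0 ≤ K) (hN' : 0 ≤ N') (hh : ‖h‖ ≤ 1)
    (hc : |c| ≤ 1) (hδ₀ : 0 ≤ δ)
    (hδ : δ * (2 + 2 * (L * (2 * r ^ (p - 2)) + 12 * N')) < L * (K * γ)) (hx : ∀ j, ‖x j‖ < 1) :
    IsStrictBarrierAt γ δ ![c, 1] (twoPointBarrier γ p K L N' E₀ r h t₀) t x 0 := by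
  have hp₀ : 0 < p := hγ₀.trans hp
  have hpow := hasBoundaryJet_regularized_rpow (t := t) hγ₁ hp₀ hp₂ hr (hx 1)
  have hlim : Tendsto (fun y : ℝ => ((y ^ γ - y ^ p) - ((0 : ℝ) ^ γ - (0 : ℝ) ^ p)) / y ^ γ)
      (𝓝[>] 0) (𝓝 (γ / γ)) := by
    have hlim := (tendsto_rpow_div_rpow hp).const_sub 1
    rw [sub_zero] at hlim
    rw [div_self hγ₀.ne']
    refine hlim.congr' ?_
    filter_upwards [self_mem_nhdsWithin] with y hy
    have := Real.rpow_pos_of_pos (show 0 < y from hy) γ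
    rw [Real.zero_rpow hγ₀.ne', Real.zero_rpow hp₀.ne']
    field_simp
    ring
  have htime : HasDerivWithinAt (fun τ => 2 * K * γ * (τ - t₀)) (2 * K * γ) (Iic t) t :=
    (((hasDerivAt_id t).sub_const t₀).const_mul (2 * K * γ)).hasDerivWithinAt.congr_deriv
      (mul_one _)
  refine Or.inr ⟨rfl, _, _, _, ((hasBoundaryJet_of_time (hasDerivWithinAt_const t (Iic t) E₀)).add
    (((hpow.add ((hasBoundaryJet_of_height (g := fun y => y ^ γ - y ^ p) hlim).const_mul hK)).add
      (hasBoundaryJet_of_time htime)).const_mul hL)).add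
    ((hasBoundaryJet_norm_sub_sub_sq (i := 0) (k := 1) hh hx).const_mul hN'), ?_⟩
  rw [show ∑ j, |(![c, 1] : Fin 2 → ℝ) j| = |c| + 1 by simp [Fin.sum_univ_two], Fintype.card_fin]
  push_cast
  linarith [mul_nonneg hδ₀ (sub_nonneg.2 hc)]

end TwoPointBarrier

/-- Upper bounds on the combination `c * u (x₁, y) + u (x₂, y) - E₀` after time `t₀`, with the two
base points decoupled at the cost of `N` times the squared distance of `x₁` from `x₂ + h`: `m` is a
bound everywhere, and `φ` controls the initial values on the boundary. -/
structure HasPenalizedUpperBounds {n : ℕ} (c E₀ N m t₀ R : ℝ) (φ : En n → ℝ) (h : En n)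
    (u : ℝ → En n × ℝ → ℝ) : Prop where
  sub_le : ∀ t ∈ Icc t₀ 0, ∀ y ∈ Icc 0 R, ∀ x₁ x₂ : En n, ‖x₁‖ ≤ R → ‖x₂‖ ≤ R →
    c * u t (x₁, y) + u t (x₂, y) - E₀ ≤ m + N * ‖x₁ - x₂ - h‖ ^ 2
  sub_le_initial : ∀ x₁ x₂ : En n, ‖x₁‖ ≤ R → ‖x₂‖ ≤ R →
    c * u t₀ (x₁, 0) + u t₀ (x₂, 0) - E₀ ≤ φ x₂ + N * ‖x₁ - x₂ - h‖ ^ 2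

/-- The constraints on the parameters of `twoPointBarrier` that make it a strict barrier and
localize its contact points to the half ball of radius `R`. -/
structure TwoPointConstants (n : ℕ) (γ p R K C : ℝ) : Prop where
  nonneg : 0 ≤ K
  lt_mul_sub : n + 2 < K * (p - γ)
  one_le : 1 ≤ C
  one_le_mul_rpow : 1 ≤ C * (R / 2) ^ p

theorem exists_twoPointConstants (n : ℕ) {γ p R : ℝ} (hp : γ < p) (hR : 0 < R) :
    ∃ K C, TwoPointConstants n γ p R K C := by
  have hgap : 0 < p - γ := sub_pos.2 hp
  have hpow : 0 < (R / 2) ^ p := by positivity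
  have hinv : 0 < 1 / (R / 2) ^ p := by positivity
  refine ⟨(n + 3) / (p - γ), 1 + 1 / (R / 2) ^ p, by positivity, ?_, by linarith, ?_⟩
  · rw [div_mul_cancel₀ _ hgap.ne']
    linarith
  · rw [add_mul, one_mul, div_mul_cancel₀ _ hpow.ne']
    linarith

theorem multipointSum_two {n : ℕ} (c : ℝ) (v : En n × ℝ → ℝ) (x : Fin 2 → En n) (y : ℝ) :
    multipointSum ![c, 1] v x y = c * v (x 0, y) + v (x 1, y) := by
  simp [multipointSum, Fin.sum_univ_two]

section TwoPointEstimate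

variable {n : ℕ} {γ δ p c E₀ N m K L C μ r R t₀ t y : ℝ} {h : En n} {x : Fin 2 → En n}
  {u : ℝ → En n × ℝ → ℝ}

theorem twoPointBarrier_localization (hγ₀ : 0 < γ) (hp : γ < p) (hK : 0 ≤ K) (hL : 0 ≤ L)
    (hR : R ≤ 1) {φ : En n → ℝ} (hu : HasPenalizedUpperBounds c E₀ N m t₀ R φ h u)
    (hmem : (t, x, y) ∈ multipointCylinder (Fin 2) n t₀ 0 R)
    (hlt : twoPointBarrier γ p K L (N + 16 * m / R ^ 2) E₀ r h t₀ t x y <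
      multipointSum ![c, 1] (u t) x y) :
    L * (‖x 1‖ ^ 2 + y ^ 2 + r ^ 2) ^ (p / 2) + 16 * m / R ^ 2 * ‖x 0 - x 1 - h‖ ^ 2 < m := by
  obtain ⟨ht, hx, hy⟩ := mem_multipointCylinder.1 hmem
  have hbound := hu.sub_le t ht y hy (x 0) (x 1) (hx 0) (hx 1)
  have hheight : 0 ≤ y ^ γ - y ^ p := by
    rw [sub_nonneg]
    rcases hy.1.eq_or_lt with rfl | hy₀
    · rw [Real.zero_rpow hγ₀.ne', Real.zero_rpow (hγ₀.trans hp).ne']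
    · exact Real.rpow_le_rpow_of_exponent_ge hy₀ (by linarith [hy.2]) hp.le
  have htime : 0 ≤ t - t₀ := sub_nonneg.2 ht.1
  have hcorr : 0 ≤ L * (K * (y ^ γ - y ^ p)) := by positivity
  have hdrift : 0 ≤ L * (2 * K * γ * (t - t₀)) := by positivity
  rw [multipointSum_two, twoPointBarrier] at hlt
  linarith

theorem twoPointBarrier_localized (hp₀ : 0 < p) (hR : 0 < R) (hm : 0 < m) (hμ : 1 ≤ μ)
    (hh : ‖h‖ ≤ R / 4) (hK : TwoPointConstants n γ p R K C)
    (hlt : m * C * μ * (‖x 1‖ ^ 2 + y ^ 2 + r ^ 2) ^ (p / 2) +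
      16 * m / R ^ 2 * ‖x 0 - x 1 - h‖ ^ 2 < m) : (∀ j, ‖x j‖ < R) ∧ y < R := by
  have hC := hK.one_le
  have hfst : 0 ≤ m * C * μ * (‖x 1‖ ^ 2 + y ^ 2 + r ^ 2) ^ (p / 2) := by positivity
  have hsnd : 0 ≤ 16 * m / R ^ 2 * ‖x 0 - x 1 - h‖ ^ 2 := by positivity
  have hA : ‖x 1‖ ^ 2 + y ^ 2 + r ^ 2 < (R / 2) ^ 2 := by
    by_contra! hle
    have hpow := Real.rpow_le_rpow (z := p / 2) (by positivity) hle (by positivity)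
    rw [sq_rpow_half (by positivity)] at hpow
    have hone : m * 1 * 1 ≤ m * (C * (R / 2) ^ p) * μ := by
      gcongr
      exact hK.one_le_mul_rpow
    linarith [mul_le_mul_of_nonneg_left hpow (show 0 ≤ m * C * μ by positivity)]
  have hx₁ : ‖x 1‖ < R / 2 :=
    lt_of_pow_lt_pow_left₀ 2 (by positivity) (by linarith [sq_nonneg y, sq_nonneg r])
  have hyR : y < R / 2 :=
    lt_of_pow_lt_pow_left₀ 2 (by positivity) (by linarith [sq_nonneg ‖x 1‖, sq_nonneg r])
  have hξ : ‖x 0 - x 1 - h‖ < R / 4 := by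
    refine lt_of_pow_lt_pow_left₀ 2 (by positivity) ?_
    have hξ : 16 * m / R ^ 2 * ‖x 0 - x 1 - h‖ ^ 2 < m := by linarith
    rw [div_mul_eq_mul_div, div_lt_iff₀ (by positivity)] at hξ
    have : 16 * ‖x 0 - x 1 - h‖ ^ 2 < R ^ 2 := lt_of_mul_lt_mul_left (by linarith) hm.le
    linarith
  have hx₀ : ‖x 0‖ ≤ ‖x 0 - x 1 - h‖ + ‖x 1‖ + ‖h‖ := by
    simpa [add_assoc] using norm_add₃_le (a := x 0 - x 1 - h) (b := x 1) (c := h)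
  refine ⟨Fin.forall_fin_two.2 ⟨?_, ?_⟩, ?_⟩ <;> linarith

theorem isStrictBarrierAt_twoPointBarrier_of_lt (hγ₀ : 0 < γ) (hγ₁ : γ < 1) (hp : γ < p)
    (hp₂ : p ≤ 2) (hR₀ : 0 < R) (hR : R ≤ 1 / 2) (hm : 0 < m) (hμ : 1 ≤ μ) (hr : 0 < r)
    (hN : 0 ≤ N) (hδ₀ : 0 ≤ δ) (hc : |c| ≤ 1) (hh : ‖h‖ ≤ R / 4)
    (hK : TwoPointConstants n γ p R K C)
    (hδ : δ * (2 + 2 * (m * C * μ * (2 * r ^ (p - 2)) + 12 * (N + 16 * m / R ^ 2))) <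
      m * C * μ * (K * γ))
    (hu : HasPenalizedUpperBounds c E₀ N m t₀ R
      (fun x => m * μ * (‖x‖ ^ 2 + r ^ 2) ^ (p / 2)) h u)
    (hmem : (t, x, y) ∈ multipointCylinder (Fin 2) n t₀ 0 R)
    (hlt : twoPointBarrier γ p K (m * C * μ) (N + 16 * m / R ^ 2) E₀ r h t₀ t x y <
      multipointSum ![c, 1] (u t) x y) :
    (∀ j, ‖x j‖ < R) ∧ y < R ∧ (y = 0 → t₀ < t) ∧ IsStrictBarrierAt γ δ ![c, 1]
      (twoPointBarrier γ p K (m * C * μ) (N + 16 * m / R ^ 2) E₀ r h t₀) t x y := by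
  obtain ⟨ht, hxR, hyR⟩ := mem_multipointCylinder.1 hmem
  have hK₀ := hK.nonneg
  have hC := hK.one_le
  have hp₀ := hγ₀.trans hp
  have hL : 0 < m * C * μ := by positivity
  have hN' : 0 ≤ N + 16 * m / R ^ 2 := by positivity
  obtain ⟨hx, hy⟩ := twoPointBarrier_localized hp₀ hR₀ hm hμ hh hK
    (twoPointBarrier_localization hγ₀ hp hK₀ hL.le (by linarith) hu hmem hlt)
  refine ⟨hx, hy, ?_, ?_⟩
  · rintro rfl
    refine ht.1.lt_of_ne ?_
    rintro rfl
    have hinitial := hu.sub_le_initial (x 0) (x 1) (hxR 0) (hxR 1)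
    have hscale : m * 1 * μ * (‖x 1‖ ^ 2 + r ^ 2) ^ (p / 2) ≤
        m * C * μ * (‖x 1‖ ^ 2 + r ^ 2) ^ (p / 2) := by gcongr
    have hpen : 0 ≤ 16 * m / R ^ 2 * ‖x 0 - x 1 - h‖ ^ 2 := by positivity
    rw [multipointSum_two, twoPointBarrier, Real.zero_rpow hγ₀.ne', Real.zero_rpow hp₀.ne',
      zero_pow two_ne_zero, add_zero] at hlt
    linarith
  · rcases hyR.1.eq_or_lt with rfl | hy
    · exact isStrictBarrierAt_twoPointBarrier_of_eq_zero hγ₀ (by linarith) hp hp₂ hL.le hr hK₀ hN'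
        (by linarith) hc hδ₀ hδ fun j => (hx j).trans_le (by linarith)
    · exact isStrictBarrierAt_twoPointBarrier_of_pos hγ₀.le hγ₁.le hp₀ hp₂ hL hN' hK₀
        hK.lt_mul_sub hy

theorem multipointSum_two_le (hγ₀ : 0 < γ) (hγ₁ : γ < 1) (hp : γ < p) (hp₂ : p ≤ 2) (hR₀ : 0 < R)
    (hR : R ≤ 1 / 2) (hm : 0 < m) (hμ : 1 ≤ μ) (hr : 0 < r) (hN : 0 ≤ N) (hδ₀ : 0 ≤ δ)
    (hc : |c| ≤ 1) (hh : ‖h‖ ≤ R / 4) (ht₀ : -1 ≤ t₀) (hK : TwoPointConstants n γ p R K C)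
    (hδ : δ * (2 + 2 * (m * C * μ * (2 * r ^ (p - 2)) + 12 * (N + 16 * m / R ^ 2))) <
      m * C * μ * (K * γ))
    (hu : IsNormalizedSolution γ δ u)
    (hbd : HasPenalizedUpperBounds c E₀ N m t₀ R
      (fun x => m * μ * (‖x‖ ^ 2 + r ^ 2) ^ (p / 2)) h u)
    (ht : t ∈ Icc t₀ 0) (hy : y ∈ Icc 0 R) {x : En n} (hx : ‖x‖ ≤ R / 2) :
    multipointSum ![c, 1] (u t) ![x + h, x] y - E₀ ≤
      C * (1 + K + 2 * K * γ) * m * μ *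
        ((‖x‖ ^ 2 + y ^ 2 + r ^ 2) ^ (p / 2) + y ^ γ + (t - t₀)) := by
  have hmem : (t, ![x + h, x], y) ∈ multipointCylinder (Fin 2) n t₀ 0 R := by
    refine mem_multipointCylinder.2 ⟨ht, Fin.forall_fin_two.2 ⟨?_, ?_⟩, hy⟩ <;>
      simp only [Matrix.cons_val] <;> linarith [norm_add_le x h]
  have hcomp := multipointSum_le_of_isStrictBarrierAt (c := ![c, 1]) hγ₀ hu ht₀ le_rfl hR
    (continuous_twoPointBarrier hγ₀.le (hγ₀.trans hp).le).continuousOn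
    (fun τ z w hz hlt => Or.inr (isStrictBarrierAt_twoPointBarrier_of_lt hγ₀ hγ₁ hp hp₂ hR₀ hR hm hμ
      hr hN hδ₀ hc hh hK hδ hbd hz hlt)) hmem
  have hK₀ := hK.nonneg
  have hC := hK.one_le
  have hy₀ := hy.1
  have htime : 0 ≤ t - t₀ := sub_nonneg.2 ht.1
  simp only [twoPointBarrier, Matrix.cons_val, add_sub_cancel_left, sub_self, norm_zero] at hcomp
  set W := (‖x‖ ^ 2 + y ^ 2 + r ^ 2) ^ (p / 2)
  have hprofile : W + K * (y ^ γ - y ^ p) + 2 * K * γ * (t - t₀) ≤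
      (1 + K + 2 * K * γ) * (W + y ^ γ + (t - t₀)) := by
    have hp' : 0 ≤ K * y ^ p := by positivity
    have hW : 0 ≤ (K + 2 * K * γ) * W := by positivity
    have hγ' : 0 ≤ (1 + 2 * K * γ) * y ^ γ := by positivity
    have ht' : 0 ≤ (1 + K) * (t - t₀) := by positivity
    linarith
  linarith [mul_le_mul_of_nonneg_left hprofile (show 0 ≤ m * C * μ by positivity)]

end TwoPointEstimate

theorem exists_twoPoint_estimate (n : ℕ) {γ p R : ℝ} (hγ₀ : 0 < γ) (hγ₁ : γ < 1) (hp : γ < p)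
    (hp₂ : p ≤ 2) (hR₀ : 0 < R) (hR : R ≤ 1 / 2) :
    ∃ K, 0 < K ∧ ∀ μ r m₀ m₁ N : ℝ, 1 ≤ μ → 0 < r → 0 < m₀ → m₀ ≤ m₁ → 0 ≤ N → ∃ δ > 0,
      ∀ u : ℝ → En n × ℝ → ℝ, IsNormalizedSolution γ δ u → ∀ (c E₀ m t₀ : ℝ) (h : En n),
      |c| ≤ 1 → ‖h‖ ≤ R / 4 → m₀ ≤ m → m ≤ m₁ → -1 ≤ t₀ →
      HasPenalizedUpperBounds c E₀ N m t₀ R (fun x => m * μ * (‖x‖ ^ 2 + r ^ 2) ^ (p / 2)) h u →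
      ∀ t ∈ Icc t₀ 0, ∀ y ∈ Icc 0 R, ∀ x : En n, ‖x‖ ≤ R / 2 →
        c * u t (x + h, y) + u t (x, y) - E₀ ≤
          K * m * μ * ((‖x‖ ^ 2 + y ^ 2 + r ^ 2) ^ (p / 2) + y ^ γ + (t - t₀)) := by
  obtain ⟨K, C, hK⟩ := exists_twoPointConstants n hp hR₀
  have hK₀ : 0 < K := pos_of_mul_pos_left
    ((by positivity : (0 : ℝ) < n + 2).trans hK.lt_mul_sub) (sub_nonneg.2 hp.le)
  have hC := hK.one_le
  refine ⟨C * (1 + K + 2 * K * γ), by positivity, fun μ r m₀ m₁ N hμ hr hm₀ hm₀₁ hN => ?_⟩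
  have hm₁ : 0 < m₁ := hm₀.trans_le hm₀₁
  set G := m₁ * C * μ * (2 * r ^ (p - 2)) + 12 * (N + 16 * m₁ / R ^ 2) with hG
  have hG₀ : 0 ≤ G := by positivity
  set δ := m₀ * C * μ * (K * γ) / (2 * (2 + 2 * G)) with hδ
  refine ⟨δ, by positivity, fun u hu c E₀ m t₀ h hc hh hm hm' ht₀ hbd t ht y hy x hx => ?_⟩
  have hmpos : 0 < m := hm₀.trans_le hm
  have hδm : δ * (2 + 2 * (m * C * μ * (2 * r ^ (p - 2)) + 12 * (N + 16 * m / R ^ 2))) <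
      m * C * μ * (K * γ) :=
    calc _ ≤ δ * (2 + 2 * G) := by
          rw [hG]
          gcongr
      _ = m₀ * C * μ * (K * γ) / 2 := by
          rw [hδ]
          field_simp
      _ < m₀ * C * μ * (K * γ) := half_lt_self (by positivity)
      _ ≤ m * C * μ * (K * γ) := by gcongr
  simpa only [multipointSum_two, Matrix.cons_val] using multipointSum_two_le hγ₀ hγ₁ hp hp₂ hR₀ hR
    hmpos hμ hr hN (by positivity) hc hh ht₀ hK hδm hu hbd ht hy hx

/-! ### Expansion at the origin -/

section Expansion

variable {n : ℕ} {γ δ η r R ε C C' N : ℝ} {u : ℝ → En n × ℝ → ℝ}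

theorem rpow_le_rpow_half {z S p : ℝ} (hz : 0 ≤ z) (hzS : z ^ 2 ≤ S) (hp : 0 ≤ p) :
    z ^ p ≤ S ^ (p / 2) := by
  rw [← sq_rpow_half hz]
  gcongr

theorem rpow_le_rpow_neg_mul_rpow_half {z S : ℝ} (hr : 0 < r) (hz : 0 ≤ z) (hrS : r ^ 2 ≤ S)
    (hzS : z ^ 2 ≤ S) (hγ : 0 ≤ γ) (hη : 0 ≤ η) : z ^ γ ≤ r ^ (-η) * S ^ ((γ + η) / 2) := by
  have hS : 0 < S := (by positivity : 0 < r ^ 2).trans_le hrS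
  have hrη : 0 < r ^ η := by positivity
  rw [Real.rpow_neg hr.le, ← div_eq_inv_mul, le_div_iff₀ hrη, add_div, Real.rpow_add hS]
  gcongr
  exacts [rpow_le_rpow_half hz hzS hγ, rpow_le_rpow_half hr.le hrS hη]

theorem HasHolderBound.hasPenalizedUpperBounds_zero {t : ℝ} (hH : HasHolderBound C 1 r R u)
    (hu : IsNormalizedSolution γ δ u) (hC : 0 ≤ C) (hr : 0 ≤ r) (hR₀ : 0 ≤ R) (hR : R ≤ 1 / 2)
    (ht : t ∈ Icc (-R) 0) :
    HasPenalizedUpperBounds 0 (u t (0, 0)) 0 2 t R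
      (fun x => 2 * (C + 1) * (‖x‖ ^ 2 + r ^ 2) ^ ((1 : ℝ) / 2)) 0 u where
  sub_le τ hτ y hy x₁ x₂ _ hx₂ := by
    have hbase := hu.abs_le_one_of_norm_le (x := 0) (y := 0) ⟨by linarith [ht.1], ht.2⟩
      (by norm_num) (by norm_num)
    have hother := hu.abs_le_one_of_norm_le (t := τ) ⟨by linarith [ht.1, hτ.1], hτ.2⟩
      (hx₂.trans hR) ⟨hy.1, hy.2.trans hR⟩
    linarith [(abs_le.1 hbase).1, (abs_le.1 hother).2]
  sub_le_initial x₁ x₂ _ hx₂ := by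
    have hLip := (abs_le.1 (hH t ht 0 ⟨le_rfl, hR₀⟩ x₂ 0 hx₂ (by simpa using hR₀))).2
    rw [sub_zero, Real.rpow_one] at hLip
    have hx : ‖x₂‖ ≤ (‖x₂‖ ^ 2 + r ^ 2) ^ ((1 : ℝ) / 2) := by
      simpa using rpow_le_rpow_half (p := 1) (norm_nonneg x₂)
        (le_add_of_nonneg_right (sq_nonneg r)) zero_le_one
    have hr : r ≤ (‖x₂‖ ^ 2 + r ^ 2) ^ ((1 : ℝ) / 2) := by
      simpa using rpow_le_rpow_half (p := 1) hr (le_add_of_nonneg_left (sq_nonneg ‖x₂‖)) zero_le_one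
    nlinarith

theorem AlmostHolder.exists_vertical_estimate (hH : AlmostHolder n γ R 1) (hγ₀ : 0 < γ)
    (hγ₁ : γ < 1) (hR₀ : 0 < R) (hR : R ≤ 1 / 2) :
    ∃ K, 0 < K ∧ ∀ r, 0 < r → r ≤ R → ∃ δ > 0, ∀ u : ℝ → En n × ℝ → ℝ,
      IsNormalizedSolution γ δ u → ∀ t ∈ Icc (-R) 0, |u t (0, r) - u t (0, 0)| ≤ K * r ^ γ := by
  obtain ⟨C, hC, hH⟩ := hH
  obtain ⟨K, hK, htwo⟩ := exists_twoPoint_estimate n hγ₀ hγ₁ hγ₁ one_le_two hR₀ hR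
  refine ⟨K * 2 * (C + 1) * 3, by positivity, fun r hr hrR => ?_⟩
  obtain ⟨δ₁, hδ₁, hH⟩ := hH r hr
  obtain ⟨δ₂, hδ₂, htwo⟩ := htwo (C + 1) r 2 2 0 (by linarith) hr two_pos le_rfl le_rfl
  have hpow : (‖(0 : En n)‖ ^ 2 + r ^ 2 + r ^ 2) ^ ((1 : ℝ) / 2) ≤ 2 * r := by
    rw [← Real.sqrt_eq_rpow, norm_zero]
    exact Real.sqrt_le_iff.2 ⟨by positivity, by nlinarith⟩
  have hrγ : r ≤ r ^ γ := Real.self_le_rpow_of_le_one hr.le (by linarith) hγ₁.le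
  have hupper : ∀ u : ℝ → En n × ℝ → ℝ, IsNormalizedSolution γ (min δ₁ δ₂) u → ∀ t ∈ Icc (-R) 0,
      u t (0, r) - u t (0, 0) ≤ K * 2 * (C + 1) * 3 * r ^ γ := by
    intro u hu t ht
    have hbound := htwo u (hu.mono (min_le_right _ _)) 0 (u t (0, 0)) 2 t 0 (by simp)
      (by rw [norm_zero]; positivity) le_rfl le_rfl (by linarith [ht.1])
      ((hH u (hu.mono (min_le_left _ _))).hasPenalizedUpperBounds_zero hu hC hr.le hR₀.le hR ht)
      t ⟨le_rfl, ht.2⟩ r ⟨hr.le, hrR⟩ 0 (by rw [norm_zero]; positivity)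
    calc u t (0, r) - u t (0, 0)
        ≤ K * 2 * (C + 1) *
            ((‖(0 : En n)‖ ^ 2 + r ^ 2 + r ^ 2) ^ ((1 : ℝ) / 2) + r ^ γ + (t - t)) := by
          linarith
      _ ≤ K * 2 * (C + 1) * (3 * r ^ γ) := by
          gcongr
          linarith
      _ = K * 2 * (C + 1) * 3 * r ^ γ := by ring
  exact ⟨min δ₁ δ₂, lt_min hδ₁ hδ₂, fun u hu t ht =>
    abs_le.2 ⟨by linarith [hupper _ hu.neg t ht], hupper u hu t ht⟩⟩

theorem HasHolderBound.sub_le_initial_of_hasHolderIncrements {t₀ : ℝ} {h x₁ x₂ : En n}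
    (hH : HasHolderBound C 1 ε R u) (hI : HasHolderIncrements γ C' 1 ε R u)
    (hN : ∀ z : ℝ, 0 ≤ z → C * z ^ (1 : ℝ) ≤ ε + N * z ^ 2) (hC : 0 ≤ C) (hC' : 0 ≤ C')
    (hγ : 0 ≤ γ) (hη : 0 ≤ η) (hr : 0 < r) (hε : 3 * ε ≤ r * r ^ γ) (hrR : r ≤ R / 2)
    (ht₀ : t₀ ∈ Icc (-R) 0) (hh : ‖h‖ ≤ r) (hx₁ : ‖x₁‖ ≤ R / 2) (hx₂ : ‖x₂‖ ≤ R / 2) :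
    -1 * u t₀ (x₁, 0) + u t₀ (x₂, 0) - (u t₀ (0, 0) - u t₀ (h, 0)) ≤
      (2 * C + C' + 1) * (‖h‖ + r) * r ^ (-η) * (‖x₂‖ ^ 2 + r ^ 2) ^ ((γ + η) / 2) +
        N * ‖x₁ - x₂ - h‖ ^ 2 := by
  have hR : 0 ≤ R := by linarith
  have hLip := (abs_le.1 (hH t₀ ht₀ 0 ⟨le_rfl, hR⟩ (x₂ + h) x₁
    ((norm_add_le _ _).trans (by linarith)) (by linarith))).2
  rw [← norm_neg, show -(x₂ + h - x₁) = x₁ - x₂ - h by abel] at hLip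
  have hinc := (abs_le.1 (hI t₀ ht₀ 0 ⟨le_rfl, hR⟩ x₂ 0 h (by linarith) (by simpa using hR)
    (by linarith))).2
  rw [sub_zero, zero_add, Real.rpow_one] at hinc
  set P := r ^ (-η) * (‖x₂‖ ^ 2 + r ^ 2) ^ ((γ + η) / 2) with hP
  have hxP : ‖x₂‖ ^ γ ≤ P := rpow_le_rpow_neg_mul_rpow_half hr (norm_nonneg _)
    (le_add_of_nonneg_left (sq_nonneg _)) (le_add_of_nonneg_right (sq_nonneg _)) hγ hη
  have hrP : r ^ γ ≤ P := rpow_le_rpow_neg_mul_rpow_half hr hr.le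
    (le_add_of_nonneg_left (sq_nonneg _)) (le_add_of_nonneg_left (sq_nonneg _)) hγ hη
  have hterms : C' * ‖h‖ * ‖x₂‖ ^ γ + 3 * ε ≤ (2 * C + C' + 1) * (‖h‖ + r) * P :=
    calc C' * ‖h‖ * ‖x₂‖ ^ γ + 3 * ε ≤ C' * ‖h‖ * P + r * P :=
          add_le_add (by gcongr) (hε.trans (by gcongr))
      _ ≤ C' * ‖h‖ * P + r * P + ((2 * C + 1) * ‖h‖ + (2 * C + C') * r) * P :=
          le_add_of_nonneg_right (by positivity)
      _ = (2 * C + C' + 1) * (‖h‖ + r) * P := by ring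
  rw [mul_assoc _ (r ^ (-η)), ← hP]
  linarith [hN ‖x₁ - x₂ - h‖ (norm_nonneg _)]

theorem HasHolderBound.hasPenalizedUpperBounds_increment {t₀ : ℝ} {h : En n}
    (hH : HasHolderBound C 1 ε R u) (hI : HasHolderIncrements γ C' 1 ε R u)
    (hN : ∀ z : ℝ, 0 ≤ z → C * z ^ (1 : ℝ) ≤ ε + N * z ^ 2) (hC : 0 ≤ C) (hC' : 0 ≤ C')
    (hγ : 0 ≤ γ) (hη : 0 ≤ η) (hr : 0 < r) (hr₁ : r ≤ 1) (hε : 3 * ε ≤ r * r ^ γ)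
    (hrR : r ≤ R / 2) (ht₀ : t₀ ∈ Icc (-R) 0) (hh : ‖h‖ ≤ r) :
    HasPenalizedUpperBounds (-1) (u t₀ (0, 0) - u t₀ (h, 0)) N ((2 * C + C' + 1) * (‖h‖ + r)) t₀
      (R / 2) (fun x => (2 * C + C' + 1) * (‖h‖ + r) * r ^ (-η) *
        (‖x‖ ^ 2 + r ^ 2) ^ ((γ + η) / 2)) h u where
  sub_le t ht y hy x₁ x₂ hx₁ hx₂ := by
    have hR : 0 ≤ R := by linarith
    have hLip := (abs_le.1 (hH t ⟨ht₀.1.trans ht.1, ht.2⟩ y ⟨hy.1, by linarith [hy.2]⟩ x₂ x₁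
      (by linarith) (by linarith))).2
    have hbase := (abs_le.1 (hH t₀ ht₀ 0 ⟨le_rfl, hR⟩ h 0 (by linarith) (by simpa using hR))).2
    rw [Real.rpow_one] at hLip hbase
    rw [sub_zero] at hbase
    have hdist : ‖x₂ - x₁‖ ≤ ‖x₁ - x₂ - h‖ + ‖h‖ := by
      rw [norm_sub_rev]
      simpa using norm_add_le (x₁ - x₂ - h) h
    have hpen := hN ‖x₁ - x₂ - h‖ (norm_nonneg _)
    rw [Real.rpow_one] at hpen
    have hεr : 3 * ε ≤ r := hε.trans (mul_le_of_le_one_right hr.le (Real.rpow_le_one hr.le hr₁ hγ))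
    have hslack : 0 ≤ (C' + 1) * ‖h‖ + (2 * C + C') * r := by positivity
    linarith [mul_le_mul_of_nonneg_left hdist hC]
  sub_le_initial _ _ hx₁ hx₂ := hH.sub_le_initial_of_hasHolderIncrements hI hN hC hC' hγ hη hr hε
    hrR ht₀ hh hx₁ hx₂

theorem regularized_rpow_add_le {t y : ℝ} (hγ : 0 ≤ γ) (hη : 0 ≤ η) (hp : γ + η ≤ 2) (hr : 0 < r)
    (hr₁ : r ≤ 1) (hy : y ∈ Icc 0 r) (ht : t ≤ 0) :
    (‖(0 : En n)‖ ^ 2 + y ^ 2 + r ^ 2) ^ ((γ + η) / 2) + y ^ γ + (t - -(r ^ γ)) ≤ 4 * r ^ γ := by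
  have hpow : (‖(0 : En n)‖ ^ 2 + y ^ 2 + r ^ 2) ^ ((γ + η) / 2) ≤ 2 * r ^ γ :=
    calc (‖(0 : En n)‖ ^ 2 + y ^ 2 + r ^ 2) ^ ((γ + η) / 2) ≤ (2 * r ^ 2) ^ ((γ + η) / 2) := by
          gcongr
          rw [norm_zero]
          nlinarith [hy.1, hy.2]
      _ = 2 ^ ((γ + η) / 2) * r ^ (γ + η) := by
          rw [Real.mul_rpow two_pos.le (sq_nonneg r), sq_rpow_half hr.le]
      _ ≤ 2 * r ^ γ := by
          gcongr ?_ * ?_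
          · exact Real.rpow_le_self_of_one_le one_le_two (by linarith)
          · exact Real.rpow_le_rpow_of_exponent_ge hr hr₁ (by linarith)
  linarith [Real.rpow_le_rpow hy.1 hy.2 hγ]

theorem regularized_growth_le {M t y : ℝ} {h : En n} (hM : 0 ≤ M) (hγ : 0 ≤ γ) (hη : 0 ≤ η)
    (hp : γ + η ≤ 2) (hr : 0 < r) (hr₁ : r ≤ 1) (hy : y ∈ Icc 0 r) (ht : t ∈ Icc (-(r ^ γ)) 0)
    (hh : ‖h‖ ≤ r) :
    M * (‖h‖ + r) * r ^ (-η) *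
        ((‖(0 : En n)‖ ^ 2 + y ^ 2 + r ^ 2) ^ ((γ + η) / 2) + y ^ γ + (t - -(r ^ γ))) ≤
      8 * M * r ^ (1 + γ - η) :=
  calc _ ≤ M * (r + r) * r ^ (-η) * (4 * r ^ γ) := by
        have hy₀ := hy.1
        have ht₀ := sub_nonneg.2 ht.1
        exact mul_le_mul (by gcongr) (regularized_rpow_add_le hγ hη hp hr hr₁ hy ht.2)
          (by positivity) (by positivity)
    _ = 8 * M * r ^ (1 + γ - η) := by
        rw [sub_eq_add_neg, Real.rpow_add hr, Real.rpow_add hr, Real.rpow_one]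
        ring

theorem AlmostHolder.exists_increment_sub_le (hH : AlmostHolder n γ R 1)
    (hI : AlmostHolderIncrements n γ R 1) (hγ₀ : 0 < γ) (hγ₁ : γ < 1) (hR : R ≤ 1 / 2)
    (hη : 0 < η) (hη₁ : η ≤ 1) :
    ∃ K, 0 < K ∧ ∀ r, 0 < r → r ≤ R / 8 → r ^ γ ≤ R → ∃ δ > 0, ∀ u : ℝ → En n × ℝ → ℝ,
      IsNormalizedSolution γ δ u → ∀ t ∈ Icc (-(r ^ γ)) 0, ∀ y ∈ Icc 0 r, ∀ h : En n, ‖h‖ ≤ r →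
      (u t (0, y) - u t (h, y)) - (u (-(r ^ γ)) (0, 0) - u (-(r ^ γ)) (h, 0)) ≤
        K * r ^ (1 + γ - η) := by
  obtain ⟨C, hC, hH⟩ := hH
  obtain ⟨C', hC', hI⟩ := hI
  rcases le_or_gt R 0 with hR₀ | hR₀
  · exact ⟨1, one_pos, fun r hr hrR => absurd hr (by linarith)⟩
  obtain ⟨K, hK, htwo⟩ := exists_twoPoint_estimate n (p := γ + η) (R := R / 2) hγ₀ hγ₁
    (by linarith) (by linarith) (by positivity) (by linarith)
  refine ⟨8 * (K * (2 * C + C' + 1)), by positivity, fun r hr hrR hrγ => ?_⟩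
  have hr₁ : r ≤ 1 := by linarith
  have hε : 0 < r * r ^ γ / 3 := by positivity
  obtain ⟨N, hN, hCN⟩ := exists_mul_rpow_le_add_mul_sq hC one_pos one_le_two hε
  obtain ⟨δ₁, hδ₁, hH⟩ := hH _ hε
  obtain ⟨δ₂, hδ₂, hI⟩ := hI _ hε
  obtain ⟨δ₃, hδ₃, htwo⟩ := htwo (r ^ (-η)) r ((2 * C + C' + 1) * r) ((2 * C + C' + 1) * (r + r)) N
    (Real.one_le_rpow_of_pos_of_le_one_of_nonpos hr hr₁ (by linarith)) hr (by positivity)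
    (by gcongr; linarith) hN
  refine ⟨min δ₁ (min δ₂ δ₃), by positivity, fun u hu t ht y hy h hh => ?_⟩
  have hbound := htwo u (hu.mono (by simp)) (-1) (u (-(r ^ γ)) (0, 0) - u (-(r ^ γ)) (h, 0))
    ((2 * C + C' + 1) * (‖h‖ + r)) (-(r ^ γ)) h (by simp) (by linarith)
    (by gcongr; exact le_add_of_nonneg_left (norm_nonneg h)) (by gcongr) (by linarith)
    ((hH u (hu.mono (by simp))).hasPenalizedUpperBounds_increment
      (hI u (hu.mono (by simp))) hCN hC hC' hγ₀.le hη.le hr hr₁ (by linarith) (by linarith)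
      ⟨by linarith, by linarith [ht.1, ht.2]⟩ hh)
    t ht y ⟨hy.1, by linarith [hy.2]⟩ 0 (by rw [norm_zero]; positivity)
  rw [zero_add, ← mul_assoc] at hbound
  linarith [regularized_growth_le (M := K * (2 * C + C' + 1)) (by positivity) hγ₀.le hη.le
    (by linarith) hr hr₁ hy ht hh]

theorem AlmostHolder.exists_increment_estimate (hH : AlmostHolder n γ R 1)
    (hI : AlmostHolderIncrements n γ R 1) (hγ₀ : 0 < γ) (hγ₁ : γ < 1) (hR : R ≤ 1 / 2)
    (hη : 0 < η) (hη₁ : η ≤ 1) :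
    ∃ K, 0 < K ∧ ∀ r, 0 < r → r ≤ R / 8 → r ^ γ ≤ R → ∃ δ > 0, ∀ u : ℝ → En n × ℝ → ℝ,
      IsNormalizedSolution γ δ u → ∀ t ∈ Icc (-(r ^ γ)) 0, ∀ y ∈ Icc 0 r, ∀ h : En n, ‖h‖ ≤ r →
      |(u t (0, y) - u t (h, y)) - (u (-(r ^ γ)) (0, 0) - u (-(r ^ γ)) (h, 0))| ≤
        K * r ^ (1 + γ - η) := by
  obtain ⟨K, hK, hle⟩ := hH.exists_increment_sub_le hI hγ₀ hγ₁ hR hη hη₁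
  refine ⟨K, hK, fun r hr hrR hrγ => ?_⟩
  obtain ⟨δ, hδ, hle⟩ := hle r hr hrR hrγ
  refine ⟨δ, hδ, fun u hu t ht y hy h hh => abs_le.2 ⟨?_, hle u hu t ht y hy h hh⟩⟩
  linarith [hle _ hu.neg t ht y hy h hh]

end Expansion

section AlmostAdditive

variable {r e S : ℝ}

theorem abs_le_three_mul_of_almost_additive {f : ℝ → ℝ} (hr : 0 ≤ r) (hfr : f r = 0)
    (hS : ∀ s ∈ Icc 0 r, |f s| ≤ S)
    (hf : ∀ s t, |s| ≤ r → |t| ≤ r → |f (s + t) - f s - f t| ≤ e) :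
    ∀ s ∈ Icc 0 r, |f s| ≤ 3 * e := by
  set T := sSup ((fun s => |f s|) '' Icc 0 r)
  have hle : ∀ s ∈ Icc 0 r, |f s| ≤ T := fun s hs =>
    le_csSup ⟨S, forall_mem_image.2 hS⟩ (mem_image_of_mem _ hs)
  have he : 0 ≤ e := (abs_nonneg _).trans (hf 0 0 (by simpa using hr) (by simpa using hr))
  have hhalf : ∀ s ∈ Icc 0 (r / 2), |f s| ≤ (T + e) / 2 := by
    intro s hs
    have hsr : |s| ≤ r := abs_le.2 ⟨by linarith [hs.1], by linarith [hs.2]⟩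
    have hdouble := abs_le.1 (hle (s + s) ⟨by linarith [hs.1], by linarith [hs.2]⟩)
    have hadd := abs_le.1 (hf s s hsr hsr)
    exact abs_le.2 ⟨by linarith, by linarith⟩
  have hself : ∀ s ∈ Icc 0 r, |f s| ≤ T / 2 + 3 / 2 * e := by
    intro s hs
    rcases le_total s (r / 2) with hsr | hsr
    · linarith [hhalf s ⟨hs.1, hsr⟩]
    · have hadd := abs_le.1 (hf s (r - s) (abs_le.2 ⟨by linarith, hs.2⟩)
        (abs_le.2 ⟨by linarith [hs.2], by linarith [hs.1]⟩))
      rw [add_sub_cancel, hfr] at hadd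
      have hcompl := abs_le.1 (hhalf (r - s) ⟨by linarith [hs.2], by linarith⟩)
      exact abs_le.2 ⟨by linarith, by linarith⟩
  have hTle : T ≤ T / 2 + 3 / 2 * e :=
    csSup_le ((nonempty_Icc.2 hr).image _) (forall_mem_image.2 hself)
  exact fun s hs => by linarith [hle s hs]

theorem abs_sub_mul_le_of_almost_additive {f : ℝ → ℝ} (hr : 0 < r)
    (hS : ∀ s ∈ Icc 0 r, |f s| ≤ S)
    (hf : ∀ s t, |s| ≤ r → |t| ≤ r → |f (s + t) - f s - f t| ≤ e) {s : ℝ} (hs : |s| ≤ r) :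
    |f s - s * (f r / r)| ≤ 5 * e := by
  set E : ℝ → ℝ := fun s => f s - s * (f r / r) with hE
  have hadd : ∀ s t, |s| ≤ r → |t| ≤ r → |E (s + t) - E s - E t| ≤ e := fun s t hs ht => by
    convert hf s t hs ht using 2
    simp only [hE]
    ring
  have hbound : ∀ s ∈ Icc 0 r, |E s| ≤ S + r * |f r / r| := fun s hs =>
    (abs_sub _ _).trans (add_le_add (hS s hs) (by
      rw [abs_mul, abs_of_nonneg hs.1]
      gcongr
      exact hs.2))
  have hpos := abs_le_three_mul_of_almost_additive hr.le
    (by simp only [hE]; field_simp; ring) hbound hadd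
  have hzero := abs_le.1 (hadd 0 0 (by simpa using hr.le) (by simpa using hr.le))
  rw [add_zero] at hzero
  rcases le_total 0 s with hs₀ | hs₀
  · exact (hpos s ⟨hs₀, (le_abs_self s).trans hs⟩).trans (by linarith)
  · have hneg := abs_le.1 (hpos (-s) ⟨by linarith, (neg_le_abs s).trans hs⟩)
    have hsymm := abs_le.1 (hadd s (-s) hs (by rwa [abs_neg]))
    rw [add_neg_cancel] at hsymm
    exact abs_le.2 ⟨by linarith, by linarith⟩

variable {ι E : Type*} [NormedAddCommGroup E]

theorem abs_apply_sum_sub_sum_le_of_almost_additive {g : E → ℝ} (hg₀ : g 0 = 0)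
    (hg : ∀ x h : E, ‖x‖ ≤ r → ‖h‖ ≤ r → |g (x + h) - g x - g h| ≤ e) {v : ι → E}
    (hv : ∀ i, ‖v i‖ ≤ r) (hsum : ∀ s : Finset ι, ‖∑ i ∈ s, v i‖ ≤ r) (s : Finset ι) :
    |g (∑ i ∈ s, v i) - ∑ i ∈ s, g (v i)| ≤ s.card * e := by
  classical
  induction s using Finset.induction_on with
  | empty => simp [hg₀]
  | insert i s hi ih =>
    rw [Finset.sum_insert hi, Finset.sum_insert hi, Finset.card_insert_of_notMem hi]
    have hadd := abs_le.1 (hg (v i) (∑ i ∈ s, v i) (hv i) (hsum s))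
    have hrec := abs_le.1 ih
    push_cast
    exact abs_le.2 ⟨by linarith, by linarith⟩

variable [InnerProductSpace ℝ E] [Fintype ι]

theorem norm_sum_inner_smul_le (b : OrthonormalBasis ι ℝ E) (s : Finset ι) (x : E) :
    ‖∑ i ∈ s, ⟪b i, x⟫ • b i‖ ≤ ‖x‖ := by
  refine le_of_sq_le_sq ?_ (norm_nonneg x)
  rw [← real_inner_self_eq_norm_sq, b.orthonormal.inner_sum]
  simpa [sq] using b.orthonormal.sum_inner_products_le (x := x) (s := s)

theorem exists_inner_approx_of_almost_additive (b : OrthonormalBasis ι ℝ E) {g : E → ℝ}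
    (hr : 0 < r) (hg₀ : g 0 = 0) (hS : ∀ x, ‖x‖ ≤ r → |g x| ≤ S)
    (hg : ∀ x h : E, ‖x‖ ≤ r → ‖h‖ ≤ r → |g (x + h) - g x - g h| ≤ e) :
    ∃ A : E, ‖A‖ ≤ Fintype.card ι * (S / r) ∧
      ∀ x, ‖x‖ ≤ r → |g x - ⟪A, x⟫| ≤ 6 * Fintype.card ι * e := by
  have hsmul : ∀ (s : ℝ) i, ‖s • b i‖ = |s| := fun s i => by simp [norm_smul]
  refine ⟨∑ i, (g (r • b i) / r) • b i, ?_, fun x hx => ?_⟩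
  · refine (norm_sum_le _ _).trans ((Finset.sum_le_card_nsmul _ _ (S / r) fun i _ => ?_).trans
      (by simp))
    rw [hsmul, abs_div, abs_of_pos hr]
    gcongr
    exact hS _ (by rw [hsmul, abs_of_pos hr])
  · have hcoord : ∀ i, |⟪b i, x⟫| ≤ r := fun i =>
      (abs_real_inner_le_norm _ _).trans (by simpa using hx)
    have hline : ∀ i, |g (⟪b i, x⟫ • b i) - ⟪b i, x⟫ * (g (r • b i) / r)| ≤ 5 * e := fun i =>
      abs_sub_mul_le_of_almost_additive (f := fun s => g (s • b i)) hr
        (fun s hs => hS _ (by rw [hsmul, abs_of_nonneg hs.1]; exact hs.2))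
        (fun s t hs ht => by
          rw [add_smul]
          exact hg _ _ (by rwa [hsmul]) (by rwa [hsmul])) (hcoord i)
    have hpartial := abs_le.1 (abs_apply_sum_sub_sum_le_of_almost_additive hg₀ hg
      (v := fun i => ⟪b i, x⟫ • b i) (fun i => by rw [hsmul]; exact hcoord i)
      (fun s => (norm_sum_inner_smul_le b s x).trans hx) Finset.univ)
    have hlines : |∑ i, g (⟪b i, x⟫ • b i) - ∑ i, ⟪b i, x⟫ * (g (r • b i) / r)| ≤
        Fintype.card ι * (5 * e) := by
      rw [← Finset.sum_sub_distrib]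
      refine (Finset.abs_sum_le_sum_abs _ _).trans
        ((Finset.sum_le_card_nsmul _ _ _ fun i _ => hline i).trans (by simp))
    have hinner : ⟪∑ i, (g (r • b i) / r) • b i, x⟫ = ∑ i, ⟪b i, x⟫ * (g (r • b i) / r) := by
      simp only [sum_inner, real_inner_smul_left, mul_comm]
    rw [b.sum_repr' x, Finset.card_univ] at hpartial
    rw [hinner]
    exact abs_le.2 ⟨by linarith [(abs_le.1 hlines).1], by linarith [(abs_le.1 hlines).2]⟩

end AlmostAdditive

/-! ### The one-point comparison -/

/-- The leading part `A·x + D(t) + (H(t)/γ) y ^ γ` of a solution near the origin. It solves the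
equation without drift when `D' = H`, since the normal derivative of `y ^ γ / γ` is `1`. -/
def boundaryExpansion {n : ℕ} (γ : ℝ) (A : En n) (D H : ℝ → ℝ) (t : ℝ) (x : En n) (y : ℝ) : ℝ :=
  ⟪A, x⟫ + (D t + H t / γ * y ^ γ)

/-- A positive strict supersolution on the cylinder of radius `r`. Crossing the cylinder changes it
by an amount of order one, both from the axis to the lateral boundary and from bottom to top. -/
def onePointCorrection {n : ℕ} (γ r t : ℝ) (x : En n) (y : ℝ) : ℝ :=
  2 / r ^ 2 * ‖x‖ ^ 2 + ((2 * n + 4) / r ^ γ * y ^ γ - (2 * n + 1) / r ^ 2 * y ^ 2) +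
    ((γ * (2 * n + 4) + 1) / r ^ γ * (t + r ^ γ) + 1)

/-- The barrier comparing a solution with its boundary expansion up to an error of order `B`. -/
def onePointBarrier {n : ℕ} (γ r B : ℝ) (A : En n) (D H : ℝ → ℝ) (t : ℝ) (x : Fin 1 → En n)
    (y : ℝ) : ℝ :=
  boundaryExpansion γ A D H t (x 0) y + B * onePointCorrection γ r t (x 0) y

section BoundaryExpansion

variable {n : ℕ} {γ r t y : ℝ} {A : En n} {D H : ℝ → ℝ} {x : Fin 1 → En n}
  {e : Fin 1 → OrthonormalBasis (Fin n) ℝ (En n)}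

theorem boundaryExpansion_zero (hγ : γ ≠ 0) (x : En n) :
    boundaryExpansion γ A D H t x 0 = ⟪A, x⟫ + D t := by
  simp [boundaryExpansion, Real.zero_rpow hγ]

theorem boundaryExpansion_neg (x : En n) :
    boundaryExpansion γ (-A) (-D) (-H) t x y = -boundaryExpansion γ A D H t x y := by
  simp only [boundaryExpansion, inner_neg_left, Pi.neg_apply]
  ring

theorem hasCoupledLaplacianLE_boundaryExpansion (hy : 0 < y) :
    HasCoupledLaplacianLE (1 - γ) e (fun x y => boundaryExpansion γ A D H t (x 0) y) x y 0 := by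
  have hline (k : Fin n) : HasSecondDerivAt (fun τ : ℝ => ⟪A, x 0 + τ • e 0 k⟫) ⟪A, e 0 k⟫ 0 0 := by
    have hquad := hasSecondDerivAt_quadratic ⟪A, x 0⟫ ⟪A, e 0 k⟫ 0 0
    simp only [mul_zero, add_zero] at hquad
    refine hquad.congr_fun (.of_forall fun τ => ?_)
    simp only [inner_add_right, inner_smul_right]
    ring
  have hpoints := hasCoupledLaplacianLE_of_points (a := 1 - γ) (y := y)
    (φ := fun x => ⟪A, x 0⟫) (fun k => ⟨_, hline k⟩) Finset.sum_const_zero.le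
  have hheight := (hasBesselAt_const (1 - γ) (D t) y).add
    ((hasBesselAt_rpow hy (1 - γ) γ).const_mul (H t / γ))
  exact (hpoints.add (hasCoupledLaplacianLE_of_height hheight)).mono (le_of_eq (by ring))

theorem hasBoundaryJet_boundaryExpansion (hγ : γ ≠ 0) (hD : HasDerivAt D (H t) t) :
    HasBoundaryJet γ (fun t x y => boundaryExpansion γ A D H t (x 0) y) (H t) (H t) ‖A‖ t x where
  hasDerivWithinAt_time := by
    simpa only [boundaryExpansion_zero hγ] using (hD.const_add ⟪A, x 0⟫).hasDerivWithinAt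
  nonneg := norm_nonneg A
  sub_le j := .of_forall fun z => by
    rw [Subsingleton.elim j 0, Function.update_self, boundaryExpansion_zero hγ,
      boundaryExpansion_zero hγ, add_sub_add_right_eq_sub, ← inner_sub_right]
    exact real_inner_le_norm _ _
  tendsto_normal := by
    refine tendsto_const_nhds.congr' ?_
    filter_upwards [self_mem_nhdsWithin] with y hy
    have := Real.rpow_pos_of_pos (show 0 < y from hy) γ
    rw [boundaryExpansion_zero hγ, boundaryExpansion]
    field_simp
    ring

theorem continuous_onePointBarrier {B : ℝ} (hγ : 0 ≤ γ) (hD : Continuous D) (hH : Continuous H) :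
    Continuous fun P : ℝ × (Fin 1 → En n) × ℝ => onePointBarrier γ r B A D H P.1 P.2.1 P.2.2 := by
  have hheight : Continuous fun P : ℝ × (Fin 1 → En n) × ℝ => P.2.2 ^ γ :=
    Continuous.rpow_const (by fun_prop) fun _ => Or.inr hγ
  have hinner : Continuous fun P : ℝ × (Fin 1 → En n) × ℝ => ⟪A, P.2.1 0⟫ :=
    continuous_const.inner (by fun_prop)
  unfold onePointBarrier boundaryExpansion onePointCorrection
  fun_prop

end BoundaryExpansion

section OnePointCorrection

variable {n : ℕ} {γ r t y : ℝ} {x : Fin 1 → En n} {e : Fin 1 → OrthonormalBasis (Fin n) ℝ (En n)}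

theorem hasCoupledLaplacianLE_onePointCorrection (hγ : γ ≤ 1) (hy : 0 < y) :
    HasCoupledLaplacianLE (1 - γ) e (fun x y => onePointCorrection γ r t (x 0) y) x y
      (-2 / r ^ 2) := by
  have hpoints := hasCoupledLaplacianLE_norm_sub_sq (a := 1 - γ) (e := e) (x := x) (y := y)
    (i := 0) 0
  simp only [sub_zero] at hpoints
  have hsq := hasBesselAt_sub_sq (1 - γ) 0 y
  simp only [sub_zero] at hsq
  have hheight := ((hasBesselAt_rpow hy (1 - γ) γ).const_mul ((2 * n + 4) / r ^ γ)).sub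
    (hsq.const_mul ((2 * n + 1) / r ^ 2))
  refine (((hpoints.const_mul (by positivity : 0 ≤ 2 / r ^ 2)).add
    (hasCoupledLaplacianLE_of_height hheight)).add
    (hasCoupledLaplacianLE_of_height (hasBesselAt_const (1 - γ) _ y))).mono ?_
  have hq : (1 - γ) / y * (2 * y) = 2 * (1 - γ) := by field_simp
  have hγn : 0 ≤ (2 * n + 1) * (1 - γ) := mul_nonneg (by positivity) (sub_nonneg.2 hγ)
  have hr : 0 ≤ 1 / r ^ 2 := by positivity
  rw [hq]
  calc _ = (-2 - 2 * ((2 * n + 1) * (1 - γ))) * (1 / r ^ 2) := by ring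
    _ ≤ -2 * (1 / r ^ 2) := by gcongr; linarith
    _ = -2 / r ^ 2 := by ring

theorem hasBoundaryJet_onePointCorrection (hγ₀ : 0 < γ) (hγ₂ : γ < 2) (hx : ‖x 0‖ < 1) :
    HasBoundaryJet γ (fun t x y => onePointCorrection γ r t (x 0) y)
      ((γ * (2 * n + 4) + 1) / r ^ γ) (γ * (2 * n + 4) / r ^ γ) (8 / r ^ 2) t x := by
  have hpoints := hasBoundaryJet_norm_sub_sq (γ := γ) (t := t) (norm_zero.trans_le zero_le_one) hx
  simp only [sub_zero] at hpoints
  set c := (2 * n + 4) / r ^ γ with hc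
  set b := (2 * n + 1) / r ^ 2
  have hlim : Tendsto (fun y : ℝ => ((c * y ^ γ - b * y ^ 2) - (c * (0 : ℝ) ^ γ - b * 0 ^ 2)) /
      y ^ γ) (𝓝[>] 0) (𝓝 (γ * c / γ)) := by
    have hlim := ((tendsto_rpow_div_rpow hγ₂).const_mul b).const_sub c
    rw [mul_zero, sub_zero] at hlim
    rw [mul_div_cancel_left₀ c hγ₀.ne']
    refine hlim.congr' ?_
    filter_upwards [self_mem_nhdsWithin] with y hy
    have := Real.rpow_pos_of_pos (show 0 < y from hy) γ
    rw [Real.zero_rpow hγ₀.ne', Real.rpow_two]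
    field_simp
    ring
  have htime := ((((hasDerivAt_id t).add_const (r ^ γ)).const_mul
    ((γ * (2 * n + 4) + 1) / r ^ γ)).add_const 1).hasDerivWithinAt (s := Iic t)
  convert ((hpoints.const_mul (by positivity : 0 ≤ 2 / r ^ 2)).add
    (hasBoundaryJet_of_height (g := fun y => c * y ^ γ - b * y ^ 2) hlim)).add
    (hasBoundaryJet_of_time htime) using 1
  · rfl
  · ring
  · rw [hc]
    ring
  · ring

theorem onePointCorrection_lateral (hr : 0 < r) {x : En n} (hx : ‖x‖ = r) :
    onePointCorrection γ r t x y = onePointCorrection γ r t (0 : En n) y + 2 := by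
  rw [onePointCorrection, onePointCorrection, hx, norm_zero]
  field_simp
  ring

theorem onePointCorrection_top (hγ : γ ≠ 0) (hr : 0 < r) (x : En n) :
    onePointCorrection γ r t x r = onePointCorrection γ r t x 0 + 3 := by
  rw [onePointCorrection, onePointCorrection, Real.zero_rpow hγ]
  field_simp
  ring

theorem one_le_onePointCorrection_initial (hγ : γ ≠ 0) (x : En n) :
    1 ≤ onePointCorrection γ r (-(r ^ γ)) x 0 := by
  rw [onePointCorrection, Real.zero_rpow hγ]
  have : 0 ≤ 2 / r ^ 2 * ‖x‖ ^ 2 := by positivity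
  linarith

theorem onePointCorrection_le (hγ₀ : 0 ≤ γ) (hγ₁ : γ ≤ 1) (hr : 0 < r) {x : En n} (hx : ‖x‖ ≤ r)
    (hy : y ∈ Icc 0 r) (ht : t ≤ 0) : onePointCorrection γ r t x y ≤ 4 * n + 12 := by
  have hx' : 2 / r ^ 2 * ‖x‖ ^ 2 ≤ 2 / r ^ 2 * r ^ 2 := by gcongr
  have hy' : (2 * n + 4) / r ^ γ * y ^ γ ≤ (2 * n + 4) / r ^ γ * r ^ γ := by
    have := Real.rpow_le_rpow hy.1 hy.2 hγ₀
    gcongr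
  have ht' : (γ * (2 * n + 4) + 1) / r ^ γ * (t + r ^ γ) ≤
      (γ * (2 * n + 4) + 1) / r ^ γ * r ^ γ := by
    gcongr
    linarith
  rw [div_mul_cancel₀ _ (by positivity)] at hx' hy' ht'
  have hy₀ : 0 ≤ (2 * n + 1) / r ^ 2 * y ^ 2 := by positivity
  have hγn : γ * (2 * n + 4) ≤ 1 * (2 * n + 4) := by gcongr
  rw [onePointCorrection]
  linarith

end OnePointCorrection

/-- Agreement of `u` with the boundary expansion of coefficients `A`, `D`, `H` on the cylinder of
radius `r`: exactly for the vertical increments on the axis and for the initial value at the origin,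
and up to `B` for the horizontal increments. -/
structure MatchesExpansion {n : ℕ} (γ r B : ℝ) (A : En n) (D H : ℝ → ℝ) (u : ℝ → En n × ℝ → ℝ) :
    Prop where
  initial_eq : D (-(r ^ γ)) = u (-(r ^ γ)) (0, 0)
  vertical_eq : ∀ t ∈ Icc (-(r ^ γ)) 0, H t / γ * r ^ γ = u t (0, r) - u t (0, 0)
  horizontal_le : ∀ t ∈ Icc (-(r ^ γ)) 0, ∀ y ∈ Icc 0 r, ∀ x : En n, ‖x‖ ≤ r →
    |u t (x, y) - u t (0, y) - ⟪A, x⟫| ≤ B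

section OnePointEstimate

variable {n : ℕ} {γ δ r B t y : ℝ} {A : En n} {D H : ℝ → ℝ} {u : ℝ → En n × ℝ → ℝ} {x : En n}

theorem MatchesExpansion.neg (hm : MatchesExpansion γ r B A D H u) :
    MatchesExpansion γ r B (-A) (-D) (-H) (fun t p => -u t p) where
  initial_eq := by rw [Pi.neg_apply, hm.initial_eq]
  vertical_eq t ht := by
    rw [Pi.neg_apply, neg_div, neg_mul, hm.vertical_eq t ht]
    ring
  horizontal_le t ht y hy x hx := by
    rw [inner_neg_left, ← abs_neg]
    convert hm.horizontal_le t ht y hy x hx using 2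
    ring

theorem MatchesExpansion.lt_axis (hm : MatchesExpansion γ r B A D H u) (hB : 0 < B) (hr : 0 < r)
    (ht : t ∈ Icc (-(r ^ γ)) 0) (hy : y ∈ Icc 0 r) (hx : ‖x‖ = r) :
    u t (x, y) - (boundaryExpansion γ A D H t x y + B * onePointCorrection γ r t x y) <
      u t (0, y) -
        (boundaryExpansion γ A D H t 0 y + B * onePointCorrection γ r t (0 : En n) y) := by
  have hincr := (abs_le.1 (hm.horizontal_le t ht y hy x hx.le)).2
  simp only [onePointCorrection_lateral hr hx, boundaryExpansion, inner_zero_right]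
  linarith

theorem MatchesExpansion.lt_bottom (hm : MatchesExpansion γ r B A D H u) (hγ : γ ≠ 0) (hB : 0 < B)
    (hr : 0 < r) (ht : t ∈ Icc (-(r ^ γ)) 0) (hx : ‖x‖ ≤ r) :
    u t (x, r) - (boundaryExpansion γ A D H t x r + B * onePointCorrection γ r t x r) <
      u t (x, 0) - (boundaryExpansion γ A D H t x 0 + B * onePointCorrection γ r t x 0) := by
  have htop := (abs_le.1 (hm.horizontal_le t ht r ⟨hr.le, le_rfl⟩ x hx)).2
  have hbottom := (abs_le.1 (hm.horizontal_le t ht 0 ⟨le_rfl, hr.le⟩ x hx)).1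
  rw [onePointCorrection_top hγ hr, boundaryExpansion_zero hγ, boundaryExpansion,
    hm.vertical_eq t ht]
  linarith

theorem MatchesExpansion.initial_le (hm : MatchesExpansion γ r B A D H u) (hγ : γ ≠ 0)
    (hB : 0 ≤ B) (hr : 0 ≤ r) (hx : ‖x‖ ≤ r) :
    u (-(r ^ γ)) (x, 0) ≤ boundaryExpansion γ A D H (-(r ^ γ)) x 0 +
      B * onePointCorrection γ r (-(r ^ γ)) x 0 := by
  have hrγ : 0 ≤ r ^ γ := by positivity
  have hincr := (abs_le.1 (hm.horizontal_le (-(r ^ γ)) ⟨le_rfl, by linarith⟩ 0 ⟨le_rfl, hr⟩ x hx)).2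
  have hcorr := mul_le_mul_of_nonneg_left (one_le_onePointCorrection_initial (r := r) hγ x) hB
  rw [boundaryExpansion_zero hγ, hm.initial_eq]
  linarith

theorem isStrictBarrierAt_onePointBarrier (hγ₀ : 0 < γ) (hγ₁ : γ ≤ 1) (hr : 0 < r) (hB : 0 < B)
    (hD : HasDerivAt D (H t) t) (hδ : δ * (1 + (‖A‖ + 8 * B / r ^ 2)) < B / r ^ γ) (hy : 0 ≤ y)
    {x : Fin 1 → En n} (hx : ‖x 0‖ < 1) :
    IsStrictBarrierAt γ δ ![1] (onePointBarrier γ r B A D H) t x y := by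
  rcases hy.eq_or_lt with rfl | hy
  · refine Or.inr ⟨rfl, _, _, _, (hasBoundaryJet_boundaryExpansion hγ₀.ne' hD).add
      ((hasBoundaryJet_onePointCorrection hγ₀ (by linarith) hx).const_mul hB.le), ?_⟩
    simp only [Finset.univ_unique, Finset.sum_singleton, Matrix.cons_val_fin_one, abs_one,
      Fintype.card_fin, Nat.cast_one, one_mul]
    calc _ = H t + B * (γ * (2 * n + 4) / r ^ γ) + δ * (1 + (‖A‖ + 8 * B / r ^ 2)) := by ring
      _ < H t + B * (γ * (2 * n + 4) / r ^ γ) + B / r ^ γ := by gcongr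
      _ = _ := by ring
  · refine Or.inl ⟨hy, fun _ => EuclideanSpace.basisFun (Fin n) ℝ, _, ?_,
      (hasCoupledLaplacianLE_boundaryExpansion hy).add
      ((hasCoupledLaplacianLE_onePointCorrection hγ₁ hy).const_mul hB.le)⟩
    rw [zero_add, neg_div]
    exact mul_neg_of_pos_of_neg hB (neg_lt_zero.2 (by positivity))

theorem multipointSum_one (v : En n × ℝ → ℝ) (x : Fin 1 → En n) (y : ℝ) :
    multipointSum ![1] v x y = v (x 0, y) := by
  simp [multipointSum]

theorem MatchesExpansion.le_onePointBarrier (hm : MatchesExpansion γ r B A D H u) (hγ₀ : 0 < γ)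
    (hγ₁ : γ ≤ 1) (hu : IsNormalizedSolution γ δ u) (hr : 0 < r) (hr₂ : r ≤ 1 / 2) (hB : 0 < B)
    (hH : Continuous H) (hD : ∀ t, HasDerivAt D (H t) t)
    (hδ : δ * (1 + (‖A‖ + 8 * B / r ^ 2)) < B / r ^ γ) {x : Fin 1 → En n}
    (hmem : (t, x, y) ∈ multipointCylinder (Fin 1) n (-(r ^ γ)) 0 r) :
    u t (x 0, y) ≤ onePointBarrier γ r B A D H t x y := by
  have hrγ : r ^ γ ≤ 1 := Real.rpow_le_one hr.le (by linarith) hγ₀.le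
  have hDc : Continuous D := continuous_iff_continuousAt.2 fun t => (hD t).continuousAt
  rw [← multipointSum_one (u t)]
  refine multipointSum_le_of_isStrictBarrierAt (c := ![1]) hγ₀ hu
    (by linarith) le_rfl hr₂ (continuous_onePointBarrier hγ₀.le hDc hH).continuousOn
    (fun t x y hmem hlt => ?_) hmem
  obtain ⟨ht, hx, hy⟩ := mem_multipointCylinder.1 hmem
  simp only [multipointSum_one] at hlt ⊢
  rcases (hx 0).eq_or_lt with hxr | hxr
  · exact Or.inl ⟨t, 0, y, mem_multipointCylinder.2 ⟨ht, by simpa using hr.le, hy⟩,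
      hm.lt_axis hB hr ht hy hxr⟩
  rcases hy.2.eq_or_lt with rfl | hyr
  · exact Or.inl ⟨t, x, 0, mem_multipointCylinder.2 ⟨ht, hx, le_rfl, hr.le⟩,
      hm.lt_bottom hγ₀.ne' hB hr ht (hx 0)⟩
  refine Or.inr ⟨fun j => by rwa [Subsingleton.elim j 0], hyr, ?_,
    isStrictBarrierAt_onePointBarrier hγ₀ hγ₁ hr hB (hD t) hδ hy.1 (by linarith)⟩
  rintro rfl
  refine ht.1.lt_of_ne ?_
  rintro rfl
  exact hlt.not_ge (hm.initial_le hγ₀.ne' hB.le hr.le (hx 0))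

theorem MatchesExpansion.sub_boundaryExpansion_le (hm : MatchesExpansion γ r B A D H u)
    (hγ₀ : 0 < γ) (hγ₁ : γ ≤ 1) (hu : IsNormalizedSolution γ δ u) (hr : 0 < r) (hr₂ : r ≤ 1 / 2)
    (hB : 0 < B) (hH : Continuous H) (hD : ∀ t, HasDerivAt D (H t) t)
    (hδ : δ * (1 + (‖A‖ + 8 * B / r ^ 2)) < B / r ^ γ) (ht : t ∈ Icc (-(r ^ γ)) 0)
    (hy : y ∈ Icc 0 r) (hx : ‖x‖ ≤ r) :
    u t (x, y) - boundaryExpansion γ A D H t x y ≤ (4 * n + 12) * B := by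
  have hmem : (t, fun _ => x, y) ∈ multipointCylinder (Fin 1) n (-(r ^ γ)) 0 r :=
    mem_multipointCylinder.2 ⟨ht, fun _ => hx, hy⟩
  have hle : u t (x, y) ≤ boundaryExpansion γ A D H t x y + B * onePointCorrection γ r t x y :=
    hm.le_onePointBarrier hγ₀ hγ₁ hu hr hr₂ hB hH hD hδ hmem
  linarith [mul_le_mul_of_nonneg_left (onePointCorrection_le hγ₀.le hγ₁ hr hx hy ht.2) hB.le]

theorem MatchesExpansion.abs_sub_boundaryExpansion_le (hm : MatchesExpansion γ r B A D H u)
    (hγ₀ : 0 < γ) (hγ₁ : γ ≤ 1) (hu : IsNormalizedSolution γ δ u) (hr : 0 < r) (hr₂ : r ≤ 1 / 2)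
    (hB : 0 < B) (hH : Continuous H) (hD : ∀ t, HasDerivAt D (H t) t)
    (hδ : δ * (1 + (‖A‖ + 8 * B / r ^ 2)) < B / r ^ γ) (ht : t ∈ Icc (-(r ^ γ)) 0)
    (hy : y ∈ Icc 0 r) (hx : ‖x‖ ≤ r) :
    |u t (x, y) - boundaryExpansion γ A D H t x y| ≤ (4 * n + 12) * B := by
  have hupper := hm.sub_boundaryExpansion_le hγ₀ hγ₁ hu hr hr₂ hB hH hD hδ ht hy hx
  have hlower := hm.neg.sub_boundaryExpansion_le hγ₀ hγ₁ hu.neg hr hr₂ hB hH.neg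
    (fun t => (hD t).neg) (by rwa [norm_neg]) ht hy hx
  rw [boundaryExpansion_neg] at hlower
  exact abs_le.2 ⟨by linarith, hupper⟩

end OnePointEstimate

/-! ### Flatness -/

/-- The solution `u` is within `ε`, on the cylinder of radius `r`, of a boundary expansion
`A·x + D(t) + (D'(t)/γ) y ^ γ` with coefficients bounded by `K`. -/
def HasBoundaryExpansion {n : ℕ} (γ K r ε : ℝ) (u : ℝ → En n × ℝ → ℝ) : Prop :=
  ∃ (A : En n) (D : ℝ → ℝ), ‖A‖ ≤ K ∧
    (∀ t ∈ Icc (-(r ^ γ)) 0, DifferentiableWithinAt ℝ D (Icc (-(r ^ γ)) 0) t ∧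
      |D t| ≤ K ∧ |derivWithin D (Icc (-(r ^ γ)) 0) t| ≤ K) ∧
    ∀ t ∈ Icc (-(r ^ γ)) 0, ∀ y ∈ Icc 0 r, ∀ x : En n, ‖x‖ ≤ r →
      |u t (x, y) - boundaryExpansion γ A D (derivWithin D (Icc (-(r ^ γ)) 0)) t x y| ≤ ε

theorem exists_antiderivative_of_continuousOn_Icc {a b : ℝ} (hab : a ≤ b) {f : ℝ → ℝ}
    (hf : ContinuousOn f (Icc a b)) (c : ℝ) :
    ∃ F F' : ℝ → ℝ, Continuous F' ∧ EqOn F' f (Icc a b) ∧ F a = c ∧ ∀ t, HasDerivAt F (F' t) t := by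
  set F' := IccExtend hab ((Icc a b).domRestrict f)
  have hF' : Continuous F' := (continuousOn_iff_continuous_domRestrict.1 hf).Icc_extend'
  exact ⟨fun t => c + ∫ τ in a..t, F' τ, F', hF', fun t ht => IccExtend_of_mem hab _ ht, by simp,
    fun t => (hF'.integral_hasStrictDerivAt a t).hasDerivAt.const_add c⟩

section Flatness

variable {n : ℕ} {γ δ r R B K L : ℝ} {A : En n} {u : ℝ → En n × ℝ → ℝ}

theorem IsNormalizedSolution.exists_matchesExpansion (hu : IsNormalizedSolution γ δ u)
    (hγ₀ : 0 < γ) (hr : 0 < r) (hr₁ : r ≤ 1)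
    (hA : ∀ t ∈ Icc (-(r ^ γ)) 0, ∀ y ∈ Icc 0 r, ∀ x : En n, ‖x‖ ≤ r →
      |u t (x, y) - u t (0, y) - ⟪A, x⟫| ≤ B) :
    ∃ D H : ℝ → ℝ, Continuous H ∧ (∀ t, HasDerivAt D (H t) t) ∧
      MatchesExpansion γ r B A D H u := by
  have hrγ₀ : 0 < r ^ γ := by positivity
  have hrγ : r ^ γ ≤ 1 := Real.rpow_le_one hr.le hr₁ hγ₀.le
  have haxis {y : ℝ} (hy : y ∈ Icc 0 r) :
      ContinuousOn (fun t => u t ((0 : En n), y)) (Icc (-(r ^ γ)) 0) := by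
    refine hu.continuousOn.comp (f := fun t : ℝ => (t, ((0 : En n), y))) (by fun_prop)
      fun t ht => ⟨⟨by linarith [ht.1], ht.2⟩, ?_, hy.1⟩
    simpa [abs_of_nonneg hy.1] using hy.2.trans hr₁
  obtain ⟨D, H, hH, hHeq, hD₀, hD⟩ := exists_antiderivative_of_continuousOn_Icc
    (neg_nonpos.2 hrγ₀.le)
    ((((haxis ⟨hr.le, le_rfl⟩).sub (haxis ⟨le_rfl, hr.le⟩)).const_mul γ).div_const (r ^ γ))
    (u (-(r ^ γ)) (0, 0))
  refine ⟨D, H, hH, hD, hD₀, fun t ht => ?_, hA⟩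
  rw [hHeq ht]
  simp only [Pi.sub_apply]
  field_simp

theorem MatchesExpansion.abs_le {D H : ℝ → ℝ} (hm : MatchesExpansion γ r B A D H u)
    (hγ₀ : 0 < γ) (hr : 0 < r) {t : ℝ} (ht : t ∈ Icc (-(r ^ γ)) 0)
    (hL : |u t (0, r) - u t (0, 0)| ≤ L * r ^ γ) : |H t| ≤ γ * L := by
  have hrγ : 0 < r ^ γ := by positivity
  rw [← hm.vertical_eq t ht, abs_mul, abs_of_pos hrγ, abs_div, abs_of_pos hγ₀] at hL
  exact (div_le_iff₀' hγ₀).1 (le_of_mul_le_mul_right hL hrγ)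

theorem abs_sub_le_of_hasDerivAt_of_abs_le {D H : ℝ → ℝ} {a b M : ℝ}
    (hD : ∀ t, HasDerivAt D (H t) t) (hH : ∀ t ∈ Icc a b, |H t| ≤ M) {t : ℝ} (ht : t ∈ Icc a b) :
    |D t - D a| ≤ M * (t - a) := by
  simpa [abs_of_nonneg (sub_nonneg.2 ht.1)] using
    (convex_Icc a b).norm_image_sub_le_of_norm_hasDerivWithin_le
      (fun t _ => (hD t).hasDerivWithinAt) hH (left_mem_Icc.2 (ht.1.trans ht.2)) ht

theorem IsNormalizedSolution.hasBoundaryExpansion (hu : IsNormalizedSolution γ δ u) (hγ₀ : 0 < γ)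
    (hγ₁ : γ ≤ 1) (hδ₀ : 0 ≤ δ) (hr : 0 < r) (hr₂ : r ≤ 1 / 2) (hB : 0 < B) (hAK : ‖A‖ ≤ K)
    (hLK : 1 + γ * L ≤ K)
    (hL : ∀ t ∈ Icc (-(r ^ γ)) 0, |u t (0, r) - u t (0, 0)| ≤ L * r ^ γ)
    (hA : ∀ t ∈ Icc (-(r ^ γ)) 0, ∀ y ∈ Icc 0 r, ∀ x : En n, ‖x‖ ≤ r →
      |u t (x, y) - u t (0, y) - ⟪A, x⟫| ≤ B)
    (hδ : δ * (1 + (K + 8 * B / r ^ 2)) < B / r ^ γ) :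
    HasBoundaryExpansion γ K r ((4 * n + 12) * B) u := by
  obtain ⟨D, H, hH, hD, hm⟩ := hu.exists_matchesExpansion hγ₀ hr (by linarith) hA
  have hrγ₀ : 0 < r ^ γ := by positivity
  have hrγ : r ^ γ ≤ 1 := Real.rpow_le_one hr.le (by linarith) hγ₀.le
  have hHL : ∀ t ∈ Icc (-(r ^ γ)) 0, |H t| ≤ γ * L := fun t ht => hm.abs_le hγ₀ hr ht (hL t ht)
  have hderiv : ∀ t ∈ Icc (-(r ^ γ)) 0, derivWithin D (Icc (-(r ^ γ)) 0) t = H t := fun t ht =>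
    (hD t).hasDerivWithinAt.derivWithin (uniqueDiffOn_Icc (neg_neg_of_pos hrγ₀) t ht)
  have hδA : δ * (1 + (‖A‖ + 8 * B / r ^ 2)) < B / r ^ γ := lt_of_le_of_lt (by gcongr) hδ
  refine ⟨A, D, hAK, fun t ht => ⟨(hD t).differentiableAt.differentiableWithinAt, ?_, ?_⟩,
    fun t ht y hy x hx => ?_⟩
  · have hinit : |D (-(r ^ γ))| ≤ 1 := by
      rw [hm.initial_eq]
      exact hu.abs_le_one ⟨by linarith, by linarith⟩ ⟨by simp, le_rfl⟩
    have hincr := abs_sub_le_of_hasDerivAt_of_abs_le hD hHL ht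
    have htime : γ * L * (t - -(r ^ γ)) ≤ γ * L :=
      mul_le_of_le_one_right ((abs_nonneg _).trans (hHL t ht)) (by linarith [ht.2])
    linarith [abs_sub_abs_le_abs_sub (D t) (D (-(r ^ γ)))]
  · rw [hderiv t ht]
    linarith [hHL t ht]
  · rw [boundaryExpansion, hderiv t ht]
    exact hm.abs_sub_boundaryExpansion_le hγ₀ hγ₁ hu hr hr₂ hB hH hD hδA ht hy hx

theorem exists_inner_approx_of_hasHolderIncrements {C C' t : ℝ} (hγ₀ : 0 ≤ γ) (hC : 0 ≤ C)
    (hC' : 0 ≤ C') (hr : 0 < r) (hrR : r ≤ R) (hH : HasHolderBound C 1 r R u)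
    (hI : HasHolderIncrements γ C' 1 (r ^ (1 + γ)) R u) (ht : t ∈ Icc (-R) 0) :
    ∃ A : En n, ‖A‖ ≤ n * (C + 1) ∧
      ∀ x, ‖x‖ ≤ r → |u t (x, 0) - u t (0, 0) - ⟪A, x⟫| ≤ 6 * n * ((C' + 1) * r ^ (1 + γ)) := by
  have hR : 0 ≤ R := hr.le.trans hrR
  have hpow : r ^ (1 + γ) = r * r ^ γ := by rw [Real.rpow_add hr, Real.rpow_one]
  have hbound : ∀ x : En n, ‖x‖ ≤ r → |u t (x, 0) - u t (0, 0)| ≤ (C + 1) * r := fun x hx => by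
    have := hH t ht 0 ⟨le_rfl, hR⟩ x 0 (hx.trans hrR) (by simpa using hR)
    rw [sub_zero, Real.rpow_one] at this
    linarith [mul_le_mul_of_nonneg_left hx hC]
  have hadd : ∀ x h : En n, ‖x‖ ≤ r → ‖h‖ ≤ r → |u t (x + h, 0) - u t (0, 0) -
      (u t (x, 0) - u t (0, 0)) - (u t (h, 0) - u t (0, 0))| ≤ (C' + 1) * r ^ (1 + γ) :=
    fun x h hx hh => by
      have := hI t ht 0 ⟨le_rfl, hR⟩ 0 x h (by simpa using hR) (hx.trans hrR) (hh.trans hrR)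
      rw [Real.rpow_one, zero_sub, norm_neg, zero_add] at this
      calc _ = |u t (0, 0) - u t (h, 0) - (u t (x, 0) - u t (x + h, 0))| := by
            congr 1
            ring
        _ ≤ C' * ‖h‖ * ‖x‖ ^ γ + r ^ (1 + γ) := this
        _ ≤ C' * r * r ^ γ + r ^ (1 + γ) := by gcongr
        _ = (C' + 1) * r ^ (1 + γ) := by rw [hpow]; ring
  obtain ⟨A, hA, happrox⟩ := exists_inner_approx_of_almost_additive
    (g := fun x : En n => u t (x, 0) - u t (0, 0)) (EuclideanSpace.basisFun (Fin n) ℝ) hr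
    (sub_self _) hbound hadd
  rw [Fintype.card_fin, mul_div_cancel_right₀ _ hr.ne'] at hA
  simp only [Fintype.card_fin] at happrox
  exact ⟨A, hA, happrox⟩

theorem AlmostHolder.exists_horizontal_expansion (hH : AlmostHolder n γ R 1)
    (hI : AlmostHolderIncrements n γ R 1) (hγ₀ : 0 < γ) (hγ₁ : γ < 1) (hR : R ≤ 1 / 2) :
    ∃ K, 0 ≤ K ∧ ∀ η, 0 < η → η ≤ 1 → ∃ C, 0 < C ∧
      ∀ r, 0 < r → r ≤ R / 8 → r ^ γ ≤ R → ∃ δ > 0, ∀ u : ℝ → En n × ℝ → ℝ,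
      IsNormalizedSolution γ δ u → ∃ A : En n, ‖A‖ ≤ K ∧
        ∀ t ∈ Icc (-(r ^ γ)) 0, ∀ y ∈ Icc 0 r, ∀ x : En n, ‖x‖ ≤ r →
          |u t (x, y) - u t (0, y) - ⟪A, x⟫| ≤ C * r ^ (1 + γ - η) := by
  have hincr {η : ℝ} := hH.exists_increment_estimate hI (η := η) hγ₀ hγ₁ hR
  obtain ⟨C₁, hC₁, hH⟩ := hH
  obtain ⟨C₂, hC₂, hI⟩ := hI
  refine ⟨n * (C₁ + 1), by positivity, fun η hη₀ hη₁ => ?_⟩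
  obtain ⟨C, hC, hincr⟩ := hincr hη₀ hη₁
  refine ⟨C + 6 * n * (C₂ + 1), by positivity, fun r hr hrR hrγ => ?_⟩
  have hrγ₀ : 0 < r ^ γ := by positivity
  obtain ⟨δ₁, hδ₁, hH⟩ := hH r hr
  obtain ⟨δ₂, hδ₂, hI⟩ := hI (r ^ (1 + γ)) (by positivity)
  obtain ⟨δ₃, hδ₃, hincr⟩ := hincr r hr hrR hrγ
  refine ⟨min δ₁ (min δ₂ δ₃), by positivity, fun u hu => ?_⟩
  obtain ⟨A, hA, happrox⟩ := exists_inner_approx_of_hasHolderIncrements hγ₀.le hC₁ hC₂ hr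
    (by linarith) (hH u (hu.mono (by simp))) (hI u (hu.mono (by simp)))
    (show -(r ^ γ) ∈ Icc (-R) 0 from ⟨by linarith, by linarith⟩)
  refine ⟨A, hA, fun t ht y hy x hx => ?_⟩
  have hshift := hincr u (hu.mono (by simp)) t ht y hy x hx
  have hpow : r ^ (1 + γ) ≤ r ^ (1 + γ - η) :=
    Real.rpow_le_rpow_of_exponent_ge hr (by linarith) (by linarith)
  calc |u t (x, y) - u t (0, y) - ⟪A, x⟫|
      = |(u (-(r ^ γ)) (x, 0) - u (-(r ^ γ)) (0, 0) - ⟪A, x⟫) - ((u t (0, y) - u t (x, y)) -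
          (u (-(r ^ γ)) (0, 0) - u (-(r ^ γ)) (x, 0)))| := by
        congr 1
        ring
    _ ≤ 6 * n * ((C₂ + 1) * r ^ (1 + γ)) + C * r ^ (1 + γ - η) :=
        (abs_sub _ _).trans (add_le_add (happrox x hx) hshift)
    _ ≤ 6 * n * ((C₂ + 1) * r ^ (1 + γ - η)) + C * r ^ (1 + γ - η) := by gcongr
    _ = (C + 6 * n * (C₂ + 1)) * r ^ (1 + γ - η) := by ring

theorem exists_scale {η c : ℝ} (hγ : 0 < γ) (hη : 0 < η) (hR : 0 < R) (hc : 0 ≤ c) :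
    ∃ r, 0 < r ∧ r ≤ R ∧ r ^ γ ≤ R ∧ c * r ^ η ≤ 1 := by
  obtain ⟨κ₁, hκ₁, -, hκR⟩ := exists_mul_rpow_le (K := 1) hγ hR
  obtain ⟨κ₂, hκ₂, -, hκc⟩ := exists_mul_rpow_le (K := c) hη one_pos
  refine ⟨min R (min κ₁ κ₂), by positivity, by simp, ?_, ?_⟩
  · calc (min R (min κ₁ κ₂)) ^ γ ≤ κ₁ ^ γ := by gcongr; simp
      _ ≤ R := by linarith
  · calc c * (min R (min κ₁ κ₂)) ^ η ≤ c * κ₂ ^ η := by gcongr; simp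
      _ ≤ 1 := hκc

end Flatness

theorem exists_hasBoundaryExpansion (n : ℕ) {γ : ℝ} (hγ₀ : 0 < γ) (hγ₁ : γ < 1) :
    ∃ K > 0, ∀ α ∈ Ioo 0 γ, ∃ δ > 0, ∃ r ∈ Ioo (0 : ℝ) 1, ∀ u : ℝ → En n × ℝ → ℝ,
      IsNormalizedSolution γ δ u → HasBoundaryExpansion γ K r (r ^ (1 + α)) u := by
  obtain ⟨R, hR₀, hR, hH, hI⟩ := exists_almostHolder_one_and_increments n hγ₀ hγ₁
  obtain ⟨L, hL, hvertical⟩ := hH.exists_vertical_estimate hγ₀ hγ₁ hR₀ hR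
  obtain ⟨K, hK, hhorizontal⟩ := hH.exists_horizontal_expansion hI hγ₀ hγ₁ hR
  refine ⟨K + 1 + γ * L, by positivity, fun α hα => ?_⟩
  obtain ⟨η, hη⟩ : ∃ η, η = (γ - α) / 2 := ⟨_, rfl⟩
  have hη₀ : 0 < η := by linarith [hα.2]
  obtain ⟨C, hC, hhorizontal⟩ := hhorizontal η hη₀ (by linarith [hα.1])
  obtain ⟨r, hr, hrR, hrγ, hrη⟩ := exists_scale (R := R / 8) (c := (4 * n + 12) * C) hγ₀ hη₀
    (by positivity) (by positivity)
  obtain ⟨δ₁, hδ₁, hvertical⟩ := hvertical r hr (by linarith)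
  obtain ⟨δ₂, hδ₂, hhorizontal⟩ := hhorizontal r hr hrR (by linarith)
  set B := C * r ^ (1 + γ - η) with hB
  set W := 1 + (K + 1 + γ * L + 8 * B / r ^ 2)
  set δ₃ := B / r ^ γ / (2 * W) with hδ₃
  have hB₀ : 0 < B := by positivity
  have hW₀ : 0 < W := by positivity
  refine ⟨min δ₁ (min δ₂ δ₃), by positivity, r, ⟨hr, by linarith⟩, fun u hu => ?_⟩
  obtain ⟨A, hA, hhorizontal⟩ := hhorizontal u (hu.mono (by simp))
  have hδW : min δ₁ (min δ₂ δ₃) * W < B / r ^ γ :=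
    calc min δ₁ (min δ₂ δ₃) * W ≤ δ₃ * W :=
        mul_le_mul_of_nonneg_right ((min_le_right _ _).trans (min_le_right _ _)) hW₀.le
      _ = B / r ^ γ / 2 := by rw [hδ₃]; field_simp
      _ < B / r ^ γ := half_lt_self (by positivity)
  obtain ⟨A, D, hAK, hD, happrox⟩ := hu.hasBoundaryExpansion hγ₀ hγ₁.le (by positivity) hr
    (by linarith) hB₀ (show ‖A‖ ≤ K + 1 + γ * L by nlinarith) (by linarith)
    (fun t ht => hvertical u (hu.mono (by simp)) t ⟨by linarith [ht.1], ht.2⟩) hhorizontal hδW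
  refine ⟨A, D, hAK, hD, fun t ht y hy x hx => (happrox t ht y hy x hx).trans ?_⟩
  calc (4 * n + 12) * B = r ^ (1 + α) * ((4 * n + 12) * C * r ^ η) := by
        rw [hB, show 1 + γ - η = (1 + α) + η by linarith, Real.rpow_add hr]
        ring
    _ ≤ r ^ (1 + α) := mul_le_of_le_one_right (by positivity) hrη

theorem improvement_of_flatness_general (n : ℕ) (s : ℝ) (hs : s ∈ Ioo (0 : ℝ) (1 / 2)) :
    ∃ K > 0, ∀ α ∈ Ioo (0 : ℝ) (2 * s), ∃ δ > 0, ∃ r ∈ Ioo (0 : ℝ) 1,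
      ∀ (b : ℝ → En n → En n) (f : ℝ → En n → ℝ) (u : ℝ → En n × ℝ → ℝ),
      (∀ t ∈ Icc (-1 : ℝ) 0, ∀ x ∈ flatBall n 1, ‖b t x‖ ≤ δ) →
      (∀ t ∈ Icc (-1 : ℝ) 0, ∀ x ∈ flatBall n 1, |f t x| ≤ δ) →
      IsExtDDSolution (1 - 2 * s) b f u →
      (∀ t ∈ Icc (-1 : ℝ) 0, ∀ p ∈ halfBall n 1, |u t p| ≤ 1) →
      ∃ (A : En n) (D : ℝ → ℝ),
        ‖A‖ ≤ K ∧
        (∀ t ∈ Icc (-(r ^ (2 * s))) 0,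
          DifferentiableWithinAt ℝ D (Icc (-(r ^ (2 * s))) 0) t ∧
          |D t| ≤ K ∧ |derivWithin D (Icc (-(r ^ (2 * s))) 0) t| ≤ K) ∧
        ∀ t ∈ Icc (-(r ^ (2 * s))) 0, ∀ p ∈ halfBallWithBase n r,
          |u t p - ⟪A, p.1⟫ - D t -
            (derivWithin D (Icc (-(r ^ (2 * s))) 0) t / (2 * s)) * p.2 ^ (2 * s)| ≤
            r ^ (1 + α) := by
  obtain ⟨K, hK, hexp⟩ := exists_hasBoundaryExpansion n (γ := 2 * s) (by linarith [hs.1])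
    (by linarith [hs.2])
  refine ⟨K, hK, fun α hα => ?_⟩
  obtain ⟨δ, hδ, r, hr, hexp⟩ := hexp α hα
  refine ⟨δ, hδ, r, hr, fun b f u hb hf hsol hu => ?_⟩
  obtain ⟨A, D, hA, hD, happrox⟩ := hexp u ⟨b, f, hb, hf, hsol, hu⟩
  refine ⟨A, D, hA, hD, fun t ht ⟨x, y⟩ ⟨hxy, hy⟩ => ?_⟩
  have hx : ‖x‖ ≤ r := le_of_sq_le_sq (by nlinarith [sq_nonneg y]) hr.1.le
  have hyr : y ≤ r := le_of_sq_le_sq (by nlinarith [sq_nonneg ‖x‖]) hr.1.le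
  simpa only [boundaryExpansion, sub_sub, add_assoc] using happrox t ht y ⟨hy, hyr⟩ x hx

/-- **The improvement of flatness lemma** (Lemma 8.1): if `b` and `f` are small in `L^∞`
and `‖u‖_∞ ≤ 1`, then on a smaller parabolic cylinder `u` is `r^{1+α}`-close to a function
of the form `A·x + D(t) + (D'(t)/(1-a)) y^{1-a}` (here `1 - a = 2s`). -/
theorem improvement_of_flatness (n : ℕ) (hn : 1 ≤ n) (s : ℝ) (hs : s ∈ Ioo (0 : ℝ) (1/2))
    (M : ℝ) (hM : 0 ≤ M) :
    ∃ K > 0, ∀ (α : ℝ), α ∈ Ioo (0 : ℝ) (2*s) →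
    ∃ δ > 0, ∃ r ∈ Ioo (0 : ℝ) 1,
      ∀ (b : ℝ → En n → En n) (f : ℝ → En n → ℝ) (u : ℝ → En n × ℝ → ℝ),
      (∀ t ∈ Icc (-1 : ℝ) 0, (∀ x ∈ flatBall n 1, ‖b t x‖ ≤ M) ∧
        ∀ x ∈ flatBall n 1, ∀ x' ∈ flatBall n 1,
          ‖b t x - b t x'‖ ≤ M * ‖x - x'‖ ^ (1 - 2*s)) →
      (∀ t ∈ Icc (-1 : ℝ) 0, ∀ x ∈ flatBall n 1, ‖b t x‖ ≤ δ) →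
      (∀ t ∈ Icc (-1 : ℝ) 0, ∀ x ∈ flatBall n 1, |f t x| ≤ δ) →
      IsExtDDSolution (1 - 2*s) b f u →
      (∀ t ∈ Icc (-1 : ℝ) 0, ∀ p ∈ halfBall n 1, |u t p| ≤ 1) →
      ∃ (A : En n) (D : ℝ → ℝ),
        ‖A‖ ≤ K ∧
        (∀ t ∈ Icc (-(r ^ (2*s))) 0,
          DifferentiableWithinAt ℝ D (Icc (-(r ^ (2*s))) 0) t ∧
          |D t| ≤ K ∧ |derivWithin D (Icc (-(r ^ (2*s))) 0) t| ≤ K) ∧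
        ∀ t ∈ Icc (-(r ^ (2*s))) 0, ∀ p ∈ halfBallWithBase n r,
          |u t p - ⟪A, p.1⟫ - D t -
            (derivWithin D (Icc (-(r ^ (2*s))) 0) t / (2*s)) * p.2 ^ (2*s)| ≤
            r ^ (1 + α) := by
  obtain ⟨K, hK, h⟩ := improvement_of_flatness_general n s hs
  refine ⟨K, hK, fun α hα => ?_⟩
  obtain ⟨δ, hδ, r, hr, h⟩ := h α hα
  exact ⟨δ, hδ, r, hr, fun b f u _ => h b f u⟩

end
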